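/- arXiv:1011.4725 — 2 statements merged into one kernel-verified Lean document; each statement's English description precedes it below -/
import Mathlib

section
/- Suppose X = (X',U) and Y = (Y',U) where the joint pmf of (X',U,Y') factors so that X'−U−Y' forms a Markov chain. Then for all distortion pairs (d1,d2) ∈ ℝ₊², R(d1,d2) = max{ R_{X|Y}(d1), R_{Y|X}(d2) } = max{ R^{WZ}_{X|Y}(d1), R^{WZ}_{Y|X}(d2) } = max{ R_{X|U}(d1), R_{Y|U}(d2) }. In particular, if X and Y are independent then R(d1,d2) = max{ R_X(d1), R_Y(d2) }. -/
open scoped BigOperators Classical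

noncomputable section

namespace TWR

/-- Base-2 Shannon entropy of a finitely supported distribution (with the
convention `0 * log 0 = 0`, automatic since `Real.logb 2 0 = 0`). -/
def H2 {α : Type} [Fintype α] (p : α → ℝ) : ℝ :=
  -∑ a, p a * Real.logb 2 (p a)

/-- `p` is a probability mass function. -/
def IsPmf {α : Type} [Fintype α] (p : α → ℝ) : Prop :=
  (∀ a, 0 ≤ p a) ∧ ∑ a, p a = 1

/-- `W` is a conditional pmf. -/
def IsCondPmf {α β : Type} [Fintype β] (W : α → β → ℝ) : Prop :=
  ∀ a, IsPmf (W a)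

/-- Mutual information `I(A;B)` (base 2) of a joint pmf on `α × β`. -/
def MI {α β : Type} [Fintype α] [Fintype β] (p : α × β → ℝ) : ℝ :=
  H2 (fun a => ∑ b, p (a, b)) + H2 (fun b => ∑ a, p (a, b)) - H2 p

/-- Conditional entropy `H(A|B)` of a joint pmf on `α × β`. -/
def condH {α β : Type} [Fintype α] [Fintype β] (p : α × β → ℝ) : ℝ :=
  H2 p - H2 (fun b => ∑ a, p (a, b))

/-- Conditional mutual information `I(A;C|B)` of a joint pmf on `α × β × γ`,
conditioning on the middle coordinate (`I(A;C|B) = H(A,B)+H(B,C)-H(A,B,C)-H(B)`). -/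
def condMI {α β γ : Type} [Fintype α] [Fintype β] [Fintype γ] (p : α × β × γ → ℝ) : ℝ :=
  H2 (fun ab : α × β => ∑ c, p (ab.1, ab.2, c)) +
    H2 (fun bc : β × γ => ∑ a, p (a, bc.1, bc.2)) -
    H2 p - H2 (fun b : β => ∑ a, ∑ c, p (a, b, c))

/-- Markov chain `A − B − C` for a joint pmf on `α × β × γ`. -/
def Markov {α β γ : Type} [Fintype α] [Fintype β] [Fintype γ] (p : α × β × γ → ℝ) : Prop :=
  ∀ a b c, p (a, b, c) * (∑ a', ∑ c', p (a', b, c')) =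
    (∑ c', p (a, b, c')) * (∑ a', p (a', b, c))

variable {𝒳 𝒴 Xh Yh 𝒲 𝒰 𝒱 : Type}
variable [Fintype 𝒳] [Fintype 𝒴] [Fintype Xh] [Fintype Yh]
variable [Fintype 𝒲] [Fintype 𝒰] [Fintype 𝒱]

/-- The i.i.d. block source. -/
def iid (q : 𝒳 × 𝒴 → ℝ) (n : ℕ) : (Fin n → 𝒳) × (Fin n → 𝒴) → ℝ :=
  fun xy => ∏ i, q (xy.1 i, xy.2 i)

/-- Average distortion at receiver 1 of the RD code `(f, g1, ·)`. -/
def Delta1 (q : 𝒳 × 𝒴 → ℝ) (δ1 : 𝒳 → Xh → ℝ) {n m : ℕ}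
    (f : (Fin n → 𝒳) × (Fin n → 𝒴) → Fin m)
    (g1 : Fin m × (Fin n → 𝒴) → Fin n → Xh) : ℝ :=
  ∑ xy : (Fin n → 𝒳) × (Fin n → 𝒴),
    iid q n xy * ((n : ℝ)⁻¹ * ∑ i, δ1 (xy.1 i) (g1 (f xy, xy.2) i))

/-- Average distortion at receiver 2 of the RD code `(f, ·, g2)`. -/
def Delta2 (q : 𝒳 × 𝒴 → ℝ) (δ2 : 𝒴 → Yh → ℝ) {n m : ℕ}
    (f : (Fin n → 𝒳) × (Fin n → 𝒴) → Fin m)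
    (g2 : Fin m × (Fin n → 𝒳) → Fin n → Yh) : ℝ :=
  ∑ xy : (Fin n → 𝒳) × (Fin n → 𝒴),
    iid q n xy * ((n : ℝ)⁻¹ * ∑ i, δ2 (xy.2 i) (g2 (f xy, xy.1) i))

/-- `r` is a `(d1,d2)`-achievable rate (source coding). -/
def RDAchievable (q : 𝒳 × 𝒴 → ℝ) (δ1 : 𝒳 → Xh → ℝ) (δ2 : 𝒴 → Yh → ℝ)
    (d1 d2 r : ℝ) : Prop :=
  ∀ ε > (0 : ℝ), ∃ (n m : ℕ) (f : (Fin n → 𝒳) × (Fin n → 𝒴) → Fin m)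
    (g1 : Fin m × (Fin n → 𝒴) → Fin n → Xh)
    (g2 : Fin m × (Fin n → 𝒳) → Fin n → Yh),
    0 < n ∧ Real.logb 2 m / n ≤ r + ε ∧
    Delta1 q δ1 f g1 ≤ d1 + ε ∧ Delta2 q δ2 f g2 ≤ d2 + ε

/-- The rate-distortion function `R(d1,d2)`. -/
def RD (q : 𝒳 × 𝒴 → ℝ) (δ1 : 𝒳 → Xh → ℝ) (δ2 : 𝒴 → Yh → ℝ) (d1 d2 : ℝ) : ℝ :=
  sInf {r : ℝ | 0 ≤ r ∧ RDAchievable q δ1 δ2 d1 d2 r}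

/-- `r` is `(d1,d2)`-achievable with common reconstructions. -/
def CRAchievable (q : 𝒳 × 𝒴 → ℝ) (δ1 : 𝒳 → Xh → ℝ) (δ2 : 𝒴 → Yh → ℝ)
    (d1 d2 r : ℝ) : Prop :=
  ∀ ε > (0 : ℝ), ∃ (n m : ℕ) (f : (Fin n → 𝒳) × (Fin n → 𝒴) → Fin m)
    (g1 : Fin m × (Fin n → 𝒴) → Fin n → Xh)
    (g2 : Fin m × (Fin n → 𝒳) → Fin n → Yh)
    (φ1 : Fin m × (Fin n → 𝒴) → Fin n → Yh)
    (φ2 : Fin m × (Fin n → 𝒳) → Fin n → Xh),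
    0 < n ∧ Real.logb 2 m / n ≤ r + ε ∧
    Delta1 q δ1 f g1 ≤ d1 + ε ∧ Delta2 q δ2 f g2 ≤ d2 + ε ∧
    (∑ xy : (Fin n → 𝒳) × (Fin n → 𝒴),
      if φ2 (f xy, xy.1) = g1 (f xy, xy.2) then 0 else iid q n xy) ≤ ε ∧
    (∑ xy : (Fin n → 𝒳) × (Fin n → 𝒴),
      if φ1 (f xy, xy.2) = g2 (f xy, xy.1) then 0 else iid q n xy) ≤ ε

/-- The common-reconstruction rate-distortion function `R_CR(d1,d2)`. -/
def CRRD (q : 𝒳 × 𝒴 → ℝ) (δ1 : 𝒳 → Xh → ℝ) (δ2 : 𝒴 → Yh → ℝ) (d1 d2 : ℝ) : ℝ :=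
  sInf {r : ℝ | 0 ≤ r ∧ CRAchievable q δ1 δ2 d1 d2 r}

/-- The conditional rate-distortion function `R_{X|Y}(d1)`. -/
def condRD (q : 𝒳 × 𝒴 → ℝ) (δ1 : 𝒳 → Xh → ℝ) (d1 : ℝ) : ℝ :=
  sInf {r : ℝ | ∃ W : 𝒳 × 𝒴 → Xh → ℝ, IsCondPmf W ∧
    (∑ x, ∑ y, ∑ xh, q (x, y) * W (x, y) xh * δ1 x xh) ≤ d1 ∧
    r = condMI (fun t : 𝒳 × 𝒴 × Xh => q (t.1, t.2.1) * W (t.1, t.2.1) t.2.2)}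

/-- Swap the two components of a joint source. -/
def swap (q : 𝒳 × 𝒴 → ℝ) : 𝒴 × 𝒳 → ℝ := fun t => q (t.2, t.1)

/-- The marginal rate-distortion function `R_X(d)`. -/
def margRD (qX : 𝒳 → ℝ) (δ1 : 𝒳 → Xh → ℝ) (d1 : ℝ) : ℝ :=
  sInf {r : ℝ | ∃ W : 𝒳 → Xh → ℝ, IsCondPmf W ∧
    (∑ x, ∑ xh, qX x * W x xh * δ1 x xh) ≤ d1 ∧
    r = MI (fun t : 𝒳 × Xh => qX t.1 * W t.1 t.2)}

def margX (q : 𝒳 × 𝒴 → ℝ) : 𝒳 → ℝ := fun x => ∑ y, q (x, y)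
def margY (q : 𝒳 × 𝒴 → ℝ) : 𝒴 → ℝ := fun y => ∑ x, q (x, y)

/-- The joint rate-distortion function `R_{XY}(d1,d2)`. -/
def jointRD (q : 𝒳 × 𝒴 → ℝ) (δ1 : 𝒳 → Xh → ℝ) (δ2 : 𝒴 → Yh → ℝ) (d1 d2 : ℝ) : ℝ :=
  sInf {r : ℝ | ∃ W : 𝒳 × 𝒴 → Xh × Yh → ℝ, IsCondPmf W ∧
    (∑ xy : 𝒳 × 𝒴, ∑ z : Xh × Yh, q xy * W xy z * δ1 xy.1 z.1) ≤ d1 ∧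
    (∑ xy : 𝒳 × 𝒴, ∑ z : Xh × Yh, q xy * W xy z * δ2 xy.2 z.2) ≤ d2 ∧
    r = MI (fun t : (𝒳 × 𝒴) × (Xh × Yh) => q t.1 * W t.1 t.2)}

/-- The Wyner–Ziv rate-distortion function `R^{WZ}_{X|Y}(d1)`
(with auxiliary alphabet of cardinality `|𝒳| + 1`). -/
def wzRD (q : 𝒳 × 𝒴 → ℝ) (δ1 : 𝒳 → Xh → ℝ) (d1 : ℝ) : ℝ :=
  sInf {r : ℝ | ∃ p : Fin (Fintype.card 𝒳 + 1) × 𝒳 × 𝒴 → ℝ, IsPmf p ∧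
    (∀ x y, (∑ a, p (a, x, y)) = q (x, y)) ∧ Markov p ∧
    (∃ π1 : Fin (Fintype.card 𝒳 + 1) × 𝒴 → Xh,
      (∑ a, ∑ x, ∑ y, p (a, x, y) * δ1 x (π1 (a, y))) ≤ d1) ∧
    r = condMI (fun t : 𝒳 × 𝒴 × Fin (Fintype.card 𝒳 + 1) => p (t.2.2, t.1, t.2.1))}

/-- The set over which the single-letter CR formula
`max{I(X;X̂,Ŷ|Y), I(Y;X̂,Ŷ|X)}` is minimised. -/
def crFormulaSet (q : 𝒳 × 𝒴 → ℝ) (δ1 : 𝒳 → Xh → ℝ) (δ2 : 𝒴 → Yh → ℝ)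
    (d1 d2 : ℝ) : Set ℝ :=
  {r : ℝ | ∃ W : 𝒳 × 𝒴 → Xh × Yh → ℝ, IsCondPmf W ∧
    (∑ x, ∑ y, ∑ z : Xh × Yh, q (x, y) * W (x, y) z * δ1 x z.1) ≤ d1 ∧
    (∑ x, ∑ y, ∑ z : Xh × Yh, q (x, y) * W (x, y) z * δ2 y z.2) ≤ d2 ∧
    r = max
      (condMI (fun t : 𝒳 × 𝒴 × (Xh × Yh) => q (t.1, t.2.1) * W (t.1, t.2.1) t.2.2))
      (condMI (fun t : 𝒴 × 𝒳 × (Xh × Yh) => q (t.2.1, t.1) * W (t.2.1, t.1) t.2.2))}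

/-- Joint law of source blocks and channel outputs for a JSC encoder. -/
def jscP (q : 𝒳 × 𝒴 → ℝ) (qUV : 𝒲 → 𝒰 × 𝒱 → ℝ) {n m : ℕ}
    (f : (Fin n → 𝒳) × (Fin n → 𝒴) → Fin m → 𝒲)
    (x : Fin n → 𝒳) (y : Fin n → 𝒴) (u : Fin m → 𝒰) (v : Fin m → 𝒱) : ℝ :=
  (∏ i, q (x i, y i)) * ∏ j, qUV (f (x, y) j) (u j, v j)

/-- `(d1,d2)` is achievable by joint source-channel coding with source rate `κs`
and channel rate `κc` (bandwidth expansion `κc/κs`). -/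
def JSCAchievable (q : 𝒳 × 𝒴 → ℝ) (qUV : 𝒲 → 𝒰 × 𝒱 → ℝ)
    (δ1 : 𝒳 → Xh → ℝ) (δ2 : 𝒴 → Yh → ℝ) (κs κc d1 d2 : ℝ) : Prop :=
  ∀ ε > (0 : ℝ), ∃ (t n m : ℕ) (f : (Fin n → 𝒳) × (Fin n → 𝒴) → Fin m → 𝒲)
    (g1 : (Fin m → 𝒰) × (Fin n → 𝒴) → Fin n → Xh)
    (g2 : (Fin m → 𝒱) × (Fin n → 𝒳) → Fin n → Yh),
    0 < t ∧ (n : ℝ) = κs * t ∧ (m : ℝ) = κc * t ∧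
    (∑ x : Fin n → 𝒳, ∑ y : Fin n → 𝒴, ∑ u : Fin m → 𝒰, ∑ v : Fin m → 𝒱,
      jscP q qUV f x y u v * ((n : ℝ)⁻¹ * ∑ i, δ1 (x i) (g1 (u, y) i))) ≤ d1 + ε ∧
    (∑ x : Fin n → 𝒳, ∑ y : Fin n → 𝒴, ∑ u : Fin m → 𝒰, ∑ v : Fin m → 𝒱,
      jscP q qUV f x y u v * ((n : ℝ)⁻¹ * ∑ i, δ2 (y i) (g2 (v, x) i))) ≤ d2 + ε

/-- `(d1,d2)` is achievable by joint source-channel coding with common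
reconstructions, source rate `κs` and channel rate `κc`. -/
def CRJSCAchievable (q : 𝒳 × 𝒴 → ℝ) (qUV : 𝒲 → 𝒰 × 𝒱 → ℝ)
    (δ1 : 𝒳 → Xh → ℝ) (δ2 : 𝒴 → Yh → ℝ) (κs κc d1 d2 : ℝ) : Prop :=
  ∀ ε > (0 : ℝ), ∃ (t n m : ℕ) (f : (Fin n → 𝒳) × (Fin n → 𝒴) → Fin m → 𝒲)
    (g1 : (Fin m → 𝒰) × (Fin n → 𝒴) → Fin n → Xh)
    (g2 : (Fin m → 𝒱) × (Fin n → 𝒳) → Fin n → Yh)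
    (φ1 : (Fin m → 𝒰) × (Fin n → 𝒴) → Fin n → Yh)
    (φ2 : (Fin m → 𝒱) × (Fin n → 𝒳) → Fin n → Xh),
    0 < t ∧ (n : ℝ) = κs * t ∧ (m : ℝ) = κc * t ∧
    (∑ x : Fin n → 𝒳, ∑ y : Fin n → 𝒴, ∑ u : Fin m → 𝒰, ∑ v : Fin m → 𝒱,
      jscP q qUV f x y u v * ((n : ℝ)⁻¹ * ∑ i, δ1 (x i) (g1 (u, y) i))) ≤ d1 + ε ∧
    (∑ x : Fin n → 𝒳, ∑ y : Fin n → 𝒴, ∑ u : Fin m → 𝒰, ∑ v : Fin m → 𝒱,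
      jscP q qUV f x y u v * ((n : ℝ)⁻¹ * ∑ i, δ2 (y i) (g2 (v, x) i))) ≤ d2 + ε ∧
    (∑ x : Fin n → 𝒳, ∑ y : Fin n → 𝒴, ∑ u : Fin m → 𝒰, ∑ v : Fin m → 𝒱,
      if φ2 (v, x) = g1 (u, y) then 0 else jscP q qUV f x y u v) ≤ ε ∧
    (∑ x : Fin n → 𝒳, ∑ y : Fin n → 𝒴, ∑ u : Fin m → 𝒰, ∑ v : Fin m → 𝒱,
      if φ1 (u, y) = g2 (v, x) then 0 else jscP q qUV f x y u v) ≤ ε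

/-- `I(W;U)` under the joint law `pW · qUV` (U-marginal of the broadcast channel). -/
def chMIU (qUV : 𝒲 → 𝒰 × 𝒱 → ℝ) (pW : 𝒲 → ℝ) : ℝ :=
  MI (fun t : 𝒲 × 𝒰 => pW t.1 * ∑ v, qUV t.1 (t.2, v))

/-- `I(W;V)` under the joint law `pW · qUV` (V-marginal of the broadcast channel). -/
def chMIV (qUV : 𝒲 → 𝒰 × 𝒱 → ℝ) (pW : 𝒲 → ℝ) : ℝ :=
  MI (fun t : 𝒲 × 𝒱 => pW t.1 * ∑ u, qUV t.1 (u, t.2))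

/-- The doubly symmetric binary source with crossover probability `ρ`. -/
def dsbs (ρ : ℝ) : Bool × Bool → ℝ :=
  fun t => if t.1 = t.2 then (1 - ρ) / 2 else ρ / 2

/-- The Hamming distortion measure. -/
def dHam {α : Type} : α → α → ℝ := fun a b => if a = b then 0 else 1

/-- The binary entropy function (base 2). -/
def binEnt (x : ℝ) : ℝ := -(x * Real.logb 2 x) - (1 - x) * Real.logb 2 (1 - x)

/-- A difference distortion measure built from a per-letter function of the
(modular) difference. -/
def diffD {l : ℕ} (δ : Fin l → ℝ) : Fin l → Fin l → ℝ := fun a b => δ (a - b)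

/-- Capacity of the modulo-additive channel with noise `pN` and input
distortion constraint `d`. -/
def Cadd {l : ℕ} (δ : Fin l → ℝ) (d : ℝ) (pN : Fin l → ℝ) : ℝ :=
  sSup {r : ℝ | ∃ pW : Fin l → ℝ, IsPmf pW ∧ (∑ w, pW w * δ w) ≤ d ∧
    r = MI (fun t : Fin l × Fin l => pW t.1 * pN (t.2 - t.1))}

/-- The minimax (worst-noise) capacity under distortion constraint `d`. -/
def Cworst {l : ℕ} (δ : Fin l → ℝ) (d : ℝ) : ℝ :=
  sInf {r : ℝ | ∃ pN : Fin l → ℝ, IsPmf pN ∧ (∑ x, pN x * δ x) ≤ d ∧ r = Cadd δ d pN}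

/-- Wyner's common information `K(X;Y)` (auxiliary alphabet of size 4). -/
def wynerK (q : 𝒳 × 𝒴 → ℝ) : ℝ :=
  sInf {r : ℝ | ∃ W : 𝒳 × 𝒴 → Fin 4 → ℝ, IsCondPmf W ∧
    Markov (fun t : 𝒳 × Fin 4 × 𝒴 => q (t.1, t.2.2) * W (t.1, t.2.2) t.2.1) ∧
    r = MI (fun t : (𝒳 × 𝒴) × Fin 4 => q t.1 * W t.1 t.2)}

/-- The one-description (Kimura–Uyematsu) upper bound `R_U*(d1,d2)`. -/
def oneDescUB (q : 𝒳 × 𝒴 → ℝ) (δ1 : 𝒳 → Xh → ℝ) (δ2 : 𝒴 → Yh → ℝ) (d1 d2 : ℝ) : ℝ :=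
  sInf {r : ℝ | ∃ W : 𝒳 × 𝒴 → Fin (Fintype.card 𝒳 * Fintype.card 𝒴 + 2) → ℝ,
    IsCondPmf W ∧
    (∃ π1 : Fin (Fintype.card 𝒳 * Fintype.card 𝒴 + 2) × 𝒴 → Xh,
      (∑ x, ∑ y, ∑ c, q (x, y) * W (x, y) c * δ1 x (π1 (c, y))) ≤ d1) ∧
    (∃ π2 : Fin (Fintype.card 𝒳 * Fintype.card 𝒴 + 2) × 𝒳 → Yh,
      (∑ x, ∑ y, ∑ c, q (x, y) * W (x, y) c * δ2 y (π2 (c, x))) ≤ d2) ∧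
    r = max
      (condMI (fun t : 𝒳 × 𝒴 × Fin (Fintype.card 𝒳 * Fintype.card 𝒴 + 2) =>
        q (t.1, t.2.1) * W (t.1, t.2.1) t.2.2))
      (condMI (fun t : 𝒴 × 𝒳 × Fin (Fintype.card 𝒳 * Fintype.card 𝒴 + 2) =>
        q (t.2.1, t.1) * W (t.2.1, t.1) t.2.2))}

end TWR

namespace TWRP
section
open TWR
set_option linter.unusedSectionVars false
set_option linter.unusedVariables false


variable {α β γ κ : Type} [Fintype α] [Fintype β] [Fintype γ] [Fintype κ]

lemma condMI_eq (P : α × β × γ → ℝ) :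
    condMI P = ∑ a, ∑ b, ∑ c, P (a, b, c) * (Real.logb 2 (P (a, b, c))
      + Real.logb 2 (∑ a', ∑ c', P (a', b, c'))
      - Real.logb 2 (∑ c', P (a, b, c')) - Real.logb 2 (∑ a', P (a', b, c))) := by
  have h1 : ∑ a, ∑ b, ∑ c, P (a, b, c) * Real.logb 2 (∑ c', P (a, b, c'))
      = ∑ ab : α × β, (∑ c, P (ab.1, ab.2, c)) * Real.logb 2 (∑ c, P (ab.1, ab.2, c)) := by
    rw [Fintype.sum_prod_type]
    simp only [Finset.sum_mul]
  have h2 : ∑ a, ∑ b, ∑ c, P (a, b, c) * Real.logb 2 (∑ a', P (a', b, c))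
      = ∑ bc : β × γ, (∑ a, P (a, bc.1, bc.2)) * Real.logb 2 (∑ a, P (a, bc.1, bc.2)) := by
    rw [Fintype.sum_prod_type]
    simp only [Finset.sum_mul]
    rw [Finset.sum_comm]
    refine Finset.sum_congr rfl fun b _ => ?_
    rw [Finset.sum_comm]
  have h3 : ∑ a, ∑ b, ∑ c, P (a, b, c) * Real.logb 2 (∑ a', ∑ c', P (a', b, c'))
      = ∑ b : β, (∑ a, ∑ c, P (a, b, c)) * Real.logb 2 (∑ a, ∑ c, P (a, b, c)) := by
    simp only [Finset.sum_mul]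
    rw [Finset.sum_comm]
  have h4 : ∑ a, ∑ b, ∑ c, P (a, b, c) * Real.logb 2 (P (a, b, c))
      = ∑ t, P t * Real.logb 2 (P t) := by
    rw [Fintype.sum_prod_type]
    refine Finset.sum_congr rfl fun a _ => ?_
    rw [Fintype.sum_prod_type]
  simp only [mul_sub, mul_add, Finset.sum_sub_distrib, Finset.sum_add_distrib]
  rw [h1, h2, h3, h4]
  unfold condMI H2
  ring

lemma gibbs (P : α × β × γ → ℝ) (h0 : ∀ t, 0 ≤ P t) (V : α → β → γ → ℝ)
    (hV : ∀ a b c, 0 ≤ V a b c) (hs : ∀ b c, ∑ a, V a b c ≤ 1)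
    (hpos : ∀ a b c, 0 < P (a, b, c) → 0 < V a b c) :
    ∑ a, ∑ b, ∑ c, P (a, b, c) * (Real.logb 2 (V a b c)
      + Real.logb 2 (∑ a', ∑ c', P (a', b, c'))
      - Real.logb 2 (∑ c', P (a, b, c'))) ≤ condMI P := by
  rw [condMI_eq, ← sub_nonpos]
  simp only [← Finset.sum_sub_distrib, ← mul_sub]
  have hl : 0 < Real.log 2 := Real.log_pos (by norm_num)
  have key : ∀ a b c, P (a, b, c) * ((Real.logb 2 (V a b c)
      + Real.logb 2 (∑ a', ∑ c', P (a', b, c'))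
      - Real.logb 2 (∑ c', P (a, b, c'))) - (Real.logb 2 (P (a, b, c))
      + Real.logb 2 (∑ a', ∑ c', P (a', b, c'))
      - Real.logb 2 (∑ c', P (a, b, c')) - Real.logb 2 (∑ a', P (a', b, c))))
      ≤ (V a b c * (∑ a', P (a', b, c)) - P (a, b, c)) / Real.log 2 := by
    intro a b c
    have hS : P (a, b, c) ≤ ∑ a', P (a', b, c) :=
      Finset.single_le_sum (f := fun a' => P (a', b, c)) (fun i _ => h0 _) (Finset.mem_univ a)
    rcases (h0 (a, b, c)).eq_or_lt with h | h
    · rw [← h]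
      have : 0 ≤ V a b c * (∑ a', P (a', b, c)) :=
        mul_nonneg (hV _ _ _) (Finset.sum_nonneg fun i _ => h0 _)
      simp only [zero_mul, sub_zero]
      positivity
    · have hv := hpos a b c h
      have hS' := h.trans_le hS
      have : Real.log (V a b c * (∑ a', P (a', b, c)) / P (a, b, c)) ≤
          V a b c * (∑ a', P (a', b, c)) / P (a, b, c) - 1 :=
        Real.log_le_sub_one_of_pos (by positivity)
      rw [Real.log_div (by positivity) (by positivity), Real.log_mul (by positivity) (by positivity)]
        at this
      have h3 := mul_le_mul_of_nonneg_left this h.le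
      have h4 : P (a, b, c) * (V a b c * (∑ a', P (a', b, c)) / P (a, b, c) - 1) =
        V a b c * (∑ a', P (a', b, c)) - P (a, b, c) := by field_simp
      rw [h4] at h3
      rw [le_div_iff₀ hl]
      refine le_trans (le_of_eq ?_) h3
      simp only [Real.logb]
      field_simp
      ring
  refine (Finset.sum_le_sum fun a _ => Finset.sum_le_sum fun b _ => Finset.sum_le_sum
    fun c _ => key a b c).trans ?_
  simp only [← Finset.sum_div]
  refine div_nonpos_of_nonpos_of_nonneg ?_ hl.le
  simp only [Finset.sum_sub_distrib]
  rw [sub_nonpos]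
  rw [Finset.sum_comm, Finset.sum_comm (s := (Finset.univ : Finset α))]
  refine Finset.sum_le_sum fun b _ => ?_
  rw [Finset.sum_comm, Finset.sum_comm (s := (Finset.univ : Finset α))]
  refine Finset.sum_le_sum fun c _ => ?_
  rw [← Finset.sum_mul]
  exact mul_le_of_le_one_left (Finset.sum_nonneg fun i _ => h0 _) (hs b c)

lemma condMI_nonneg (P : α × β × γ → ℝ) (h0 : ∀ t, 0 ≤ P t) : 0 ≤ condMI P := by
  have hB : ∀ b, 0 ≤ ∑ a, ∑ c, P (a, b, c) := fun b =>
    Finset.sum_nonneg fun i _ => Finset.sum_nonneg fun j _ => h0 _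
  have hA : ∀ a b, 0 ≤ ∑ c, P (a, b, c) := fun a b =>
    Finset.sum_nonneg fun j _ => h0 _
  have hAB : ∀ a b, ∑ c, P (a, b, c) ≤ ∑ a, ∑ c, P (a, b, c) := fun a b =>
    Finset.single_le_sum (f := fun a => ∑ c, P (a, b, c)) (fun i _ => hA _ _) (Finset.mem_univ a)
  have hC : ∀ a b c, P (a, b, c) ≤ ∑ c, P (a, b, c) := fun a b c =>
    Finset.single_le_sum (f := fun c => P (a, b, c)) (fun i _ => h0 _) (Finset.mem_univ c)
  refine le_trans (le_of_eq ?_) (gibbs P h0 (fun a b _ => (∑ c, P (a, b, c)) / ∑ a, ∑ c, P (a, b, c))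
    (fun a b _ => div_nonneg (hA a b) (hB b)) (fun b _ => ?_) fun a b c h => ?_)
  · symm
    refine Finset.sum_eq_zero fun a _ => Finset.sum_eq_zero fun b _ => Finset.sum_eq_zero
      fun c _ => ?_
    rcases (h0 (a, b, c)).eq_or_lt with h | h
    · rw [← h, zero_mul]
    · have h1 := h.trans_le (hC a b c)
      have h2 := h1.trans_le (hAB a b)
      rw [Real.logb_div h1.ne' h2.ne']
      ring
  · rw [← Finset.sum_div]; exact div_self_le_one _
  · have h1 := h.trans_le (hC a b c)
    have h2 := h1.trans_le (hAB a b)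
    exact div_pos h1 h2

/-- structured source -/
structure Src (q : α × β → ℝ) (u : α → κ) (v : β → κ) : Prop where
  pmf : IsPmf q
  supp : ∀ x y, u x ≠ v y → q (x, y) = 0
  mkv : ∀ x y, u x = v y →
    q (x, y) * (∑ x', if u x' = v y then margX q x' else 0) = margX q x * margY q y

def JJ (qX : α → ℝ) (u : α → κ) (w : α → ℝ) : ℝ :=
  ∑ x, qX x * w x * (Real.logb 2 (w x) + Real.logb 2 (∑ x', if u x' = u x then qX x' else 0)
    - Real.logb 2 (∑ x', if u x' = u x then qX x' * w x' else 0))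

lemma margX_nonneg {q : α × β → ℝ} (h : ∀ t, 0 ≤ q t) (x : α) : 0 ≤ margX q x :=
  Finset.sum_nonneg fun _ _ => h _
lemma margY_nonneg {q : α × β → ℝ} (h : ∀ t, 0 ≤ q t) (y : β) : 0 ≤ margY q y :=
  Finset.sum_nonneg fun _ _ => h _
lemma le_margX {q : α × β → ℝ} (h : ∀ t, 0 ≤ q t) (x : α) (y : β) : q (x, y) ≤ margX q x :=
  Finset.single_le_sum (f := fun y => q (x, y)) (fun _ _ => h _) (Finset.mem_univ y)
lemma le_margY {q : α × β → ℝ} (h : ∀ t, 0 ≤ q t) (x : α) (y : β) : q (x, y) ≤ margY q y :=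
  Finset.single_le_sum (f := fun x => q (x, y)) (fun _ _ => h _) (Finset.mem_univ x)

lemma le_sumif {u : α → κ} {f : α → ℝ} (h : ∀ x, 0 ≤ f x) (x : α) (k : κ) (hk : u x = k) :
    f x ≤ ∑ x', if u x' = k then f x' else 0 := by
  have := Finset.single_le_sum (f := fun x' => if u x' = k then f x' else 0)
    (fun i _ => by split_ifs; exacts [h i, le_rfl]) (Finset.mem_univ x)
  simpa [hk] using this

lemma Src.sum_mul {q : α × β → ℝ} {u : α → κ} {v : β → κ} (h : Src q u v) (w : α → ℝ) (y : β) :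
    (∑ x, q (x, y) * w x) * (∑ x', if u x' = v y then margX q x' else 0)
      = margY q y * ∑ x', if u x' = v y then margX q x' * w x' else 0 := by
  rw [Finset.sum_mul, Finset.mul_sum]
  refine Finset.sum_congr rfl fun x _ => ?_
  split_ifs with hx
  · linear_combination w x * h.mkv x y hx
  · rw [h.supp x y hx]; ring

lemma condMI_JJ {q : α × β → ℝ} {u : α → κ} {v : β → κ} (h : Src q u v) (w : α → γ → ℝ)
    (hw : ∀ x, IsPmf (w x)) :
    condMI (fun t : α × β × γ => q (t.1, t.2.1) * w t.1 t.2.2)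
      = ∑ c, JJ (margX q) u (fun x => w x c) := by
  rw [condMI_eq]
  unfold JJ
  rw [Finset.sum_comm (s := (Finset.univ : Finset γ))]
  refine Finset.sum_congr rfl fun x _ => ?_
  rw [Finset.sum_comm]
  refine Finset.sum_congr rfl fun c _ => ?_
  have e : margX q x = ∑ y, q (x, y) := rfl
  rw [e, Finset.sum_mul, Finset.sum_mul]
  refine Finset.sum_congr rfl fun y _ => ?_
  dsimp only
  have hq := h.pmf.1
  rcases (hq (x, y)).eq_or_lt with h1 | h1
  · rw [← h1]; simp
  rcases ((hw x).1 c).eq_or_lt with h2 | h2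
  · rw [← h2]; simp
  have hxy : u x = v y := by by_contra hh; exact h1.ne' (h.supp x y hh)
  simp only [← Finset.mul_sum, (hw _).2, mul_one]
  have e2 : ∑ a', q (a', y) = margY q y := rfl
  rw [e2]
  have hX := h1.trans_le (le_margX hq x y)
  have hY := h1.trans_le (le_margY hq x y)
  have hU := hX.trans_le (le_sumif (u := u) (margX_nonneg hq) x (v y) hxy)
  have hS := (mul_pos hX h2).trans_le (le_sumif (u := u) (f := fun x => margX q x * w x c)
    (fun x => mul_nonneg (margX_nonneg hq x) ((hw x).1 c)) x (v y) hxy)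
  have hm := h.sum_mul (fun x => w x c) y
  have hT : 0 < ∑ x, q (x, y) * w x c :=
    (mul_pos h1 h2).trans_le (Finset.single_le_sum (f := fun x => q (x, y) * w x c)
      (fun i _ => mul_nonneg (hq _) ((hw i).1 c)) (Finset.mem_univ x))
  have hm' := congrArg (Real.logb 2) hm
  rw [Real.logb_mul hT.ne' hU.ne', Real.logb_mul hY.ne' hS.ne'] at hm'
  rw [Real.logb_mul h1.ne' h2.ne', hxy]
  linear_combination (-(q (x, y) * w x c)) * hm'


end
end TWRP

namespace TWRP
section
open TWR
set_option linter.unusedSectionVars false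
set_option linter.unusedVariables false


variable {α β γ κ : Type} [Fintype α] [Fintype β] [Fintype γ] [Fintype κ]

lemma lp_red (A : α → κ → ℝ) (hA : ∀ c k, 0 ≤ A c k) (obj : α → ℝ) :
    ∀ (N : ℕ) (l : α → ℝ), (∀ c, 0 ≤ l c) → (∀ c, l c ≠ 0 → ∃ k, 0 < A c k) →
      (Finset.univ.filter fun c => l c ≠ 0).card ≤ N →
      ∃ l' : α → ℝ, (∀ c, 0 ≤ l' c) ∧ (∀ k, ∑ c, l' c * A c k = ∑ c, l c * A c k) ∧
        (∑ c, l' c * obj c ≤ ∑ c, l c * obj c) ∧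
        (Finset.univ.filter fun c => l' c ≠ 0).card ≤ Fintype.card κ := by
  intro N
  induction N with
  | zero =>
    intro l h0 h1 h2
    exact ⟨l, h0, fun _ => rfl, le_rfl, h2.trans (Nat.zero_le _)⟩
  | succ N ih =>
    intro l h0 h1 h2
    by_cases hc : (Finset.univ.filter fun c => l c ≠ 0).card ≤ Fintype.card κ
    · exact ⟨l, h0, fun _ => rfl, le_rfl, hc⟩
    push Not at hc
    set S := Finset.univ.filter fun c => l c ≠ 0 with hS
    have hnl : ¬ LinearIndependent ℝ (fun c : S => A c.1) := by
      intro h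
      have := h.fintype_card_le_finrank
      simp at this
      omega
    rw [Fintype.not_linearIndependent_iff] at hnl
    obtain ⟨g, hg, i0, hi0⟩ := hnl
    have hex : ∃ v : α → ℝ, (∀ k, ∑ c, v c * A c k = 0) ∧ (∀ c, l c = 0 → v c = 0) ∧
        (∃ c, v c ≠ 0) := by
      refine ⟨fun c => if h : c ∈ S then g ⟨c, h⟩ else 0, fun k => ?_, fun c hc => ?_,
        i0.1, by simpa using hi0⟩
      · have := congrFun hg k
        simp only [Finset.sum_apply, Pi.smul_apply, smul_eq_mul, Pi.zero_apply] at this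
        refine Eq.trans ?_ this
        rw [← Finset.sum_subset (Finset.subset_univ S)]
        · rw [← Finset.sum_coe_sort S]
          refine Finset.sum_congr rfl fun c _ => ?_
          simp
        · intro c _ hc
          simp [hc]
      · have : c ∉ S := by simp [hS, hc]
        simp [this]
    obtain ⟨v0, hv0, hvs0, hvne0⟩ := hex
    have hex2 : ∃ v : α → ℝ, (∀ k, ∑ c, v c * A c k = 0) ∧ (∀ c, l c = 0 → v c = 0) ∧
        (∃ c, v c ≠ 0) ∧ ∑ c, v c * obj c ≤ 0 := by
      rcases le_total (∑ c, v0 c * obj c) 0 with h | h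
      · exact ⟨v0, hv0, hvs0, hvne0, h⟩
      · refine ⟨fun c => - v0 c, fun k => ?_, fun c hc => ?_, ?_, ?_⟩
        · simp [hv0]
        · simp [hvs0 c hc]
        · simpa using hvne0
        · simpa using h
    obtain ⟨v, hv, hvs, ⟨c1, hc1⟩, hvo⟩ := hex2
    have hneg : ∃ c, v c < 0 := by
      by_contra hcon
      push Not at hcon
      have hl1 : l c1 ≠ 0 := fun h => hc1 (hvs _ h)
      obtain ⟨k, hk⟩ := h1 c1 hl1
      have := (Finset.sum_eq_zero_iff_of_nonneg
        (fun c _ => mul_nonneg (hcon c) (hA c k))).1 (hv k) c1 (Finset.mem_univ _)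
      rcases mul_eq_zero.1 this with h | h
      · exact hc1 h
      · exact hk.ne' h
    have hne : (Finset.univ.filter fun c => v c < 0).Nonempty := by
      obtain ⟨c, hc⟩ := hneg
      exact ⟨c, by simp [hc]⟩
    obtain ⟨c2, hc2, hmin⟩ := Finset.exists_min_image _ (fun c => l c / (- v c)) hne
    have hc2' : v c2 < 0 := by simpa using hc2
    set t := l c2 / (- v c2) with ht
    have ht0 : 0 ≤ t := div_nonneg (h0 _) (by linarith)
    have hl'0 : ∀ c, 0 ≤ l c + t * v c := by
      intro c
      rcases le_or_gt 0 (v c) with h | h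
      · have := h0 c; positivity
      · have := hmin c (by simp [h])
        have h3 : t ≤ l c / (- v c) := this
        rw [le_div_iff₀ (by linarith)] at h3
        linarith
    have hz : l c2 + t * v c2 = 0 := by
      have := hc2'.ne
      rw [ht]; field_simp; ring
    obtain ⟨l', a1, a2, a3, a4⟩ := ih (fun c => l c + t * v c) hl'0 (fun c hc => by
        refine h1 c fun h => hc ?_
        simp [h, hvs c h]) (by
      have hss : (Finset.univ.filter fun c => l c + t * v c ≠ 0) ⊂ S := by
        refine (Finset.ssubset_iff_of_subset ?_).2 ⟨c2, ?_, ?_⟩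
        · intro c hc
          simp only [hS, Finset.mem_filter, Finset.mem_univ, true_and] at hc ⊢
          intro h
          exact hc (by simp [h, hvs c h])
        · simp only [hS, Finset.mem_filter, Finset.mem_univ, true_and]
          exact fun h => hc2'.ne (hvs _ h)
        · simp [hz]
      have := Finset.card_lt_card hss
      omega)
    refine ⟨l', a1, fun k => ?_, a3.trans ?_, a4⟩
    · rw [a2 k]
      simp only [add_mul, Finset.sum_add_distrib, mul_assoc, ← Finset.mul_sum, hv k]
      simp
    · simp only [add_mul, Finset.sum_add_distrib, mul_assoc, ← Finset.mul_sum]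
      nlinarith

def qXU (q : α × β → ℝ) (u : α → κ) : α × κ → ℝ := fun t => if u t.1 = t.2 then margX q t.1 else 0

lemma margX_qXU (q : α × β → ℝ) (u : α → κ) : margX (qXU q u) = margX q := by
  funext x
  unfold qXU
  simp [margX]

lemma qXU_pmf {q : α × β → ℝ} (h : IsPmf q) (u : α → κ) : IsPmf (qXU q u) := by
  refine ⟨fun t => ?_, ?_⟩
  · unfold qXU; split_ifs
    · exact margX_nonneg h.1 _
    · exact le_rfl
  · rw [← h.2, Fintype.sum_prod_type, Fintype.sum_prod_type]
    exact Finset.sum_congr rfl fun x _ => congrFun (margX_qXU q u) x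

lemma Src_qXU {q : α × β → ℝ} (h : IsPmf q) (u : α → κ) : Src (qXU q u) u id := by
  refine ⟨qXU_pmf h u, fun x y hxy => ?_, fun x y hxy => ?_⟩
  · simp only [id] at hxy
    simp [qXU, hxy]
  · rw [margX_qXU]
    have hxy' : u x = y := hxy
    have : margY (qXU q u) y = ∑ x', if u x' = y then margX q x' else 0 := rfl
    rw [this]
    simp [qXU, hxy']

lemma delta_pmf (c0 : γ) : IsPmf (fun c : γ => if c = c0 then (1 : ℝ) else 0) :=
  ⟨fun a => by dsimp only; split_ifs <;> norm_num, by simp⟩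

/-- distortion over qXU -/
lemma dist_qXU (q : α × β → ℝ) (u : α → κ) (F : α → κ → ℝ) :
    ∑ x, ∑ k, qXU q u (x, k) * F x k = ∑ x, margX q x * F x (u x) := by
  refine Finset.sum_congr rfl fun x _ => ?_
  simp [qXU]

lemma B1 {q : α × β → ℝ} {u : α → κ} {v : β → κ} (h : Src q u v) (c0 : γ) (δ : α → γ → ℝ)
    (W : α × β → γ → ℝ) (hW : IsCondPmf W) :
    ∃ W' : α × κ → γ → ℝ, IsCondPmf W' ∧
      (∑ x, ∑ y, ∑ c, qXU q u (x, y) * W' (x, y) c * δ x c)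
        = (∑ x, ∑ y, ∑ c, q (x, y) * W (x, y) c * δ x c) ∧
      condMI (fun t : α × κ × γ => qXU q u (t.1, t.2.1) * W' (t.1, t.2.1) t.2.2)
        ≤ condMI (fun t : α × β × γ => q (t.1, t.2.1) * W (t.1, t.2.1) t.2.2) := by
  have hq := h.pmf.1
  set w : α → γ → ℝ := fun x c => if margX q x = 0 then (if c = c0 then 1 else 0) else
    (∑ y, q (x, y) * W (x, y) c) / margX q x with hw
  have hmw : ∀ x c, margX q x * w x c = ∑ y, q (x, y) * W (x, y) c := by
    intro x c
    simp only [hw]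
    split_ifs with h1 h2
    · have : ∀ y, q (x, y) = 0 := fun y =>
        le_antisymm (h1 ▸ le_margX hq x y) (hq _)
      simp [this, h1]
    · have : ∀ y, q (x, y) = 0 := fun y =>
        le_antisymm (h1 ▸ le_margX hq x y) (hq _)
      simp [this, h1]
    · field_simp
  have hwp : ∀ x, IsPmf (w x) := by
    intro x
    by_cases h1 : margX q x = 0
    · have : w x = fun c => if c = c0 then (1 : ℝ) else 0 := by
        funext c; simp [hw, h1]
      rw [this]; exact delta_pmf c0
    · refine ⟨fun c => ?_, ?_⟩
      · simp only [hw, h1, if_false]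
        exact div_nonneg (Finset.sum_nonneg fun y _ => mul_nonneg (hq _) ((hW _).1 _))
          (margX_nonneg hq x)
      · have : margX q x * ∑ c, w x c = margX q x * 1 := by
          rw [Finset.mul_sum]
          simp only [hmw]
          rw [Finset.sum_comm]
          simp only [← Finset.mul_sum, (hW _).2, mul_one]
          rfl
        exact mul_left_cancel₀ h1 this
  refine ⟨fun t => w t.1, fun t => hwp t.1, ?_, ?_⟩
  · have := dist_qXU q u (fun x k => ∑ c, w x c * δ x c)
    simp only [Finset.mul_sum, ← mul_assoc] at this
    rw [this]
    refine Finset.sum_congr rfl fun x _ => ?_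
    rw [Finset.sum_comm]
    refine Finset.sum_congr rfl fun c _ => ?_
    rw [hmw, Finset.sum_mul]
  · rw [condMI_JJ (Src_qXU h.pmf u) w hwp, margX_qXU]
    set P := (fun t : α × β × γ => q (t.1, t.2.1) * W (t.1, t.2.1) t.2.2) with hP
    have hP0 : ∀ t, 0 ≤ P t := fun t => mul_nonneg (hq _) ((hW _).1 _)
    set S : κ → γ → ℝ := fun k c => ∑ x', if u x' = k then margX q x' * w x' c else 0 with hS
    have hmn : ∀ x c, 0 ≤ margX q x * w x c := fun x c =>
      mul_nonneg (margX_nonneg hq x) ((hwp x).1 c)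
    have hS0 : ∀ k c, 0 ≤ S k c := fun k c => Finset.sum_nonneg fun x _ => by
      split_ifs; exacts [hmn _ _, le_rfl]
    have hpos : ∀ x y c, 0 < P (x, y, c) → u x = v y ∧ 0 < q (x, y) ∧ 0 < W (x, y) c ∧
        0 < margX q x * w x c := by
      intro x y c hh
      have h1 : 0 < q (x, y) := lt_of_le_of_ne (hq _) fun h => by simp [hP, ← h] at hh
      have h2 : 0 < W (x, y) c := lt_of_le_of_ne ((hW _).1 _) fun h => by simp [hP, ← h] at hh
      refine ⟨by by_contra h3; exact h1.ne' (h.supp x y h3), h1, h2, ?_⟩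
      rw [hmw]
      exact (mul_pos h1 h2).trans_le (Finset.single_le_sum (f := fun y => q (x, y) * W (x, y) c)
        (fun y _ => mul_nonneg (hq _) ((hW _).1 _)) (Finset.mem_univ y))
    have hleS : ∀ x y c, u x = v y → margX q x * w x c ≤ S (v y) c := fun x y c hxy =>
      le_sumif (u := u) (f := fun x => margX q x * w x c) (fun x => hmn x c) x (v y) hxy
    refine le_trans (le_of_eq ?_) (gibbs P hP0
      (fun x y c => if u x = v y then margX q x * w x c / S (v y) c else 0) ?_ ?_ ?_)
    · unfold JJ
      rw [Finset.sum_comm]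
      refine Finset.sum_congr rfl fun x _ => ?_
      rw [Finset.sum_comm]
      refine Finset.sum_congr rfl fun c _ => ?_
      dsimp only
      rw [hmw, Finset.sum_mul]
      refine Finset.sum_congr rfl fun y _ => ?_
      rcases (hP0 (x, y, c)).eq_or_lt with h1 | h1
      · have h1' : q (x, y) * W (x, y) c = 0 := h1.symm
        rw [h1', ← h1]; simp
      · obtain ⟨hxy, hqp, hWp, hmp⟩ := hpos x y c h1
        have e1 : ∑ c', P (x, y, c') = q (x, y) := by
          simp only [hP, ← Finset.mul_sum, (hW _).2, mul_one]
        have e2 : ∑ a', ∑ c', P (a', y, c') = margY q y := by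
          simp only [hP, ← Finset.mul_sum, (hW _).2, mul_one]; rfl
        rw [e1, e2, if_pos hxy]
        have hX := hqp.trans_le (le_margX hq x y)
        have hY := hqp.trans_le (le_margY hq x y)
        have hwpos : 0 < w x c := pos_of_mul_pos_right hmp hX.le
        have hU := hX.trans_le (le_sumif (u := u) (margX_nonneg hq) x (v y) hxy)
        have hSS := hmp.trans_le (hleS x y c hxy)
        have hm' := congrArg (Real.logb 2) (h.mkv x y hxy)
        rw [Real.logb_mul hqp.ne' hU.ne', Real.logb_mul hX.ne' hY.ne'] at hm'
        rw [← hmw x c, Real.logb_div hmp.ne' hSS.ne', Real.logb_mul hX.ne' hwpos.ne', hxy]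
        have e3 : P (x, y, c) = q (x, y) * W (x, y) c := rfl
        have e4 : S (v y) c = ∑ x', if u x' = v y then margX q x' * w x' c else 0 := rfl
        rw [e3, ← e4]
        linear_combination (q (x, y) * W (x, y) c) * hm'
    · intro x y c
      split_ifs
      exacts [div_nonneg (hmn _ _) (hS0 _ _), le_rfl]
    · intro y c
      have : ∑ a, (if u a = v y then margX q a * w a c / S (v y) c else 0) =
          S (v y) c / S (v y) c := by
        conv_rhs => rw [hS]
        rw [Finset.sum_div]
        refine Finset.sum_congr rfl fun x _ => ?_
        split_ifs <;> simp [hS]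
      rw [this]
      exact div_self_le_one _
    · intro x y c hh
      obtain ⟨hxy, hqp, hWp, hmp⟩ := hpos x y c hh
      rw [if_pos hxy]
      exact div_pos hmp (hmp.trans_le (hleS x y c hxy))


end
end TWRP

namespace TWRP
section
open TWR
set_option linter.unusedSectionVars false
set_option linter.unusedVariables false


variable {α β γ κ : Type} [Fintype α] [Fintype β] [Fintype γ] [Fintype κ]

/-- Turn a joint law with prescribed marginal into a conditional pmf. -/
lemma exists_kernel (q : α × β → ℝ) (c0 : γ) (Q : α × β × γ → ℝ)
    (hQ : ∀ t, 0 ≤ Q t) (hm : ∀ x y, ∑ c, Q (x, y, c) = q (x, y)) :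
    ∃ W : α × β → γ → ℝ, IsCondPmf W ∧ ∀ x y c, q (x, y) * W (x, y) c = Q (x, y, c) := by
  refine ⟨fun t c => if q t = 0 then (if c = c0 then 1 else 0) else Q (t.1, t.2, c) / q t, ?_, ?_⟩
  · rintro ⟨x, y⟩
    by_cases h : q (x, y) = 0
    · simp only [h, if_true]; exact delta_pmf c0
    · simp only [h, if_false]
      have h0 : 0 ≤ q (x, y) := by rw [← hm]; exact Finset.sum_nonneg fun _ _ => hQ _
      refine ⟨fun c => div_nonneg (hQ _) h0, ?_⟩
      rw [← Finset.sum_div, hm, div_self h]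
  · intro x y c
    dsimp only
    by_cases h : q (x, y) = 0
    · rw [h, zero_mul]
      have := hm x y
      rw [h] at this
      exact ((Finset.sum_eq_zero_iff_of_nonneg (fun c _ => hQ (x, y, c))).1 this c
        (Finset.mem_univ _)).symm
    · rw [if_neg h]; field_simp

lemma B2 {q : α × β → ℝ} (c0 : γ) (δ : α → γ → ℝ)
    (p : κ × α × β → ℝ) (hp : ∀ t, 0 ≤ p t) (hm : ∀ x y, ∑ k, p (k, x, y) = q (x, y))
    (π : κ × β → γ) :
    ∃ W : α × β → γ → ℝ, IsCondPmf W ∧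
      (∑ x, ∑ y, ∑ c, q (x, y) * W (x, y) c * δ x c)
        = (∑ k, ∑ x, ∑ y, p (k, x, y) * δ x (π (k, y))) ∧
      condMI (fun t : α × β × γ => q (t.1, t.2.1) * W (t.1, t.2.1) t.2.2)
        ≤ condMI (fun t : α × β × κ => p (t.2.2, t.1, t.2.1)) := by
  set Q : α × β × γ → ℝ := fun t => ∑ k, if π (k, t.2.1) = t.2.2 then p (k, t.1, t.2.1) else 0
    with hQd
  have hQ : ∀ t, 0 ≤ Q t := fun t => Finset.sum_nonneg fun k _ => by
    split_ifs; exacts [hp _, le_rfl]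
  have hQF : ∀ x y (F : γ → ℝ), ∑ c, Q (x, y, c) * F c = ∑ k, p (k, x, y) * F (π (k, y)) := by
    intro x y F
    simp only [hQd, Finset.sum_mul]
    rw [Finset.sum_comm]
    refine Finset.sum_congr rfl fun k _ => ?_
    simp
  have hQm : ∀ x y, ∑ c, Q (x, y, c) = q (x, y) := by
    intro x y
    have := hQF x y (fun _ => 1)
    simp only [mul_one, hm] at this
    exact this
  obtain ⟨W, hW, hqW⟩ := exists_kernel q c0 Q hQ hQm
  refine ⟨W, hW, ?_, ?_⟩
  · simp only [hqW]
    rw [Finset.sum_comm (s := (Finset.univ : Finset κ))]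
    refine Finset.sum_congr rfl fun x _ => ?_
    rw [Finset.sum_comm (s := (Finset.univ : Finset κ))]
    refine Finset.sum_congr rfl fun y _ => ?_
    exact hQF x y (δ x)
  · have : (fun t : α × β × γ => q (t.1, t.2.1) * W (t.1, t.2.1) t.2.2) = Q := by
      funext ⟨x, y, c⟩; exact hqW x y c
    rw [this]
    have hleQ : ∀ x y k, p (k, x, y) ≤ Q (x, y, π (k, y)) := by
      intro x y k
      have := Finset.single_le_sum (f := fun k' => if π (k', y) = π (k, y) then p (k', x, y) else 0)
        (fun k' _ => by split_ifs; exacts [hp _, le_rfl]) (Finset.mem_univ k)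
      simpa using this
    have hleQ2 : ∀ x y c, Q (x, y, c) ≤ ∑ x', Q (x', y, c) := fun x y c =>
      Finset.single_le_sum (f := fun x' => Q (x', y, c)) (fun x' _ => hQ _) (Finset.mem_univ x)
    refine le_trans (le_of_eq ?_) (gibbs (fun t : α × β × κ => p (t.2.2, t.1, t.2.1))
      (fun t => hp _)
      (fun x y k => Q (x, y, π (k, y)) / ∑ x', Q (x', y, π (k, y))) ?_ ?_ ?_)
    · rw [condMI_eq]
      refine Finset.sum_congr rfl fun x _ => Finset.sum_congr rfl fun y _ => ?_
      simp only [hQm, hm]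
      rw [hQF x y (fun c => Real.logb 2 (Q (x, y, c)) + Real.logb 2 (∑ a', q (a', y)) -
        Real.logb 2 (q (x, y)) - Real.logb 2 (∑ a', Q (a', y, c)))]
      refine Finset.sum_congr rfl fun k _ => ?_
      rcases (hp (k, x, y)).eq_or_lt with h | h
      · rw [← h]; simp
      · have h1 := h.trans_le (hleQ x y k)
        have h2 := h1.trans_le (hleQ2 x y _)
        rw [Real.logb_div h1.ne' h2.ne']
        ring
    · exact fun x y k => div_nonneg (hQ _) (Finset.sum_nonneg fun _ _ => hQ _)
    · intro y k
      rw [← Finset.sum_div]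
      exact div_self_le_one _
    · intro x y k h
      have h1 := lt_of_lt_of_le h (hleQ x y k)
      exact div_pos h1 (h1.trans_le (hleQ2 x y _))

lemma JJ_smul (qX : α → ℝ) (hq : ∀ x, 0 ≤ qX x) (u : α → κ) (w : α → ℝ) (hw : ∀ x, 0 ≤ w x)
    (a : ℝ) (ha : 0 ≤ a) : JJ qX u (fun x => a * w x) = a * JJ qX u w := by
  rcases ha.eq_or_lt with h | h
  · simp [← h, JJ]
  unfold JJ
  rw [Finset.mul_sum]
  refine Finset.sum_congr rfl fun x _ => ?_
  rcases (hq x).eq_or_lt with h1 | h1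
  · simp [← h1]
  rcases (hw x).eq_or_lt with h2 | h2
  · simp [← h2]
  have hS := (mul_pos h1 h2).trans_le (le_sumif (u := u) (f := fun x => qX x * w x)
    (fun x => mul_nonneg (hq x) (hw x)) x (u x) rfl)
  have e : (∑ x', if u x' = u x then qX x' * (a * w x') else 0)
      = a * ∑ x', if u x' = u x then qX x' * w x' else 0 := by
    rw [Finset.mul_sum]
    refine Finset.sum_congr rfl fun x' _ => ?_
    split_ifs <;> ring
  rw [e, Real.logb_mul h.ne' h2.ne', Real.logb_mul h.ne' hS.ne']
  ring

lemma condMI_qXU {q : α × β → ℝ} (h : IsPmf q) (u : α → κ) (W : α × κ → γ → ℝ)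
    (hW : IsCondPmf W) :
    condMI (fun t : α × κ × γ => qXU q u (t.1, t.2.1) * W (t.1, t.2.1) t.2.2)
      = ∑ c, JJ (margX q) u (fun x => W (x, u x) c) := by
  rw [← margX_qXU q u, ← condMI_JJ (Src_qXU h u) (fun x c => W (x, u x) c) (fun x => hW _)]
  congr 1
  funext ⟨x, k, c⟩
  dsimp only [qXU]
  split_ifs with hk
  · rw [hk]
  · simp

lemma B3 {q : α × β → ℝ} {u : α → κ} {v : β → κ} (h : Src q u v) (c0 : γ) (δ : α → γ → ℝ)
    (hδ : ∀ x c, 0 ≤ δ x c) (W : α × κ → γ → ℝ) (hW : IsCondPmf W) :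
    ∃ p : Fin (Fintype.card α + 1) × α × β → ℝ, IsPmf p ∧
      (∀ x y, (∑ a, p (a, x, y)) = q (x, y)) ∧ Markov p ∧
      (∃ π : Fin (Fintype.card α + 1) × β → γ,
        (∑ a, ∑ x, ∑ y, p (a, x, y) * δ x (π (a, y))) =
          (∑ x, ∑ y, ∑ c, qXU q u (x, y) * W (x, y) c * δ x c)) ∧
      condMI (fun t : α × β × Fin (Fintype.card α + 1) => p (t.2.2, t.1, t.2.1)) ≤
        condMI (fun t : α × κ × γ => qXU q u (t.1, t.2.1) * W (t.1, t.2.1) t.2.2) := by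
  have hq := h.pmf.1
  rw [condMI_qXU h.pmf u W hW]
  set w : α → γ → ℝ := fun x c => W (x, u x) c with hw
  have hw0 : ∀ x c, 0 ≤ w x c := fun x c => (hW _).1 c
  have hw1 : ∀ x, ∑ c, w x c = 1 := fun x => (hW _).2
  set D : γ → ℝ := fun c => ∑ x, margX q x * w x c * δ x c with hD
  set A : γ → Option α → ℝ := fun c o => o.elim (D c) (fun x => w x c) with hA
  set l : γ → ℝ := fun c => if ∃ x, w x c ≠ 0 then 1 else 0 with hl
  have hlw : ∀ x c, l c * w x c = w x c := by
    intro x c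
    simp only [hl]
    split_ifs with hx
    · ring
    · push Not at hx; rw [hx x]; ring
  have hA0 : ∀ c k, 0 ≤ A c k := by
    intro c k
    cases k with
    | none => exact Finset.sum_nonneg fun x _ =>
        mul_nonneg (mul_nonneg (margX_nonneg hq x) (hw0 x c)) (hδ x c)
    | some x => exact hw0 x c
  obtain ⟨l', b0, b1, b2, b3⟩ := lp_red A hA0 (fun c => JJ (margX q) u (fun x => w x c)) _ l
    (fun c => by simp only [hl]; split_ifs <;> norm_num)
    (fun c hc => by
      have : ∃ x, w x c ≠ 0 := by
        by_contra hcon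
        exact hc (by simp only [hl]; rw [if_neg hcon])
      obtain ⟨x, hx⟩ := this
      exact ⟨some x, lt_of_le_of_ne (hw0 x c) hx.symm⟩) le_rfl
  set S := Finset.univ.filter fun c => l' c ≠ 0 with hS
  have hcard : Fintype.card S ≤ Fintype.card (Fin (Fintype.card α + 1)) := by
    simpa using b3
  obtain ⟨e0⟩ := Function.Embedding.nonempty_of_card_le hcard
  set e : γ → Fin (Fintype.card α + 1) := fun c => if hc : c ∈ S then e0 ⟨c, hc⟩ else 0 with he
  have einj : ∀ c ∈ S, ∀ c' ∈ S, e c = e c' → c = c' := by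
    intro c hc c' hc' hh
    simp only [he, hc, hc', dif_pos] at hh
    have := e0.injective hh
    simpa using this
  set dec : Fin (Fintype.card α + 1) → γ := fun k =>
    if hk : ∃ c ∈ S, e c = k then hk.choose else c0 with hdec
  have hde : ∀ c ∈ S, dec (e c) = c := by
    intro c hc
    have hk : ∃ c' ∈ S, e c' = e c := ⟨c, hc, rfl⟩
    simp only [hdec, hk, dif_pos]
    exact einj _ hk.choose_spec.1 _ hc hk.choose_spec.2
  have hsum : ∀ F : γ → ℝ, (∀ c, l' c = 0 → F c = 0) →
      ∑ k, (if k ∈ S.image e then F (dec k) else 0) = ∑ c, F c := by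
    intro F hF
    rw [← Finset.sum_filter, Finset.filter_mem_eq_inter, Finset.univ_inter,
      Finset.sum_image (fun c hc c' hc' hh => einj c hc c' hc' hh),
      ← Finset.sum_subset (Finset.subset_univ S)]
    · exact Finset.sum_congr rfl fun c hc => by rw [hde c hc]
    · intro c _ hc
      exact hF c (by simpa [hS] using hc)
  set w' : α → Fin (Fintype.card α + 1) → ℝ := fun x k =>
    if k ∈ S.image e then l' (dec k) * w x (dec k) else 0 with hw'
  have hw'0 : ∀ x k, 0 ≤ w' x k := by
    intro x k
    simp only [hw']
    split_ifs; exacts [mul_nonneg (b0 _) (hw0 _ _), le_rfl]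
  have hw'1 : ∀ x, ∑ k, w' x k = 1 := by
    intro x
    rw [hsum (fun c => l' c * w x c) (fun c hc => by simp [hc])]
    have := b1 (some x)
    simp only [hA, Option.elim_some, hlw, hw1] at this
    exact this
  refine ⟨fun t => q (t.2.1, t.2.2) * w' t.2.1 t.1, ⟨fun t => mul_nonneg (hq _) (hw'0 _ _), ?_⟩,
    ?_, ?_, ⟨fun t => dec t.1, ?_⟩, ?_⟩
  · rw [Fintype.sum_prod_type, Finset.sum_comm]
    simp only [← Finset.mul_sum, hw'1, mul_one]
    exact h.pmf.2
  · intro x y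
    simp only [← Finset.mul_sum, hw'1, mul_one]
  · intro k x y
    simp only [← Finset.mul_sum, ← Finset.sum_mul, hw'1, mul_one]
    ring
  · dsimp only
    have e1 := dist_qXU q u (fun x k => ∑ c, W (x, k) c * δ x c)
    simp only [Finset.mul_sum, ← mul_assoc] at e1
    rw [e1, Finset.sum_comm (s := (Finset.univ : Finset α))]
    have e2 : ∀ k, ∑ x, ∑ y, q (x, y) * w' x k * δ x (dec k) =
        if k ∈ S.image e then l' (dec k) * D (dec k) else 0 := by
      intro k
      have : ∀ x, ∑ y, q (x, y) * w' x k * δ x (dec k) = margX q x * w' x k * δ x (dec k) := by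
        intro x
        rw [← Finset.sum_mul, ← Finset.sum_mul]; rfl
      simp only [this]
      simp only [hw', hD]
      split_ifs
      · rw [Finset.mul_sum]
        exact Finset.sum_congr rfl fun x _ => by ring
      · simp
    simp only [e2]
    rw [hsum (fun c => l' c * D c) (fun c hc => by simp [hc])]
    have := b1 none
    simp only [hA, Option.elim_none] at this
    rw [this]
    refine Finset.sum_congr rfl fun c _ => ?_
    simp only [hD]
    rw [Finset.mul_sum]
    refine Finset.sum_congr rfl fun x _ => ?_
    linear_combination (margX q x * δ x c) * hlw x c
  · have e1 := condMI_JJ h w' (fun x => ⟨hw'0 x, hw'1 x⟩)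
    dsimp only
    rw [e1]
    have e2 : ∀ k, JJ (margX q) u (fun x => w' x k) =
        if k ∈ S.image e then l' (dec k) * JJ (margX q) u (fun x => w x (dec k)) else 0 := by
      intro k
      simp only [hw']
      split_ifs
      · exact JJ_smul _ (margX_nonneg hq) u (fun x => w x (dec k)) (fun x => hw0 x _) _ (b0 _)
      · simp [JJ]
    simp only [e2]
    rw [hsum (fun c => l' c * JJ (margX q) u (fun x => w x c)) (fun c hc => by simp [hc])]
    refine b2.trans (le_of_eq ?_)
    refine Finset.sum_congr rfl fun c _ => ?_
    simp only [hl]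
    split_ifs with hx
    · ring
    · push Not at hx
      have hx' : ∀ x, W (x, u x) c = 0 := hx
      simp [JJ, hx', hw]

/-! ### Consequences for the infima -/

lemma condRD_bdd (q : α × β → ℝ) (hq : ∀ t, 0 ≤ q t) (δ : α → γ → ℝ) (d : ℝ) :
    BddBelow {r : ℝ | ∃ W : α × β → γ → ℝ, IsCondPmf W ∧
    (∑ x, ∑ y, ∑ xh, q (x, y) * W (x, y) xh * δ x xh) ≤ d ∧
    r = condMI (fun t : α × β × γ => q (t.1, t.2.1) * W (t.1, t.2.1) t.2.2)} := by
  refine ⟨0, ?_⟩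
  rintro r ⟨W, hW, -, rfl⟩
  exact condMI_nonneg _ fun t => mul_nonneg (hq _) ((hW _).1 _)

lemma condRD_nonempty (q : α × β → ℝ) (δ : α → γ → ℝ) (hn : ∀ x, ∃ c, δ x c = 0)
    (d : ℝ) (hd : 0 ≤ d) :
    {r : ℝ | ∃ W : α × β → γ → ℝ, IsCondPmf W ∧
    (∑ x, ∑ y, ∑ xh, q (x, y) * W (x, y) xh * δ x xh) ≤ d ∧
    r = condMI (fun t : α × β × γ => q (t.1, t.2.1) * W (t.1, t.2.1) t.2.2)}.Nonempty := by
  choose g hg using hn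
  refine ⟨_, fun t c => if c = g t.1 then 1 else 0, fun t => delta_pmf _, ?_, rfl⟩
  simpa [hg] using hd

lemma condRD_le {q : α × β → ℝ} (hq : ∀ t, 0 ≤ q t) {δ : α → γ → ℝ} {d : ℝ}
    (W : α × β → γ → ℝ) (hW : IsCondPmf W)
    (hd : (∑ x, ∑ y, ∑ xh, q (x, y) * W (x, y) xh * δ x xh) ≤ d) :
    condRD q δ d ≤ condMI (fun t : α × β × γ => q (t.1, t.2.1) * W (t.1, t.2.1) t.2.2) :=
  csInf_le (condRD_bdd q hq δ d) ⟨W, hW, hd, rfl⟩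

lemma condRD_nonneg {q : α × β → ℝ} (hq : ∀ t, 0 ≤ q t) (δ : α → γ → ℝ) (d : ℝ) :
    0 ≤ condRD q δ d := by
  refine Real.sInf_nonneg ?_
  rintro r ⟨W, hW, -, rfl⟩
  exact condMI_nonneg _ fun t => mul_nonneg (hq _) ((hW _).1 _)

lemma condRD_exists_lt (q : α × β → ℝ) (δ : α → γ → ℝ) (hn : ∀ x, ∃ c, δ x c = 0)
    (d : ℝ) (hd : 0 ≤ d) (r : ℝ) (hr : condRD q δ d < r) :
    ∃ W : α × β → γ → ℝ, IsCondPmf W ∧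
    (∑ x, ∑ y, ∑ xh, q (x, y) * W (x, y) xh * δ x xh) ≤ d ∧
    condMI (fun t : α × β × γ => q (t.1, t.2.1) * W (t.1, t.2.1) t.2.2) < r := by
  obtain ⟨_, ⟨W, hW, h1, rfl⟩, h2⟩ := exists_lt_of_csInf_lt (condRD_nonempty q δ hn d hd) hr
  exact ⟨W, hW, h1, h2⟩

lemma condRD_qXU_le {q : α × β → ℝ} {u : α → κ} {v : β → κ} (h : Src q u v) (δ : α → γ → ℝ)
    (hn : ∀ x, ∃ c, δ x c = 0) (d : ℝ) (hd : 0 ≤ d) :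
    condRD (qXU q u) δ d ≤ condRD q δ d := by
  refine le_csInf (condRD_nonempty q δ hn d hd) ?_
  rintro r ⟨W, hW, h1, rfl⟩
  have : Nonempty α := by
    by_contra hne
    rw [not_nonempty_iff] at hne
    have := h.pmf.2
    simp at this
  obtain ⟨c0, -⟩ := hn (Classical.arbitrary α)
  obtain ⟨W', a, b, c⟩ := B1 h c0 δ W hW
  exact (condRD_le (qXU_pmf h.pmf u).1 W' a (b ▸ h1)).trans c

lemma wz_eq {q : α × β → ℝ} {u : α → κ} {v : β → κ} (h : Src q u v) (δ : α → γ → ℝ)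
    (hδ : ∀ x c, 0 ≤ δ x c) (hn : ∀ x, ∃ c, δ x c = 0) (d : ℝ) (hd : 0 ≤ d) :
    condRD q δ d = condRD (qXU q u) δ d ∧ wzRD q δ d = condRD (qXU q u) δ d := by
  have : Nonempty α := by
    by_contra hne
    rw [not_nonempty_iff] at hne
    have := h.pmf.2
    simp at this
  obtain ⟨c0, -⟩ := hn (Classical.arbitrary α)
  have h1 := condRD_qXU_le h δ hn d hd
  have hex : ∀ W : α × κ → γ → ℝ, IsCondPmf W →
    (∑ x, ∑ y, ∑ xh, qXU q u (x, y) * W (x, y) xh * δ x xh) ≤ d →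
    ∃ r ∈ {r : ℝ | ∃ p : Fin (Fintype.card α + 1) × α × β → ℝ, IsPmf p ∧
      (∀ x y, (∑ a, p (a, x, y)) = q (x, y)) ∧ Markov p ∧
      (∃ π1 : Fin (Fintype.card α + 1) × β → γ,
        (∑ a, ∑ x, ∑ y, p (a, x, y) * δ x (π1 (a, y))) ≤ d) ∧
      r = condMI (fun t : α × β × Fin (Fintype.card α + 1) => p (t.2.2, t.1, t.2.1))},
      r ≤ condMI (fun t : α × κ × γ => qXU q u (t.1, t.2.1) * W (t.1, t.2.1) t.2.2) := by
    intro W hW hWd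
    obtain ⟨p, a1, a2, a3, ⟨π, a4⟩, a5⟩ := B3 h c0 δ hδ W hW
    exact ⟨_, ⟨p, a1, a2, a3, ⟨π, a4 ▸ hWd⟩, rfl⟩, a5⟩
  have h2 : condRD q δ d ≤ wzRD q δ d := by
    obtain ⟨_, W, hW, hWd, rfl⟩ := condRD_nonempty (qXU q u) δ hn d hd
    obtain ⟨r, hr, -⟩ := hex W hW hWd
    refine le_csInf ⟨r, hr⟩ ?_
    rintro r ⟨p, a1, a2, a3, ⟨π, a4⟩, rfl⟩
    obtain ⟨W', b1, b2, b3⟩ := B2 c0 δ p a1.1 a2 π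
    exact (condRD_le h.pmf.1 W' b1 (b2 ▸ a4)).trans b3
  have h3 : wzRD q δ d ≤ condRD (qXU q u) δ d := by
    refine le_csInf (condRD_nonempty _ δ hn d hd) ?_
    rintro r ⟨W, hW, hWd, rfl⟩
    obtain ⟨r, hr, hle⟩ := hex W hW hWd
    refine le_trans (csInf_le ⟨0, ?_⟩ hr) hle
    rintro r ⟨p, a1, a2, a3, ⟨π, a4⟩, rfl⟩
    exact condMI_nonneg _ fun t => a1.1 _
  exact ⟨le_antisymm (h2.trans h3) h1, le_antisymm h3 (h1.trans h2)⟩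


end
end TWRP

namespace TWRP
section
open TWR
set_option linter.unusedSectionVars false
set_option linter.unusedVariables false


variable {α β γ κ τ : Type} [Fintype α] [Fintype β] [Fintype γ] [Fintype κ] [Fintype τ]

lemma sum_pi_prod {n : ℕ} (F : Fin n → τ → ℝ) :
    ∑ t : Fin n → τ, ∏ i, F i (t i) = ∏ i, ∑ a, F i a := by
  rw [Finset.prod_univ_sum, Fintype.piFinset_univ]

lemma sum_pi_pmf {n : ℕ} {p : τ → ℝ} (hp : IsPmf p) :
    ∑ t : Fin n → τ, ∏ i, p (t i) = 1 := by
  rw [sum_pi_prod (fun _ => p)]; simp [hp.2]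

lemma iid_marg {n : ℕ} {p : τ → ℝ} (hp : IsPmf p) (i : Fin n) (F : τ → ℝ) :
    ∑ t : Fin n → τ, (∏ j, p (t j)) * F (t i) = ∑ a, p a * F a := by
  have h1 : ∀ t : Fin n → τ, (∏ j, p (t j)) * F (t i) =
      ∏ j, (if j = i then p (t j) * F (t j) else p (t j)) := by
    intro t
    rw [← Finset.mul_prod_erase _ _ (Finset.mem_univ i),
      ← Finset.mul_prod_erase _ (fun j => if j = i then p (t j) * F (t j) else p (t j))
        (Finset.mem_univ i)]
    rw [if_pos rfl]
    have : ∏ x ∈ Finset.univ.erase i, (if x = i then p (t x) * F (t x) else p (t x)) =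
        ∏ x ∈ Finset.univ.erase i, p (t x) :=
      Finset.prod_congr rfl fun x hx => if_neg (Finset.ne_of_mem_erase hx)
    rw [this]; ring
  simp only [h1]
  rw [sum_pi_prod (fun j a => if j = i then p a * F a else p a)]
  rw [← Finset.mul_prod_erase _ _ (Finset.mem_univ i)]
  rw [Finset.prod_eq_one (s := Finset.univ.erase i)]
  · simp
  · intro j hj
    simp [Finset.ne_of_mem_erase hj, hp.2]

lemma sum_pair {n : ℕ} (G : (Fin n → α) × (Fin n → β) → ℝ) :
    ∑ xy, G xy = ∑ t : Fin n → α × β, G (fun i => (t i).1, fun i => (t i).2) := by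
  rw [← Equiv.sum_comp (Equiv.arrowProdEquivProdArrow (Fin n) (fun _ => α) (fun _ => β))]
  rfl

lemma iid_nonneg {q : α × β → ℝ} (hq : ∀ t, 0 ≤ q t) {n : ℕ} (xy) : 0 ≤ iid q n xy :=
  Finset.prod_nonneg fun _ _ => hq _

lemma iid_sum {q : α × β → ℝ} (hq : IsPmf q) (n : ℕ) : ∑ xy, iid q n xy = 1 := by
  rw [sum_pair]; exact sum_pi_pmf hq

lemma iid_marg' {q : α × β → ℝ} (hq : IsPmf q) {n : ℕ} (i : Fin n) (F : α → β → ℝ) :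
    ∑ xy, iid q n xy * F (xy.1 i) (xy.2 i) = ∑ x, ∑ y, q (x, y) * F x y := by
  rw [sum_pair]
  have := iid_marg hq i (fun t => F t.1 t.2)
  rw [Fintype.sum_prod_type] at this
  exact this

lemma converse {q : α × β → ℝ} (hq : IsPmf q) (c0 : γ) (δ : α → γ → ℝ) {n m : ℕ} (hn : 0 < n)
    (f : (Fin n → α) × (Fin n → β) → Fin m) (g : Fin m × (Fin n → β) → Fin n → γ) :
    ∃ W : α × β → γ → ℝ, IsCondPmf W ∧
      (∑ x, ∑ y, ∑ c, q (x, y) * W (x, y) c * δ x c) = Delta1 q δ f g ∧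
      condMI (fun t : α × β × γ => q (t.1, t.2.1) * W (t.1, t.2.1) t.2.2)
        ≤ Real.logb 2 m / n := by
  have hq0 := hq.1
  have hn' : (0 : ℝ) < n := by exact_mod_cast hn
  have hne : Nonempty (α × β) := by
    by_contra hne
    rw [not_nonempty_iff] at hne
    have := hq.2
    simp at this
  obtain ⟨⟨x0, y0⟩⟩ := hne
  have hm : 0 < m := Fin.pos (f (fun _ => x0, fun _ => y0))
  have hm' : (0 : ℝ) < m := by exact_mod_cast hm
  set rec : (Fin n → α) × (Fin n → β) → Fin n → γ := fun xy => g (f xy, xy.2) with hrec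
  set Q : α × β × γ → ℝ := fun t => ∑ xy, iid q n xy *
    ((n : ℝ)⁻¹ * ∑ i, if (xy.1 i, xy.2 i, rec xy i) = t then 1 else 0) with hQd
  have hQ : ∀ t, 0 ≤ Q t := fun t => Finset.sum_nonneg fun xy _ =>
    mul_nonneg (iid_nonneg hq0 _) (mul_nonneg (by positivity)
      (Finset.sum_nonneg fun i _ => by split_ifs <;> norm_num))
  have hQF : ∀ F : α × β × γ → ℝ, ∑ t, Q t * F t =
      ∑ xy, iid q n xy * ((n : ℝ)⁻¹ * ∑ i, F (xy.1 i, xy.2 i, rec xy i)) := by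
    intro F
    simp only [hQd, Finset.sum_mul]
    rw [Finset.sum_comm]
    refine Finset.sum_congr rfl fun xy _ => ?_
    simp only [mul_assoc, ← Finset.mul_sum, Finset.sum_mul]
    rw [Finset.sum_comm]
    simp
  have hQF3 : ∀ F : α × β × γ → ℝ, ∑ x, ∑ y, ∑ c, Q (x, y, c) * F (x, y, c) =
      ∑ xy, iid q n xy * ((n : ℝ)⁻¹ * ∑ i, F (xy.1 i, xy.2 i, rec xy i)) := by
    intro F
    rw [← hQF, Fintype.sum_prod_type]
    refine Finset.sum_congr rfl fun x _ => ?_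
    rw [Fintype.sum_prod_type]
  have hQm : ∀ x y, ∑ c, Q (x, y, c) = q (x, y) := by
    intro x y
    have h1 := hQF3 (fun t => if t.1 = x then (if t.2.1 = y then 1 else 0) else 0)
    have h2 : ∑ x', ∑ y', ∑ c, Q (x', y', c) *
        (if x' = x then (if y' = y then (1 : ℝ) else 0) else 0) = ∑ c, Q (x, y, c) := by
      rw [Finset.sum_eq_single x]
      · rw [Finset.sum_eq_single y]
        · simp
        · intro y' _ h; simp [h]
        · simp
      · intro x' _ h; simp [h]
      · simp
    rw [← h2, h1]
    simp only [Finset.mul_sum]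
    rw [Finset.sum_comm]
    have h3 : ∀ i : Fin n, ∑ xy, iid q n xy * ((n : ℝ)⁻¹ *
        (if xy.1 i = x then (if xy.2 i = y then (1 : ℝ) else 0) else 0)) = (n : ℝ)⁻¹ * q (x, y) := by
      intro i
      rw [iid_marg' hq i (fun a b => (n : ℝ)⁻¹ * (if a = x then (if b = y then (1 : ℝ) else 0) else 0))]
      rw [Finset.sum_eq_single x]
      · rw [Finset.sum_eq_single y]
        · simp [mul_comm]
        · intro y' _ h; simp [h]
        · simp
      · intro x' _ h; simp [h]
      · simp
    simp only [h3]
    simp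
    field_simp
  obtain ⟨W, hW, hqW⟩ := exists_kernel q c0 Q hQ hQm
  refine ⟨W, hW, ?_, ?_⟩
  · simp only [hqW]
    exact hQF3 (fun t => δ t.1 t.2.2)
  · have e0 : (fun t : α × β × γ => q (t.1, t.2.1) * W (t.1, t.2.1) t.2.2) = Q := by
      funext ⟨x, y, c⟩; exact hqW x y c
    rw [e0, condMI_eq]
    simp only [hQm]
    set R : β → γ → ℝ := fun y c => ∑ x', Q (x', y, c) with hR
    have hR0 : ∀ y c, 0 ≤ R y c := fun y c => Finset.sum_nonneg fun _ _ => hQ _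
    set V : α → β → γ → ℝ := fun x y c => Q (x, y, c) / R y c with hV
    have hV0 : ∀ x y c, 0 ≤ V x y c := fun x y c => div_nonneg (hQ _) (hR0 _ _)
    have hVs : ∀ y c, ∑ x, V x y c ≤ 1 := fun y c => by
      simp only [hV, ← Finset.sum_div]; exact div_self_le_one _
    set L : α × β × γ → ℝ := fun t => Real.logb 2 (Q t) + Real.logb 2 (∑ a', q (a', t.2.1))
      - Real.logb 2 (q (t.1, t.2.1)) - Real.logb 2 (R t.2.1 t.2.2) with hL
    have e1 := hQF3 L
    refine le_trans (le_of_eq e1) ?_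
    rw [le_div_iff₀ hn']
    have e2 : (∑ xy, iid q n xy * ((n : ℝ)⁻¹ * ∑ i, L (xy.1 i, xy.2 i, rec xy i))) * n =
        ∑ xy, iid q n xy * ∑ i, L (xy.1 i, xy.2 i, rec xy i) := by
      rw [Finset.sum_mul]
      refine Finset.sum_congr rfl fun xy _ => ?_
      field_simp
    rw [e2]
    have hl : 0 < Real.log 2 := Real.log_pos (by norm_num)
    set T : (Fin n → α) × (Fin n → β) → Fin m → ℝ := fun xy k =>
      ∏ i, (margY q (xy.2 i) * V (xy.1 i) (xy.2 i) (g (k, xy.2) i)) with hT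
    have hT0 : ∀ xy k, 0 ≤ T xy k := fun xy k => Finset.prod_nonneg fun i _ =>
      mul_nonneg (margY_nonneg hq0 _) (hV0 _ _ _)
    have key : ∀ xy, iid q n xy * ∑ i, L (xy.1 i, xy.2 i, rec xy i) ≤
        iid q n xy * Real.logb 2 m + (T xy (f xy) / m - iid q n xy) / Real.log 2 := by
      intro xy
      rcases (iid_nonneg hq0 xy).eq_or_lt with h | h
      · rw [← h]
        have := hT0 xy (f xy)
        simp only [zero_mul, zero_add, sub_zero]
        positivity
      have hqi : ∀ i, 0 < q (xy.1 i, xy.2 i) := by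
        intro i
        refine lt_of_le_of_ne (hq0 _) fun hh => h.ne' ?_
        exact Finset.prod_eq_zero (Finset.mem_univ i) hh.symm
      have hQi : ∀ i, 0 < Q (xy.1 i, xy.2 i, rec xy i) := by
        intro i
        have h1 : 0 < iid q n xy * ((n : ℝ)⁻¹ * ∑ i', if (xy.1 i', xy.2 i', rec xy i') =
            (xy.1 i, xy.2 i, rec xy i) then (1 : ℝ) else 0) := by
          refine mul_pos h (mul_pos (by positivity) ?_)
          refine lt_of_lt_of_le ?_ (Finset.single_le_sum (fun i' _ => ?_) (Finset.mem_univ i))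
          · simp
          · split_ifs <;> norm_num
        refine h1.trans_le (Finset.single_le_sum (f := fun xy' => iid q n xy' * ((n : ℝ)⁻¹ * ∑ i',
          if (xy'.1 i', xy'.2 i', rec xy' i') = (xy.1 i, xy.2 i, rec xy i) then (1 : ℝ) else 0))
          (fun xy' _ => ?_) (Finset.mem_univ xy))
        exact mul_nonneg (iid_nonneg hq0 _) (mul_nonneg (by positivity)
          (Finset.sum_nonneg fun i _ => by split_ifs <;> norm_num))
      have hRi : ∀ i, 0 < R (xy.2 i) (rec xy i) := fun i =>
        (hQi i).trans_le (Finset.single_le_sum (f := fun x' => Q (x', xy.2 i, rec xy i))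
          (fun _ _ => hQ _) (Finset.mem_univ (xy.1 i)))
      have hYi : ∀ i, 0 < margY q (xy.2 i) := fun i => (hqi i).trans_le (le_margY hq0 _ _)
      set z : Fin n → ℝ := fun i => margY q (xy.2 i) * V (xy.1 i) (xy.2 i) (rec xy i)
        / q (xy.1 i, xy.2 i) with hz
      have hzp : ∀ i, 0 < z i := fun i => div_pos (mul_pos (hYi i) (div_pos (hQi i) (hRi i))) (hqi i)
      have hLz : ∀ i, L (xy.1 i, xy.2 i, rec xy i) = Real.log (z i) / Real.log 2 := by
        intro i
        have e3 : ∑ a', q (a', xy.2 i) = margY q (xy.2 i) := rfl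
        simp only [hL, hz, hV, e3]
        rw [Real.log_div (mul_pos (hYi i) (div_pos (hQi i) (hRi i))).ne' (hqi i).ne',
          Real.log_mul (hYi i).ne' (div_pos (hQi i) (hRi i)).ne',
          Real.log_div (hQi i).ne' (hRi i).ne']
        simp only [Real.logb]
        ring
      have hprod : iid q n xy * ∏ i, z i = T xy (f xy) := by
        simp only [hz, Finset.prod_div_distrib, hT]
        have : iid q n xy = ∏ i, q (xy.1 i, xy.2 i) := rfl
        rw [← this]
        field_simp
        rfl
      have hlog : ∑ i, Real.log (z i) = Real.log (∏ i, z i) := by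
        rw [Real.log_prod (fun i _ => (hzp i).ne')]
      have hzz : 0 < ∏ i, z i := Finset.prod_pos fun i _ => hzp i
      have h5 : Real.log ((∏ i, z i) / m) ≤ (∏ i, z i) / m - 1 :=
        Real.log_le_sub_one_of_pos (by positivity)
      rw [Real.log_div hzz.ne' hm'.ne'] at h5
      have h6 := mul_le_mul_of_nonneg_left h5 h.le
      simp only [hLz, ← Finset.sum_div, hlog]
      rw [← hprod, Real.logb]
      have h7 : iid q n xy * (Real.log (∏ i, z i)) ≤ iid q n xy * Real.log m +
          (iid q n xy * (∏ i, z i) / m - iid q n xy) := by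
        have : iid q n xy * ((∏ i, z i) / m - 1) = iid q n xy * (∏ i, z i) / m - iid q n xy := by ring
        rw [this] at h6; linarith
      rw [← mul_div_assoc, ← mul_div_assoc, ← add_div]
      exact div_le_div_of_nonneg_right h7 hl.le
    refine (Finset.sum_le_sum fun xy _ => key xy).trans ?_
    rw [Finset.sum_add_distrib, ← Finset.sum_mul, iid_sum hq, one_mul, ← Finset.sum_div,
      Finset.sum_sub_distrib, iid_sum hq, ← Finset.sum_div]
    have hTs : ∑ xy, T xy (f xy) ≤ m := by
      have s1 : ∑ xy, T xy (f xy) ≤ ∑ xy, ∑ k, T xy k := Finset.sum_le_sum fun xy _ =>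
        Finset.single_le_sum (f := fun k => T xy k) (fun k _ => hT0 xy k) (Finset.mem_univ _)
      refine s1.trans ?_
      rw [Fintype.sum_prod_type, Finset.sum_comm]
      have s2 : ∀ y : Fin n → β, ∑ x : Fin n → α, ∑ k, T (x, y) k ≤ (∏ i, margY q (y i)) * m := by
        intro y
        rw [Finset.sum_comm]
        have s3 : ∀ k, ∑ x : Fin n → α, T (x, y) k ≤ ∏ i, margY q (y i) := by
          intro k
          simp only [hT]
          rw [sum_pi_prod (fun i a => margY q (y i) * V a (y i) (g (k, y) i))]
          refine Finset.prod_le_prod (fun i _ => Finset.sum_nonneg fun a _ =>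
            mul_nonneg (margY_nonneg hq0 _) (hV0 _ _ _)) fun i _ => ?_
          rw [← Finset.mul_sum]
          exact mul_le_of_le_one_right (margY_nonneg hq0 _) (hVs _ _)
        refine (Finset.sum_le_sum fun k _ => s3 k).trans (le_of_eq ?_)
        simp [mul_comm]
      refine (Finset.sum_le_sum fun y _ => s2 y).trans (le_of_eq ?_)
      rw [← Finset.sum_mul, sum_pi_prod (fun _ => margY q)]
      have : ∑ y, margY q y = 1 := by
        rw [← hq.2, Fintype.sum_prod_type, Finset.sum_comm]; rfl
      simp [this]
    have : (∑ xy, T xy (f xy)) / m ≤ 1 := by rw [div_le_one hm']; exact hTs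
    have h9 : ((∑ xy, T xy (f xy)) / m - 1) / Real.log 2 ≤ 0 :=
      div_nonpos_of_nonpos_of_nonneg (by linarith) hl.le
    linarith

lemma continuous_H2 : Continuous (H2 : (α → ℝ) → ℝ) := by
  unfold H2
  refine (continuous_finsetSum _ fun a _ => ?_).neg
  have : (fun p : α → ℝ => p a * Real.logb 2 (p a)) =
      fun p => (p a * Real.log (p a)) / Real.log 2 := by
    funext p; simp only [Real.logb]; ring
  rw [this]
  exact (Real.continuous_mul_log.comp (continuous_apply a)).div_const _

lemma continuous_condMI (q : α × β → ℝ) : Continuous (fun W : α × β → γ → ℝ =>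
    condMI (fun t : α × β × γ => q (t.1, t.2.1) * W (t.1, t.2.1) t.2.2)) := by
  unfold condMI
  refine ((Continuous.add ?_ ?_).sub ?_).sub ?_ <;>
  · refine continuous_H2.comp ?_
    fun_prop

lemma compact_pmf : IsCompact {W : α × β → γ → ℝ | IsCondPmf W} := by
  have : {W : α × β → γ → ℝ | IsCondPmf W} = Set.univ.pi (fun _ => stdSimplex ℝ γ) := by
    ext W
    simp [IsCondPmf, IsPmf, stdSimplex, Set.mem_pi]
  rw [this]
  exact isCompact_univ_pi fun _ => isCompact_stdSimplex ℝ γ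

lemma condRD_lsc {q : α × β → ℝ} (hq : ∀ t, 0 ≤ q t) (δ : α → γ → ℝ) (d r : ℝ)
    (H : ∀ ε > (0 : ℝ), ∃ W : α × β → γ → ℝ, IsCondPmf W ∧
      (∑ x, ∑ y, ∑ c, q (x, y) * W (x, y) c * δ x c) ≤ d + ε ∧
      condMI (fun t : α × β × γ => q (t.1, t.2.1) * W (t.1, t.2.1) t.2.2) ≤ r + ε) :
    condRD q δ d ≤ r := by
  have hpos : ∀ n : ℕ, (0 : ℝ) < 1 / ((n : ℝ) + 1) := fun n => by positivity
  choose W h1 h2 h3 using fun n : ℕ => H _ (hpos n)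
  obtain ⟨W0, hW0, φ, hφ, hlim⟩ := compact_pmf.tendsto_subseq h1
  have hz : Filter.Tendsto (fun n : ℕ => 1 / ((φ n : ℝ) + 1)) Filter.atTop (nhds 0) :=
    tendsto_one_div_add_atTop_nhds_zero_nat.comp hφ.tendsto_atTop
  have c1 : Continuous (fun W : α × β → γ → ℝ =>
      ∑ x, ∑ y, ∑ c, q (x, y) * W (x, y) c * δ x c) := by fun_prop
  have d1 : (∑ x, ∑ y, ∑ c, q (x, y) * W0 (x, y) c * δ x c) ≤ d := by
    have := le_of_tendsto_of_tendsto' ((c1.tendsto W0).comp hlim)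
      (hz.const_add d) (fun n => h2 (φ n))
    simpa using this
  have d2 : condMI (fun t : α × β × γ => q (t.1, t.2.1) * W0 (t.1, t.2.1) t.2.2) ≤ r := by
    have := le_of_tendsto_of_tendsto' (((continuous_condMI q).tendsto W0).comp hlim)
      (hz.const_add r) (fun n => h3 (φ n))
    simpa using this
  exact (condRD_le hq W0 hW0 d1).trans d2


end
end TWRP

namespace TWRP
section
open TWR
set_option linter.unusedSectionVars false
set_option linter.unusedVariables false


variable {α β γ κ τ : Type} [Fintype α] [Fintype β] [Fintype γ] [Fintype κ] [Fintype τ]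

lemma iid_cross {n : ℕ} {p : τ → ℝ} (k : τ → ℝ) (hk : ∑ a, p a * k a = 0)
    (i j : Fin n) (hij : i ≠ j) :
    ∑ t : Fin n → τ, (∏ l, p (t l)) * (k (t i) * k (t j)) = 0 := by
  have h1 : ∀ t : Fin n → τ, (∏ l, p (t l)) * (k (t i) * k (t j)) =
      ∏ l, (p (t l) * ((if l = i then k (t l) else 1) * (if l = j then k (t l) else 1))) := by
    intro t
    rw [Finset.prod_mul_distrib, Finset.prod_mul_distrib, Finset.prod_ite_eq', Finset.prod_ite_eq']
    simp
  simp only [h1]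
  rw [sum_pi_prod (fun l a => p a * ((if l = i then k a else 1) * (if l = j then k a else 1)))]
  refine Finset.prod_eq_zero (Finset.mem_univ i) ?_
  simp [hij, hk]

lemma cheby {p : τ → ℝ} (hp : IsPmf p) (h : τ → ℝ) (μ η : ℝ) (hμ : ∑ a, p a * h a ≤ μ)
    (hη : 0 < η) : ∃ K : ℝ, 0 ≤ K ∧ ∀ n : ℕ, 0 < n →
      ∑ t : Fin n → τ, (∏ i, p (t i)) * (if n * (μ + η) < ∑ i, h (t i) then 1 else 0) ≤ K / n := by
  set e := ∑ a, p a * h a with he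
  set k : τ → ℝ := fun a => h a - e with hk
  have hk0 : ∑ a, p a * k a = 0 := by
    simp only [hk, mul_sub, Finset.sum_sub_distrib, ← Finset.sum_mul, hp.2]
    rw [← he]; ring
  set C := ∑ a, p a * (k a * k a) with hC
  have hC0 : 0 ≤ C := Finset.sum_nonneg fun a _ => mul_nonneg (hp.1 a) (mul_self_nonneg _)
  refine ⟨C / η ^ 2, by positivity, fun n hn => ?_⟩
  have hn' : (0 : ℝ) < n := by exact_mod_cast hn
  have hvar : ∑ t : Fin n → τ, (∏ l, p (t l)) * (∑ i, k (t i)) ^ 2 = n * C := by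
    have : ∀ t : Fin n → τ, (∏ l, p (t l)) * (∑ i, k (t i)) ^ 2 =
        ∑ i, ∑ j, (∏ l, p (t l)) * (k (t i) * k (t j)) := by
      intro t
      rw [sq, Finset.sum_mul_sum]
      simp only [Finset.mul_sum]
    simp only [this]
    rw [Finset.sum_comm]
    have h2 : ∀ i : Fin n, ∑ t : Fin n → τ, ∑ j, (∏ l, p (t l)) * (k (t i) * k (t j)) = C := by
      intro i
      rw [Finset.sum_comm, Finset.sum_eq_single i]
      · exact iid_marg hp i (fun a => k a * k a)
      · intro j _ hj
        exact iid_cross k hk0 i j hj.symm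
      · simp
    simp only [h2]
    simp
  have hb : ∀ t : Fin n → τ, (∏ i, p (t i)) * (if n * (μ + η) < ∑ i, h (t i) then 1 else 0) ≤
      (∏ l, p (t l)) * (∑ i, k (t i)) ^ 2 / (n * η) ^ 2 := by
    intro t
    rw [mul_div_assoc]
    refine mul_le_mul_of_nonneg_left ?_ (Finset.prod_nonneg fun _ _ => hp.1 _)
    split_ifs with hh
    · rw [le_div_iff₀ (by positivity), one_mul]
      have hs : ∑ i, k (t i) = ∑ i, h (t i) - n * e := by
        simp [hk, Finset.sum_sub_distrib]
      have : n * η ≤ ∑ i, k (t i) := by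
        rw [hs]; nlinarith
      exact pow_le_pow_left₀ (by positivity) this 2
    · positivity
  refine (Finset.sum_le_sum fun t _ => hb t).trans (le_of_eq ?_)
  rw [← Finset.sum_div, hvar]
  field_simp

lemma exists_le_avg {p : τ → ℝ} (hp : IsPmf p) (F : τ → ℝ) : ∃ c, F c ≤ ∑ a, p a * F a := by
  have hne : Nonempty τ := by
    by_contra hne
    rw [not_nonempty_iff] at hne
    have := hp.2
    simp at this
  obtain ⟨c, -, hc⟩ := Finset.exists_min_image Finset.univ F Finset.univ_nonempty
  refine ⟨c, ?_⟩
  calc F c = ∑ a, p a * F c := by rw [← Finset.sum_mul, hp.2, one_mul]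
    _ ≤ _ := Finset.sum_le_sum fun a _ =>
      mul_le_mul_of_nonneg_left (hc a (Finset.mem_univ a)) (hp.1 a)

lemma pow_bound (a b B : ℝ) (m : ℕ) (hm : 0 < m) (hB : 0 < B) (ha0 : 0 ≤ a) (ha1 : a ≤ 1)
    (hb1 : b ≤ 1) (hab : a ≤ B * b) : (1 - b) ^ m ≤ 1 - a + B / m := by
  have hm' : (0 : ℝ) < m := by exact_mod_cast hm
  set s := m / B with hs
  have hs0 : 0 < s := by positivity
  have h1 : (1 - b) ^ m ≤ Real.exp (-b) ^ m :=
    pow_le_pow_left₀ (by linarith) (by linarith [Real.add_one_le_exp (-b)]) m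
  have h2 : Real.exp (-b) ^ m = Real.exp (-(m * b)) := by
    rw [← Real.exp_nat_mul]; ring_nf
  have h3 : a * s ≤ m * b := by
    rw [hs, ← mul_div_assoc, div_le_iff₀ hB]; nlinarith
  have h4 : Real.exp (-(m * b)) ≤ Real.exp (-(a * s)) := Real.exp_le_exp.2 (by linarith)
  have h5 : Real.exp (-(a * s)) ≤ 1 / (1 + a * s) := by
    rw [Real.exp_neg, ← one_div]
    exact one_div_le_one_div_of_le (by positivity) (by linarith [Real.add_one_le_exp (a * s)])
  have h6 : 1 / (1 + a * s) ≤ 1 - a + 1 / s := by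
    rw [div_le_iff₀ (by positivity)]
    have : (1 - a + 1 / s) * (1 + a * s) = 1 + 1 / s + a * s * (1 - a) := by
      field_simp; ring
    rw [this]
    have : 0 ≤ a * s * (1 - a) := mul_nonneg (by positivity) (by linarith)
    have : 0 < 1 / s := by positivity
    linarith
  have h7 : 1 / s = B / m := by rw [hs]; field_simp
  rw [← h7]
  linarith

lemma sum_triple {n : ℕ} (G : (Fin n → α) × (Fin n → β) → (Fin n → γ) → ℝ) :
    ∑ xy, ∑ c, G xy c = ∑ t : Fin n → α × β × γ,
      G (fun i => (t i).1, fun i => (t i).2.1) (fun i => (t i).2.2) := by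
  have := sum_pair (α := α) (β := β × γ) (n := n)
    (fun xs => G (xs.1, fun i => (xs.2 i).1) (fun i => (xs.2 i).2))
  rw [← this, Fintype.sum_prod_type, Fintype.sum_prod_type]
  refine Finset.sum_congr rfl fun x _ => ?_
  have h2 := sum_pair (α := β) (β := γ) (n := n) (fun yc => G (x, yc.1) yc.2)
  rw [← h2, Fintype.sum_prod_type]

/-- One-shot existence of a codebook. -/
lemma codebook {q : α × β → ℝ} (hq : IsPmf q) (ω : β → γ → ℝ) (hω : IsCondPmf ω)
    {n m : ℕ} (T : (Fin n → α) × (Fin n → β) → (Fin n → γ) → Prop) (y : Fin n → β) :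
    ∃ c : Fin m → Fin n → γ,
      ∑ x, iid q n (x, y) * (if ∃ j, T (x, y) (c j) then 0 else 1) ≤
      ∑ x, iid q n (x, y) *
        (1 - ∑ c, (∏ i, ω (y i) (c i)) * (if T (x, y) c then 1 else 0)) ^ m := by
  set w : (Fin n → γ) → ℝ := fun c => ∏ i, ω (y i) (c i) with hw
  have hwp : IsPmf w := by
    refine ⟨fun c => Finset.prod_nonneg fun i _ => (hω _).1 _, ?_⟩
    rw [hw, sum_pi_prod (fun i a => ω (y i) a)]
    simp [(hω _).2]
  have hΩ : IsPmf (fun c : Fin m → Fin n → γ => ∏ j, w (c j)) :=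
    ⟨fun c => Finset.prod_nonneg fun j _ => hwp.1 _, sum_pi_pmf hwp⟩
  obtain ⟨c, hc⟩ := exists_le_avg hΩ
    (fun c => ∑ x, iid q n (x, y) * (if ∃ j, T (x, y) (c j) then 0 else 1))
  refine ⟨c, hc.trans (le_of_eq ?_)⟩
  simp only [Finset.mul_sum]
  rw [Finset.sum_comm]
  refine Finset.sum_congr rfl fun x _ => ?_
  have h1 : ∀ c : Fin m → Fin n → γ, (∏ j, w (c j)) *
      (iid q n (x, y) * (if ∃ j, T (x, y) (c j) then 0 else 1)) =
      iid q n (x, y) * ∏ j, (w (c j) * (if T (x, y) (c j) then 0 else 1)) := by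
    intro c
    rw [Finset.prod_mul_distrib]
    have : (if ∃ j, T (x, y) (c j) then (0 : ℝ) else 1) =
        ∏ j, (if T (x, y) (c j) then (0 : ℝ) else 1) := by
      split_ifs with h
      · obtain ⟨j, hj⟩ := h
        exact (Finset.prod_eq_zero (Finset.mem_univ j) (by simp [hj])).symm
      · push Not at h
        exact (Finset.prod_eq_one fun j _ => by simp [h j]).symm
    rw [this]; ring
  simp only [h1]
  rw [← Finset.mul_sum, sum_pi_prod (fun _ a => w a * (if T (x, y) a then 0 else 1))]
  congr 1
  rw [Finset.prod_const, Finset.card_univ, Fintype.card_fin]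
  congr 1
  have h3 : ∀ a, w a * (if T (x, y) a then 0 else 1) =
      w a - w a * (if T (x, y) a then 1 else 0) := by
    intro a
    split_ifs <;> ring
  simp only [h3, Finset.sum_sub_distrib, hwp.2]
  rfl


end
end TWRP

namespace TWRP
section
open TWR
set_option linter.unusedSectionVars false
set_option linter.unusedVariables false


variable {α β γ κ τ : Type} [Fintype α] [Fintype β] [Fintype γ] [Fintype κ] [Fintype τ]

lemma exists_omega {q : α × β → ℝ} (hq : ∀ t, 0 ≤ q t) (c0 : γ) (W : α × β → γ → ℝ)
    (hW : IsCondPmf W) : ∃ ω : β → γ → ℝ, IsCondPmf ω ∧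
      ∀ y c, margY q y * ω y c = ∑ x, q (x, y) * W (x, y) c := by
  obtain ⟨V, hV, h⟩ := exists_kernel (α := Unit) (fun t : Unit × β => margY q t.2) c0
    (fun t => ∑ x, q (x, t.2.1) * W (x, t.2.1) t.2.2)
    (fun t => Finset.sum_nonneg fun x _ => mul_nonneg (hq _) ((hW _).1 _))
    (by
      intro _ y
      rw [Finset.sum_comm]
      simp only [← Finset.mul_sum, (hW _).2, mul_one]
      rfl)
  exact ⟨fun y => V ((), y), fun y => hV _, fun y c => h () y c⟩

/-- Information density. -/
def idens (W : α × β → γ → ℝ) (ω : β → γ → ℝ) : α × β × γ → ℝ :=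
  fun t => Real.logb 2 (W (t.1, t.2.1) t.2.2) - Real.logb 2 (ω t.2.1 t.2.2)

lemma omega_pos {q : α × β → ℝ} (hq : ∀ t, 0 ≤ q t) {W : α × β → γ → ℝ}
    (hW : IsCondPmf W) {ω : β → γ → ℝ}
    (h : ∀ y c, margY q y * ω y c = ∑ x, q (x, y) * W (x, y) c) (hω : IsCondPmf ω)
    {x : α} {y : β} {c : γ} (h1 : 0 < q (x, y)) (h2 : 0 < W (x, y) c) : 0 < ω y c := by
  have h3 : 0 < margY q y * ω y c := by
    rw [h]
    refine lt_of_lt_of_le (mul_pos h1 h2) ?_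
    exact Finset.single_le_sum (f := fun x => q (x, y) * W (x, y) c)
      (fun x _ => mul_nonneg (hq _) ((hW _).1 _)) (Finset.mem_univ x)
  rcases ((hω y).1 c).eq_or_lt with h4 | h4
  · rw [← h4, mul_zero] at h3; exact absurd h3 (lt_irrefl _)
  · exact h4

lemma idens_mean {q : α × β → ℝ} (hq : ∀ t, 0 ≤ q t) {W : α × β → γ → ℝ}
    (hW : IsCondPmf W) {ω : β → γ → ℝ}
    (h : ∀ y c, margY q y * ω y c = ∑ x, q (x, y) * W (x, y) c) (hω : IsCondPmf ω) :
    ∑ t : α × β × γ, (q (t.1, t.2.1) * W (t.1, t.2.1) t.2.2) * idens W ω t =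
      condMI (fun t : α × β × γ => q (t.1, t.2.1) * W (t.1, t.2.1) t.2.2) := by
  rw [condMI_eq, Fintype.sum_prod_type]
  refine Finset.sum_congr rfl fun x _ => ?_
  rw [Fintype.sum_prod_type]
  refine Finset.sum_congr rfl fun y _ => Finset.sum_congr rfl fun c _ => ?_
  simp only [← Finset.mul_sum, (hW _).2, mul_one, ← h]
  rcases (hq (x, y)).eq_or_lt with h1 | h1
  · rw [← h1]; simp
  rcases ((hW (x, y)).1 c).eq_or_lt with h2 | h2
  · rw [← h2]; simp
  have h3 := omega_pos hq hW h hω h1 h2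
  have h4 : 0 < margY q y := lt_of_lt_of_le h1 (le_margY hq x y)
  congr 1
  have e : ∑ a, q (a, y) = margY q y := rfl
  rw [e, Real.logb_mul h1.ne' h2.ne', Real.logb_mul h4.ne' h3.ne']
  unfold idens
  simp only
  ring

lemma fail_bound {q : α × β → ℝ} (hq : IsPmf q) {W : α × β → γ → ℝ}
    (hW : IsCondPmf W) {ω : β → γ → ℝ}
    (h : ∀ y c, margY q y * ω y c = ∑ x, q (x, y) * W (x, y) c) (hω : IsCondPmf ω)
    (δ : α → γ → ℝ) (s e : ℝ) {n m : ℕ} (hm : 0 < m) :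
    ∃ cb : (Fin n → β) → Fin m → Fin n → γ,
      ∑ xy : (Fin n → α) × (Fin n → β), iid q n xy *
        (if ∃ j, (∑ i, idens W ω (xy.1 i, xy.2 i, cb xy.2 j i) ≤ s ∧
          ∑ i, δ (xy.1 i) (cb xy.2 j i) ≤ e) then 0 else 1) ≤
      ∑ t : Fin n → α × β × γ, (∏ i, q ((t i).1, (t i).2.1) * W ((t i).1, (t i).2.1) (t i).2.2) *
        (if s < ∑ i, idens W ω (t i) then 1 else 0) +
      ∑ t : Fin n → α × β × γ, (∏ i, q ((t i).1, (t i).2.1) * W ((t i).1, (t i).2.1) (t i).2.2) *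
        (if e < ∑ i, δ (t i).1 (t i).2.2 then 1 else 0) + 2 ^ s / m := by
  set T : (Fin n → α) × (Fin n → β) → (Fin n → γ) → Prop := fun xy c =>
    ∑ i, idens W ω (xy.1 i, xy.2 i, c i) ≤ s ∧ ∑ i, δ (xy.1 i) (c i) ≤ e with hT
  choose cb hcb using fun y => codebook (m := m) hq ω hω T y
  refine ⟨cb, ?_⟩
  set B : ℝ := 2 ^ s with hB
  have hB0 : 0 < B := by positivity
  have hi : ∀ xy, 0 ≤ iid q n xy := fun xy => iid_nonneg hq.1 xy
  set w : (Fin n → α) × (Fin n → β) → (Fin n → γ) → ℝ :=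
    fun xy c => ∏ i, W (xy.1 i, xy.2 i) (c i) with hw
  have hw0 : ∀ xy c, 0 ≤ w xy c := fun xy c => Finset.prod_nonneg fun i _ => (hW _).1 _
  have hw1 : ∀ xy, ∑ c, w xy c = 1 := by
    intro xy
    simp only [hw]
    rw [sum_pi_prod (fun i c => W (xy.1 i, xy.2 i) c)]
    simp [(hW _).2]
  have ho0 : ∀ (y : Fin n → β) (c : Fin n → γ), 0 ≤ ∏ i, ω (y i) (c i) :=
    fun y c => Finset.prod_nonneg fun i _ => (hω _).1 _
  have ho1 : ∀ y : Fin n → β, ∑ c : Fin n → γ, ∏ i, ω (y i) (c i) = 1 := by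
    intro y
    rw [sum_pi_prod (fun i c => ω (y i) c)]
    simp [(hω _).2]
  have step1 : ∀ xy : (Fin n → α) × (Fin n → β), iid q n xy *
      (1 - ∑ c, (∏ i, ω (xy.2 i) (c i)) * (if T xy c then 1 else 0)) ^ m ≤
      iid q n xy * (1 - ∑ c, w xy c * (if T xy c then 1 else 0) + B / m) := by
    intro xy
    rcases (hi xy).eq_or_lt with h0 | h0
    · rw [← h0]; simp
    have hqpos : ∀ i, 0 < q (xy.1 i, xy.2 i) := by
      intro i
      rcases (hq.1 (xy.1 i, xy.2 i)).eq_or_lt with h1 | h1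
      · exfalso
        have : iid q n xy = 0 := Finset.prod_eq_zero (Finset.mem_univ i) h1.symm
        linarith
      · exact h1
    refine mul_le_mul_of_nonneg_left ?_ h0.le
    refine pow_bound _ _ B m hm hB0 ?_ ?_ ?_ ?_
    · exact Finset.sum_nonneg fun c _ => mul_nonneg (hw0 _ _) (by split_ifs <;> norm_num)
    · refine le_of_le_of_eq (Finset.sum_le_sum fun c _ => mul_le_of_le_one_right (hw0 _ _)
        (by split_ifs <;> norm_num)) (hw1 xy)
    · refine le_of_le_of_eq (Finset.sum_le_sum fun c _ => mul_le_of_le_one_right (ho0 _ _)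
        (by split_ifs <;> norm_num)) (ho1 xy.2)
    · rw [Finset.mul_sum]
      refine Finset.sum_le_sum fun c _ => ?_
      split_ifs with hTc
      · rw [mul_one, mul_one]
        by_cases hz : ∃ i, W (xy.1 i, xy.2 i) (c i) = 0
        · obtain ⟨i, hi⟩ := hz
          have : w xy c = 0 := Finset.prod_eq_zero (Finset.mem_univ i) hi
          rw [this]
          exact mul_nonneg hB0.le (ho0 _ _)
        · push Not at hz
          have hWp : ∀ i, 0 < W (xy.1 i, xy.2 i) (c i) :=
            fun i => lt_of_le_of_ne ((hW _).1 _) (hz i).symm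
          have hop : ∀ i, 0 < ω (xy.2 i) (c i) :=
            fun i => omega_pos hq.1 hW h hω (hqpos i) (hWp i)
          have he : w xy c = (2 : ℝ) ^ (∑ i, idens W ω (xy.1 i, xy.2 i, c i)) *
              ∏ i, ω (xy.2 i) (c i) := by
            rw [Real.rpow_sum_of_pos (by norm_num), ← Finset.prod_mul_distrib]
            refine Finset.prod_congr rfl fun i _ => ?_
            unfold idens
            simp only
            rw [Real.rpow_sub (by norm_num), Real.rpow_logb (by norm_num) (by norm_num) (hWp i),
              Real.rpow_logb (by norm_num) (by norm_num) (hop i), div_mul_cancel₀ _ (hop i).ne']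
          rw [he]
          refine mul_le_mul_of_nonneg_right ?_ (ho0 _ _)
          exact Real.rpow_le_rpow_of_exponent_le (by norm_num) hTc.1
      · simp
  have step2 : ∑ xy : (Fin n → α) × (Fin n → β), iid q n xy *
        (if ∃ j, T xy (cb xy.2 j) then 0 else 1) ≤
      ∑ xy, iid q n xy * (1 - ∑ c, w xy c * (if T xy c then 1 else 0) + B / m) := by
    refine le_trans ?_ (Finset.sum_le_sum fun xy _ => step1 xy)
    rw [Fintype.sum_prod_type, Fintype.sum_prod_type, Finset.sum_comm]
    rw [Finset.sum_comm (s := (Finset.univ : Finset (Fin n → α)))]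
    refine Finset.sum_le_sum fun y _ => ?_
    refine (le_of_eq ?_).trans ((hcb y).trans (le_of_eq ?_))
    · refine Finset.sum_congr rfl fun x _ => ?_
      congr
    · refine Finset.sum_congr rfl fun x _ => ?_
      congr!
  refine step2.trans ?_
  have step3 : ∀ xy, iid q n xy * (1 - ∑ c, w xy c * (if T xy c then 1 else 0) + B / m) ≤
      ∑ c, (iid q n xy * w xy c * (if s < ∑ i, idens W ω (xy.1 i, xy.2 i, c i) then 1 else 0) +
        iid q n xy * w xy c * (if e < ∑ i, δ (xy.1 i) (c i) then 1 else 0)) +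
        iid q n xy * (B / m) := by
    intro xy
    rw [mul_add]
    gcongr
    have e1 : 1 - ∑ c, w xy c * (if T xy c then 1 else 0) =
        ∑ c, w xy c * (1 - (if T xy c then 1 else 0)) := by
      simp only [mul_sub, mul_one, Finset.sum_sub_distrib, hw1]
    rw [e1, Finset.mul_sum]
    refine Finset.sum_le_sum fun c _ => ?_
    have h0 : 0 ≤ iid q n xy * w xy c := mul_nonneg (hi _) (hw0 _ _)
    by_cases h1 : s < ∑ i, idens W ω (xy.1 i, xy.2 i, c i) <;>
    by_cases h2 : e < ∑ i, δ (xy.1 i) (c i) <;> by_cases h3 : T xy c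
    all_goals simp only [h1, h2, h3, if_true, if_false]
    all_goals first
      | exact absurd (show T xy c from ⟨not_lt.1 h1, not_lt.1 h2⟩) h3
      | nlinarith
  refine (Finset.sum_le_sum fun xy _ => step3 xy).trans (le_of_eq ?_)
  rw [Finset.sum_add_distrib, ← Finset.sum_mul, iid_sum hq, one_mul]
  congr 1
  rw [sum_triple (fun xy c => iid q n xy * w xy c *
      (if s < ∑ i, idens W ω (xy.1 i, xy.2 i, c i) then 1 else 0) +
        iid q n xy * w xy c * (if e < ∑ i, δ (xy.1 i) (c i) then 1 else 0)),
    Finset.sum_add_distrib]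
  simp only [iid, hw, ← Finset.prod_mul_distrib]

lemma achieve {q : α × β → ℝ} (hq : IsPmf q) (c0 : γ) {W : α × β → γ → ℝ}
    (hW : IsCondPmf W) (δ : α → γ → ℝ) (D d R ε : ℝ) (hδ : ∀ x c, 0 ≤ δ x c ∧ δ x c ≤ D)
    (hD : 0 ≤ D) (hd0 : 0 ≤ d)
    (hd : (∑ x, ∑ y, ∑ c, q (x, y) * W (x, y) c * δ x c) ≤ d)
    (hR : condMI (fun t : α × β × γ => q (t.1, t.2.1) * W (t.1, t.2.1) t.2.2) < R)
    (hε : 0 < ε) :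
    ∃ N : ℕ, ∀ n, N ≤ n → 0 < n → ∀ m : ℕ, (2 : ℝ) ^ (n * R) ≤ m →
      ∃ (f : (Fin n → α) × (Fin n → β) → Fin m) (g : Fin m × (Fin n → β) → Fin n → γ),
        Delta1 q δ f g ≤ d + ε := by
  obtain ⟨ω, hω, hom⟩ := exists_omega hq.1 c0 W hW
  set I := condMI (fun t : α × β × γ => q (t.1, t.2.1) * W (t.1, t.2.1) t.2.2) with hI
  set P : α × β × γ → ℝ := fun t => q (t.1, t.2.1) * W (t.1, t.2.1) t.2.2 with hP
  have hPp : IsPmf P := by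
    refine ⟨fun t => mul_nonneg (hq.1 _) ((hW _).1 _), ?_⟩
    simp only [Fintype.sum_prod_type, hP, ← Finset.mul_sum, (hW _).2, mul_one]
    rw [← Fintype.sum_prod_type]; exact hq.2
  set η := (R - I) / 2 with hη
  have hη0 : 0 < η := by rw [hη]; linarith
  obtain ⟨K1, hK1, H1⟩ := cheby hPp (idens W ω) I η (le_of_eq (idens_mean hq.1 hW hom hω)) hη0
  obtain ⟨K2, hK2, H2⟩ := cheby hPp (fun t => δ t.1 t.2.2) d (ε / 2)
    (by simpa only [Fintype.sum_prod_type, hP] using hd) (by linarith)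
  have hlim : Filter.Tendsto (fun n : ℕ => D * (K1 / n + K2 / n + ((2 : ℝ) ^ (-η)) ^ n))
      Filter.atTop (nhds (D * (0 + 0 + 0))) := by
    refine Filter.Tendsto.const_mul _ ((Filter.Tendsto.add ?_ ?_).add ?_)
    · exact tendsto_const_div_atTop_nhds_zero_nat K1
    · exact tendsto_const_div_atTop_nhds_zero_nat K2
    · exact tendsto_pow_atTop_nhds_zero_of_lt_one (by positivity)
        (Real.rpow_lt_one_of_one_lt_of_neg (by norm_num) (by linarith))
  have hev := hlim.eventually (gt_mem_nhds (show D * (0 + 0 + 0) < ε / 2 by simp; linarith))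
  obtain ⟨N, hN⟩ := Filter.eventually_atTop.1 hev
  refine ⟨N, fun n hn hn0 m hm => ?_⟩
  have hn' : (0 : ℝ) < n := by exact_mod_cast hn0
  have hmr : (0 : ℝ) < m := lt_of_lt_of_le (by positivity) hm
  have hm0 : 0 < m := by exact_mod_cast hmr
  obtain ⟨cb, hcb⟩ := fail_bound (n := n) hq hW hom hω δ (n * (I + η)) (n * (d + ε / 2)) hm0
  set T : (Fin n → α) × (Fin n → β) → Fin m → Prop := fun xy j =>
    (∑ i, idens W ω (xy.1 i, xy.2 i, cb xy.2 j i) ≤ n * (I + η) ∧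
          ∑ i, δ (xy.1 i) (cb xy.2 j i) ≤ n * (d + ε / 2)) with hT
  refine ⟨fun xy => if hx : ∃ j, T xy j then hx.choose else ⟨0, hm0⟩, fun t => cb t.2 t.1, ?_⟩
  have hpt : ∀ xy : (Fin n → α) × (Fin n → β), iid q n xy * ((n : ℝ)⁻¹ *
      ∑ i, δ (xy.1 i) (cb xy.2 (if hx : ∃ j, T xy j then hx.choose else ⟨0, hm0⟩) i)) ≤
      iid q n xy * (d + ε / 2) + D * (iid q n xy * (if ∃ j, T xy j then 0 else 1)) := by
    intro xy
    have h0 : 0 ≤ iid q n xy := iid_nonneg hq.1 xy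
    have : D * (iid q n xy * (if ∃ j, T xy j then 0 else 1)) =
      iid q n xy * (D * (if ∃ j, T xy j then 0 else 1)) := by ring
    rw [this, ← mul_add]
    refine mul_le_mul_of_nonneg_left ?_ h0
    rw [inv_mul_le_iff₀ hn']
    by_cases hx : ∃ j, T xy j
    · simp only [hx, dif_pos, if_true]
      have := hx.choose_spec.2
      simpa using this
    · simp only [hx, dif_neg, if_false, not_false_eq_true]
      calc _ ≤ ∑ i : Fin n, D := Finset.sum_le_sum fun i _ => (hδ _ _).2
        _ = n * D := by simp
        _ ≤ _ := by
          refine mul_le_mul_of_nonneg_left ?_ hn'.le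
          linarith
  have hB : (2 : ℝ) ^ (n * (I + η)) / m ≤ ((2 : ℝ) ^ (-η)) ^ n := by
    rw [div_le_iff₀ hmr]
    calc (2 : ℝ) ^ (n * (I + η)) = ((2 : ℝ) ^ (-η)) ^ n * 2 ^ (n * R) := by
          rw [← Real.rpow_natCast, ← Real.rpow_mul (by norm_num), ← Real.rpow_add (by norm_num)]
          congr 1
          rw [hη]; ring
      _ ≤ _ := mul_le_mul_of_nonneg_left hm (by positivity)
  have hfail := hcb.trans (add_le_add (add_le_add (H1 n hn0) (H2 n hn0)) hB)
  have hNn := hN n hn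
  calc Delta1 q δ _ _ ≤ ∑ xy, (iid q n xy * (d + ε / 2) +
        D * (iid q n xy * (if ∃ j, T xy j then 0 else 1))) :=
        Finset.sum_le_sum fun xy _ => hpt xy
    _ = (d + ε / 2) + D * ∑ xy, iid q n xy * (if ∃ j, T xy j then 0 else 1) := by
        rw [Finset.sum_add_distrib, ← Finset.sum_mul, iid_sum hq, ← Finset.mul_sum, one_mul]
    _ ≤ (d + ε / 2) + D * (K1 / n + K2 / n + ((2 : ℝ) ^ (-η)) ^ n) := by
        gcongr
    _ ≤ d + ε := by linarith


end
end TWRP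

namespace TWRP
section
open TWR
set_option linter.unusedSectionVars false
set_option linter.unusedVariables false


variable {α β γ κ τ : Type} [Fintype α] [Fintype β] [Fintype γ] [Fintype κ] [Fintype τ]

lemma swap_pmf {q : α × β → ℝ} (h : IsPmf q) : IsPmf (swap q) := by
  refine ⟨fun t => h.1 _, ?_⟩
  rw [← h.2]
  exact Fintype.sum_equiv (Equiv.prodComm β α) _ _ (fun t => rfl)

lemma Src_swap {q : α × β → ℝ} {u : α → κ} {v : β → κ} (h : Src q u v) : Src (swap q) v u := by
  refine ⟨swap_pmf h.pmf, fun y x hyx => h.supp x y (Ne.symm hyx), fun y x hyx => ?_⟩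
  have h1 := h.mkv x y hyx.symm
  have h2 : (∑ y', if v y' = u x then margX (swap q) y' else 0) =
      ∑ x', if u x' = v y then margX q x' else 0 := by
    have e1 : ∀ y', (if v y' = u x then margX (swap q) y' else 0) =
        ∑ x', if v y' = u x then q (x', y') else 0 := by
      intro y'
      split_ifs
      · rfl
      · simp
    have e2 : ∀ x', (if u x' = v y then margX q x' else 0) =
        ∑ y', if u x' = v y then q (x', y') else 0 := by
      intro y'
      split_ifs
      · rfl
      · simp
    simp only [e1, e2]
    rw [Finset.sum_comm]
    refine Finset.sum_congr rfl fun x' _ => Finset.sum_congr rfl fun y' _ => ?_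
    by_cases hx : u x' = v y'
    · rw [hx, hyx]
    · rw [h.supp _ _ hx]; simp
  rw [h2, show margX (swap q) y = margY q y from rfl, show margY (swap q) x = margX q x from rfl,
    show swap q (y, x) = q (x, y) from rfl, h1, mul_comm]

lemma iid_sumY (q : α × β → ℝ) {n : ℕ} (x : Fin n → α) :
    ∑ y, iid q n (x, y) = ∏ i, margX q (x i) :=
  sum_pi_prod (fun i b => q (x i, b))

lemma push (q : α × β → ℝ) {n : ℕ} (F : (Fin n → α) → ℝ) :
    ∑ xy, iid q n xy * F xy.1 = ∑ x, (∏ i, margX q (x i)) * F x := by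
  rw [Fintype.sum_prod_type]
  refine Finset.sum_congr rfl fun x _ => ?_
  simp only
  rw [← Finset.sum_mul, iid_sumY]

lemma iid_supp {q : α × β → ℝ} {u : α → κ} {v : β → κ}
    (h : ∀ x y, u x ≠ v y → q (x, y) = 0) {n : ℕ} (x : Fin n → α) (y : Fin n → β)
    (hxy : iid q n (x, y) ≠ 0) : (fun i => u (x i)) = fun i => v (y i) := by
  funext i
  by_contra hne
  exact hxy (Finset.prod_eq_zero (Finset.mem_univ i) (h _ _ hne))

lemma Delta_eq {q : α × β → ℝ} {u : α → κ} {v : β → κ} (h : Src q u v) (δ : α → γ → ℝ)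
    {n m : ℕ} (f : (Fin n → α) × (Fin n → β) → Fin m) (g : Fin m × (Fin n → β) → Fin n → γ)
    (fA : (Fin n → α) × (Fin n → κ) → Fin m) (gA : Fin m × (Fin n → κ) → Fin n → γ)
    (hfg : ∀ x y, (fun i => u (x i)) = (fun i => v (y i)) →
      g (f (x, y), y) = gA (fA (x, fun i => u (x i)), fun i => u (x i))) :
    Delta1 q δ f g = Delta1 (qXU q u) δ fA gA := by
  set F : (Fin n → α) → ℝ := fun x =>
    (n : ℝ)⁻¹ * ∑ i, δ (x i) (gA (fA (x, fun i => u (x i)), fun i => u (x i)) i) with hF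
  have h1 : Delta1 q δ f g = ∑ xy, iid q n xy * F xy.1 := by
    refine Finset.sum_congr rfl fun xy _ => ?_
    obtain ⟨x, y⟩ := xy
    by_cases h0 : iid q n (x, y) = 0
    · rw [h0]; simp
    · simp only [hF, hfg x y (iid_supp h.supp x y h0)]
  have h2 : Delta1 (qXU q u) δ fA gA = ∑ xy, iid (qXU q u) n xy * F xy.1 := by
    refine Finset.sum_congr rfl fun xy _ => ?_
    obtain ⟨x, k⟩ := xy
    by_cases h0 : iid (qXU q u) n (x, k) = 0
    · rw [h0]; simp
    · have := iid_supp (Src_qXU h.pmf u).supp x k h0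
      have hk : k = fun i => u (x i) := this.symm
      subst hk
      rfl
  rw [h1, h2, push, push, margX_qXU]

lemma Delta2_eq (q : α × β → ℝ) (δ : β → γ → ℝ)
    {n m : ℕ} (f : (Fin n → α) × (Fin n → β) → Fin m) (g : Fin m × (Fin n → α) → Fin n → γ) :
    Delta2 q δ f g = Delta1 (swap q) δ (fun t => f (t.2, t.1)) g :=
  Fintype.sum_equiv (Equiv.prodComm _ _) _ _ (fun t => rfl)

variable {Xh Yh : Type} [Fintype Xh] [Fintype Yh]

lemma nonempty_of_pmf {p : τ → ℝ} (h : IsPmf p) : Nonempty τ := by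
  by_contra hne
  rw [not_nonempty_iff] at hne
  have := h.2
  simp at this

lemma ach {q : α × β → ℝ} {u : α → κ} {v : β → κ} (h : Src q u v)
    (δ1 : α → Xh → ℝ) (δ2 : β → Yh → ℝ) (D1 D2 : ℝ)
    (hδ1 : ∀ x xh, 0 ≤ δ1 x xh ∧ δ1 x xh ≤ D1)
    (hδ2 : ∀ y yh, 0 ≤ δ2 y yh ∧ δ2 y yh ≤ D2)
    (hn1 : ∀ x, ∃ xh, δ1 x xh = 0) (hn2 : ∀ y, ∃ yh, δ2 y yh = 0)
    (d1 d2 : ℝ) (hd1 : 0 ≤ d1) (hd2 : 0 ≤ d2) (r : ℝ)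
    (hr1 : condRD (qXU q u) δ1 d1 < r) (hr2 : condRD (qXU (swap q) v) δ2 d2 < r) :
    RDAchievable q δ1 δ2 d1 d2 r := by
  intro ε hε
  have hs := Src_swap h
  obtain ⟨x0, y0⟩ := nonempty_of_pmf h.pmf
  obtain ⟨a0, ha0⟩ := hn1 x0
  obtain ⟨b0, hb0⟩ := hn2 y0
  obtain ⟨W1, hW1, hWd1, hI1⟩ := condRD_exists_lt _ δ1 hn1 d1 hd1 r hr1
  obtain ⟨W2, hW2, hWd2, hI2⟩ := condRD_exists_lt _ δ2 hn2 d2 hd2 r hr2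
  obtain ⟨N1, H1⟩ := achieve (qXU_pmf h.pmf u) a0 hW1 δ1 D1 d1 r ε hδ1
    ((hδ1 x0 a0).1.trans (hδ1 x0 a0).2) hd1 hWd1 hI1 hε
  obtain ⟨N2, H2⟩ := achieve (qXU_pmf hs.pmf v) b0 hW2 δ2 D2 d2 r ε hδ2
    ((hδ2 y0 b0).1.trans (hδ2 y0 b0).2) hd2 hWd2 hI2 hε
  obtain ⟨N3, H3⟩ := exists_nat_gt (1 / ε)
  have hr0 : 0 ≤ r := (condRD_nonneg (qXU_pmf h.pmf u).1 δ1 d1).trans hr1.le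
  set n := N1 + N2 + N3 + 1 with hn
  have hn0 : 0 < n := by omega
  have hn' : (0 : ℝ) < n := by exact_mod_cast hn0
  have hN3 : (N3 : ℝ) ≤ n := by exact_mod_cast (by omega : N3 ≤ n)
  set m := ⌈(2 : ℝ) ^ (n * r)⌉₊ with hm
  have hmle : (2 : ℝ) ^ (n * r) ≤ m := Nat.le_ceil _
  have hmr : (0 : ℝ) < m := lt_of_lt_of_le (by positivity) hmle
  have hm0 : 0 < m := by exact_mod_cast hmr
  haveI : NeZero m := ⟨hm0.ne'⟩
  obtain ⟨f1, gA, hA⟩ := H1 n (by omega) hn0 m hmle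
  obtain ⟨f2, gB, hB⟩ := H2 n (by omega) hn0 m hmle
  refine ⟨n, m, fun xy => f1 (xy.1, fun i => u (xy.1 i)) + f2 (xy.2, fun i => v (xy.2 i)),
    fun t => gA (t.1 - f2 (t.2, fun i => v (t.2 i)), fun i => v (t.2 i)),
    fun t => gB (t.1 - f1 (t.2, fun i => u (t.2 i)), fun i => u (t.2 i)), hn0, ?_, ?_, ?_⟩
  · have hone : (1 : ℝ) ≤ 2 ^ (n * r) := Real.one_le_rpow (by norm_num) (by positivity)
    have h1 : (m : ℝ) ≤ 2 ^ (n * r + 1) := by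
      have := Nat.ceil_lt_add_one (show (0 : ℝ) ≤ 2 ^ (n * r) by positivity)
      rw [Real.rpow_add (by norm_num), Real.rpow_one]
      linarith
    have h2 : Real.logb 2 m ≤ n * r + 1 := by
      rw [Real.logb_le_iff_le_rpow (by norm_num) hmr]
      exact h1
    rw [div_le_iff₀ hn']
    have h3 : 1 < n * ε := by
      have := (div_lt_iff₀ hε).1 H3
      nlinarith
    nlinarith
  · rw [Delta_eq h δ1 _ _ f1 gA]
    · exact hA
    · intro x y hxy
      simp only [hxy, add_sub_cancel_right]
  · rw [Delta2_eq, Delta_eq hs δ2 _ _ f2 gB]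
    · exact hB
    · intro x y hxy
      simp only [hxy, add_sub_cancel_left]

lemma conv {q : α × β → ℝ} (hq : IsPmf q) 
    (δ1 : α → Xh → ℝ) (δ2 : β → Yh → ℝ) 
    (hn1 : ∀ x, ∃ xh, δ1 x xh = 0) (hn2 : ∀ y, ∃ yh, δ2 y yh = 0)
    (d1 d2 : ℝ) (r : ℝ) (hr : RDAchievable q δ1 δ2 d1 d2 r) :
    max (condRD q δ1 d1) (condRD (swap q) δ2 d2) ≤ r := by
  obtain ⟨x0, y0⟩ := nonempty_of_pmf hq
  obtain ⟨a0, ha0⟩ := hn1 x0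
  obtain ⟨b0, hb0⟩ := hn2 y0
  refine max_le ?_ ?_
  · refine condRD_lsc hq.1 δ1 d1 r fun ε hε => ?_
    obtain ⟨n, m, f, g1, g2, hn, h1, h2, h3⟩ := hr ε hε
    obtain ⟨W, hW, hd, hI⟩ := converse hq a0 δ1 hn f g1
    exact ⟨W, hW, hd.le.trans h2, hI.trans h1⟩
  · refine condRD_lsc (swap_pmf hq).1 δ2 d2 r fun ε hε => ?_
    obtain ⟨n, m, f, g1, g2, hn, h1, h2, h3⟩ := hr ε hε
    rw [Delta2_eq] at h3
    obtain ⟨W, hW, hd, hI⟩ := converse (swap_pmf hq) b0 δ2 hn (fun t => f (t.2, t.1)) g2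
    exact ⟨W, hW, hd.le.trans h3, hI.trans h1⟩

theorem core {q : α × β → ℝ} {u : α → κ} {v : β → κ} (h : Src q u v)
    (δ1 : α → Xh → ℝ) (δ2 : β → Yh → ℝ) (D1 D2 : ℝ)
    (hδ1 : ∀ x xh, 0 ≤ δ1 x xh ∧ δ1 x xh ≤ D1)
    (hδ2 : ∀ y yh, 0 ≤ δ2 y yh ∧ δ2 y yh ≤ D2)
    (hn1 : ∀ x, ∃ xh, δ1 x xh = 0) (hn2 : ∀ y, ∃ yh, δ2 y yh = 0)
    (d1 d2 : ℝ) (hd1 : 0 ≤ d1) (hd2 : 0 ≤ d2) :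
    RD q δ1 δ2 d1 d2 = max (condRD q δ1 d1) (condRD (swap q) δ2 d2) ∧
    RD q δ1 δ2 d1 d2 = max (wzRD q δ1 d1) (wzRD (swap q) δ2 d2) ∧
    RD q δ1 δ2 d1 d2 = max (condRD (qXU q u) δ1 d1) (condRD (qXU (swap q) v) δ2 d2) := by
  obtain ⟨e1, e2⟩ := wz_eq h δ1 (fun x c => (hδ1 x c).1) hn1 d1 hd1
  obtain ⟨e3, e4⟩ := wz_eq (Src_swap h) δ2 (fun x c => (hδ2 x c).1) hn2 d2 hd2
  have key : RD q δ1 δ2 d1 d2 =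
      max (condRD (qXU q u) δ1 d1) (condRD (qXU (swap q) v) δ2 d2) := by
    have hnn := condRD_nonneg (qXU_pmf h.pmf u).1 δ1 d1
    have hmem : ∀ r, max (condRD (qXU q u) δ1 d1) (condRD (qXU (swap q) v) δ2 d2) < r →
        r ∈ {r : ℝ | 0 ≤ r ∧ RDAchievable q δ1 δ2 d1 d2 r} := by
      intro r hr
      exact ⟨hnn.trans ((le_max_left _ _).trans hr.le),
        ach h δ1 δ2 D1 D2 hδ1 hδ2 hn1 hn2 d1 d2 hd1 hd2 r
          ((le_max_left _ _).trans_lt hr) ((le_max_right _ _).trans_lt hr)⟩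
    refine le_antisymm ?_ ?_
    · refine le_of_forall_gt_imp_ge_of_dense fun r hr => ?_
      exact csInf_le ⟨0, fun r hr => hr.1⟩ (hmem r hr)
    · rw [← e1, ← e3]
      refine le_csInf ⟨_, hmem _ (lt_add_one _)⟩ ?_
      rintro r ⟨-, hr⟩
      exact conv h.pmf δ1 δ2 hn1 hn2 d1 d2 r hr
  exact ⟨by rw [key, e1, e3], by rw [key, e2, e4], key⟩

lemma condMI_unit (P : α × Unit × γ → ℝ) (hP : ∑ x, ∑ c, P (x, (), c) = 1) :
    condMI P = MI (fun t : α × γ => P (t.1, (), t.2)) := by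
  unfold condMI MI H2
  simp only [Fintype.sum_prod_type, Fintype.sum_unique, Finset.univ_unique, Finset.sum_singleton]
  have : ∀ a : Unit, a = () := fun _ => rfl
  simp [hP]

lemma condRD_unit {qX : α → ℝ} (h : IsPmf qX) {q : α × β → ℝ} (hm : margX q = qX)
    (δ : α → γ → ℝ) (d : ℝ) :
    condRD (qXU q (fun _ => ())) δ d = margRD qX δ d := by
  have e : qXU q (fun _ : α => ()) = fun t => qX t.1 := by
    funext t; simp [qXU, hm]
  rw [e]
  unfold condRD margRD
  congr 1
  ext r
  constructor
  · rintro ⟨W, hW, hd, rfl⟩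
    refine ⟨fun x => W (x, ()), fun x => hW _, ?_, ?_⟩
    · simpa using hd
    · rw [condMI_unit]
      simp only [← Finset.mul_sum, (hW _).2, mul_one, h.2]
  · rintro ⟨W, hW, hd, rfl⟩
    refine ⟨fun x => W x.1, fun x => hW _, ?_, ?_⟩
    · simpa using hd
    · rw [condMI_unit]
      simp only [← Finset.mul_sum, (hW _).2, mul_one, h.2]

lemma Src_unit {qX : α → ℝ} {qY : β → ℝ} (hX : IsPmf qX) (hY : IsPmf qY) :
    Src (fun t : α × β => qX t.1 * qY t.2) (fun _ => ()) (fun _ => ()) ∧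
    margX (fun t : α × β => qX t.1 * qY t.2) = qX ∧
    margX (swap (fun t : α × β => qX t.1 * qY t.2)) = qY := by
  have m1 : margX (fun t : α × β => qX t.1 * qY t.2) = qX := by
    funext x; simp [margX, ← Finset.mul_sum, hY.2]
  have m2 : margY (fun t : α × β => qX t.1 * qY t.2) = qY := by
    funext x; simp [margY, ← Finset.sum_mul, hX.2]
  refine ⟨⟨⟨fun t => mul_nonneg (hX.1 _) (hY.1 _), ?_⟩, fun _ _ hh => absurd rfl hh, ?_⟩, m1, m2⟩
  · rw [Fintype.sum_prod_type]
    simp [← Finset.mul_sum, hX.2, hY.2]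
  · intro x y _
    rw [m1, m2]
    simp [hX.2]


end
end TWRP
open TWR in
/-- Corollary 1: if `X = (X',U)`, `Y = (Y',U)` with
`X' − U − Y'` a Markov chain, then `R(d1,d2)` equals the cut-set bound, the
compress-linear bound, and `max{R_{X|U}(d1), R_{Y|U}(d2)}`; in particular, for
independent sources `R(d1,d2) = max{R_X(d1), R_Y(d2)}`. -/
theorem rd_conditionally_independent
    {X' 𝒰 Y' Xh Yh : Type}
    [Fintype X'] [Fintype 𝒰] [Fintype Y'] [Fintype Xh] [Fintype Yh]
    (p : X' × 𝒰 × Y' → ℝ) (hp : IsPmf p) (hMarkov : Markov p)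
    (q : (X' × 𝒰) × (Y' × 𝒰) → ℝ)
    (hq : q = fun t => if t.1.2 = t.2.2 then p (t.1.1, t.1.2, t.2.1) else 0)
    (δ1 : X' × 𝒰 → Xh → ℝ) (δ2 : Y' × 𝒰 → Yh → ℝ) (d1max d2max : ℝ)
    (hδ1 : ∀ x xh, 0 ≤ δ1 x xh ∧ δ1 x xh ≤ d1max)
    (hδ2 : ∀ y yh, 0 ≤ δ2 y yh ∧ δ2 y yh ≤ d2max)
    (hδ1n : ∀ x, ∃ xh, δ1 x xh = 0) (hδ2n : ∀ y, ∃ yh, δ2 y yh = 0)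
    (d1 d2 : ℝ) (hd1 : 0 ≤ d1) (hd2 : 0 ≤ d2) :
    (RD q δ1 δ2 d1 d2 = max (condRD q δ1 d1) (condRD (swap q) δ2 d2) ∧
     RD q δ1 δ2 d1 d2 = max (wzRD q δ1 d1) (wzRD (swap q) δ2 d2) ∧
     RD q δ1 δ2 d1 d2 =
       max (condRD (fun t : (X' × 𝒰) × 𝒰 =>
              if t.1.2 = t.2 then ∑ y', p (t.1.1, t.2, y') else 0) δ1 d1)
           (condRD (fun t : (Y' × 𝒰) × 𝒰 =>
              if t.1.2 = t.2 then ∑ x', p (x', t.2, t.1.1) else 0) δ2 d2)) ∧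
    (∀ (𝒳₂ 𝒴₂ : Type) [Fintype 𝒳₂] [Fintype 𝒴₂]
        (qX : 𝒳₂ → ℝ) (qY : 𝒴₂ → ℝ), IsPmf qX → IsPmf qY →
      ∀ (δ1' : 𝒳₂ → Xh → ℝ) (δ2' : 𝒴₂ → Yh → ℝ),
        (∀ x xh, 0 ≤ δ1' x xh ∧ δ1' x xh ≤ d1max) →
        (∀ y yh, 0 ≤ δ2' y yh ∧ δ2' y yh ≤ d2max) →
        (∀ x, ∃ xh, δ1' x xh = 0) → (∀ y, ∃ yh, δ2' y yh = 0) →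
        RD (fun t : 𝒳₂ × 𝒴₂ => qX t.1 * qY t.2) δ1' δ2' d1 d2 =
          max (margRD qX δ1' d1) (margRD qY δ2' d2)) := by
  refine ⟨?_, ?_⟩
  · have mX : ∀ x' k, margX q (x', k) = ∑ y', p (x', k, y') := by
      intro x' k
      rw [hq]
      simp [margX, Fintype.sum_prod_type]
    have mY : ∀ y' k, margY q (y', k) = ∑ x', p (x', k, y') := by
      intro y' k
      rw [hq]
      simp [margY, Fintype.sum_prod_type]
    have hS : TWRP.Src q (Prod.snd : X' × 𝒰 → 𝒰) (Prod.snd : Y' × 𝒰 → 𝒰) := by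
      refine ⟨⟨?_, ?_⟩, ?_, ?_⟩
      · intro t
        rw [hq]
        simp only
        split_ifs
        · exact hp.1 _
        · exact le_rfl
      · rw [Fintype.sum_prod_type, Fintype.sum_prod_type, ← hp.2, Fintype.sum_prod_type]
        refine Finset.sum_congr rfl fun x' _ => ?_
        rw [Fintype.sum_prod_type]
        exact Finset.sum_congr rfl fun k _ => mX x' k
      · intro x y hxy
        rw [hq]
        simp only [hxy, if_false]
      · rintro ⟨x', k⟩ ⟨y', k'⟩ hxy
        simp only at hxy
        subst hxy
        have hM := hMarkov x' k y'
        rw [mX, mY, ← hM, Fintype.sum_prod_type]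
        simp only [mX]
        congr 1
        · rw [hq]; simp
        · refine Finset.sum_congr rfl fun a _ => ?_
          simp
    have hc := TWRP.core hS δ1 δ2 d1max d2max hδ1 hδ2 hδ1n hδ2n d1 d2 hd1 hd2
    refine ⟨hc.1, hc.2.1, ?_⟩
    rw [hc.2.2]
    congr 2
    · funext t
      obtain ⟨⟨x', k⟩, k'⟩ := t
      simp only [TWRP.qXU]
      split_ifs with hk
      · subst hk; exact mX x' k
      · rfl
    · funext t
      obtain ⟨⟨y', k⟩, k'⟩ := t
      simp only [TWRP.qXU]
      split_ifs with hk
      · subst hk; exact mY y' k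
      · rfl
  · intro 𝒳₂ 𝒴₂ _ _ qX qY hX hY δ1' δ2' h1 h2 hn1 hn2
    obtain ⟨hS, m1, m2⟩ := TWRP.Src_unit hX hY
    have hc := TWRP.core hS δ1' δ2' d1max d2max h1 h2 hn1 hn2 d1 d2 hd1 hd2
    rw [hc.2.2, TWRP.condRD_unit hX m1, TWRP.condRD_unit hY m2]
end
end

section
/- Let ψ_x: 𝒳 → 𝒰 and ψ_y: 𝒴 → 𝒱 be functions between finite sets, set U = ψ_x(X) and V = ψ_y(Y), take reconstruction alphabets 𝒳̂ = 𝒰 and 𝒴̂ = 𝒱, and let δ1(x,û) = 0 if û = ψ_x(x) and 1 otherwise, and δ2(y,v̂) = 0 if v̂ = ψ_y(y) and 1 otherwise. Then R(0,0) = max{ H(U|Y), H(V|X) }. -/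
open scoped BigOperators Classical

noncomputable section

namespace TWRAux
open TWR

/-- Sums over pairs of blocks are sums over blocks of pairs. -/
lemma sum_blocks {𝒳 𝒴 : Type} [Fintype 𝒳] [Fintype 𝒴] (n : ℕ)
    (F : (Fin n → 𝒳) × (Fin n → 𝒴) → ℝ) :
    ∑ xy, F xy = ∑ ω : Fin n → 𝒳 × 𝒴, F (fun i => (ω i).1, fun i => (ω i).2) :=
  (Equiv.sum_comp (Equiv.arrowProdEquivProdArrow (Fin n) (fun _ => 𝒳) (fun _ => 𝒴)) F).symm

lemma prod_sum_fun {Ω : Type} [Fintype Ω] {n : ℕ} (h : Fin n → Ω → ℝ) :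
    ∑ ω : Fin n → Ω, ∏ i, h i (ω i) = ∏ i, ∑ a, h i a := by
  rw [Finset.prod_univ_sum, Fintype.piFinset_univ]

lemma sum_cons {Ω : Type} [Fintype Ω] (n : ℕ) (F : (Fin (n+1) → Ω) → ℝ) :
    ∑ ω, F ω = ∑ a : Ω, ∑ ω : Fin n → Ω, F (Fin.cons a ω) := by
  rw [← Fintype.sum_prod_type' (f := fun a ω => F (Fin.cons a ω))]
  exact (Equiv.sum_comp (Fin.consEquiv (fun _ => Ω)) F).symm

lemma moments {Ω : Type} [Fintype Ω] (w z : Ω → ℝ) (hw : ∑ a, w a = 1)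
    (hz : ∑ a, w a * z a = 0) (n : ℕ) :
    (∑ ω : Fin n → Ω, (∏ i, w (ω i)) = 1) ∧
    (∑ ω : Fin n → Ω, (∏ i, w (ω i)) * (∑ i, z (ω i)) = 0) ∧
    (∑ ω : Fin n → Ω, (∏ i, w (ω i)) * (∑ i, z (ω i))^2 = n * ∑ a, w a * z a ^ 2) := by
  induction n with
  | zero => simp
  | succ n ih =>
    obtain ⟨h0, h1, h2⟩ := ih
    refine ⟨?_, ?_, ?_⟩
    · rw [sum_cons]
      simp only [Fin.prod_univ_succ, Fin.cons_zero, Fin.cons_succ, ← Finset.mul_sum, h0, mul_one, hw]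
    · rw [sum_cons]
      have : ∀ a, ∑ ω : Fin n → Ω, w a * (∏ i, w (ω i)) * (z a + ∑ i, z (ω i)) = w a * z a := by
        intro a
        calc _ = w a * z a * ∑ ω : Fin n → Ω, (∏ i, w (ω i))
              + w a * ∑ ω : Fin n → Ω, (∏ i, w (ω i)) * (∑ i, z (ω i)) := by
              rw [Finset.mul_sum, Finset.mul_sum, ← Finset.sum_add_distrib]
              exact Finset.sum_congr rfl (fun _ _ => by ring)
          _ = _ := by rw [h0, h1]; ring
      simp only [Fin.prod_univ_succ, Fin.sum_univ_succ, Fin.cons_zero, Fin.cons_succ, this, hz]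
    · rw [sum_cons]
      have : ∀ a, ∑ ω : Fin n → Ω, w a * (∏ i, w (ω i)) * (z a + ∑ i, z (ω i))^2
          = w a * z a ^ 2 + w a * (n * ∑ a, w a * z a ^ 2) := by
        intro a
        calc _ = w a * z a ^ 2 * ∑ ω : Fin n → Ω, (∏ i, w (ω i))
              + 2 * w a * z a * (∑ ω : Fin n → Ω, (∏ i, w (ω i)) * (∑ i, z (ω i)))
              + w a * ∑ ω : Fin n → Ω, (∏ i, w (ω i)) * (∑ i, z (ω i))^2 := by
              rw [Finset.mul_sum, Finset.mul_sum, Finset.mul_sum, ← Finset.sum_add_distrib,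
                ← Finset.sum_add_distrib]
              exact Finset.sum_congr rfl (fun _ _ => by ring)
          _ = _ := by rw [h0, h1, h2]; ring
      simp only [Fin.prod_univ_succ, Fin.sum_univ_succ, Fin.cons_zero, Fin.cons_succ, this]
      rw [Finset.sum_add_distrib, ← Finset.sum_mul, hw]
      push_cast; ring

/-- Chebyshev. -/
lemma cheb {Ω : Type} [Fintype Ω] (w z : Ω → ℝ) (hw0 : ∀ a, 0 ≤ w a) (hw : ∑ a, w a = 1) :
    ∃ C : ℝ, ∀ δ > 0, ∀ n : ℕ, 0 < n →
      ∑ ω : Fin n → Ω, (if n * (∑ a, w a * z a + δ) < ∑ i, z (ω i) then ∏ i, w (ω i) else 0)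
        ≤ C / (n * δ^2) := by
  set μ := ∑ a, w a * z a with hμ
  refine ⟨∑ a, w a * (z a - μ)^2, fun δ hδ n hn => ?_⟩
  have hm := (moments w (fun a => z a - μ) hw (by
    simp only [mul_sub, Finset.sum_sub_distrib, ← Finset.sum_mul, hw]; simp [hμ]) n).2.2
  have hn' : (0:ℝ) < n := by exact_mod_cast hn
  rw [le_div_iff₀ (by positivity)]
  have key : (∑ ω : Fin n → Ω, (if n * (μ + δ) < ∑ i, z (ω i) then ∏ i, w (ω i) else 0))
      * (n * δ)^2 ≤ n * ∑ a, w a * (z a - μ)^2 := by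
    rw [← hm, Finset.sum_mul]
    refine Finset.sum_le_sum fun ω _ => ?_
    have hp : 0 ≤ ∏ i, w (ω i) := Finset.prod_nonneg fun i _ => hw0 _
    have hs : ∑ i, (z (ω i) - μ) = ∑ i, z (ω i) - n * μ := by
      simp [Finset.sum_sub_distrib]
    rw [hs]
    split_ifs with h
    · have : n * δ ≤ ∑ i, z (ω i) - n * μ := by linarith
      have h0 : 0 ≤ n * δ := by positivity
      gcongr
    · simp only [zero_mul]; positivity
  have : (∑ ω : Fin n → Ω, (if n * (μ + δ) < ∑ i, z (ω i) then ∏ i, w (ω i) else 0))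
      * (n * δ^2) * n ≤ (∑ a, w a * (z a - μ)^2) * n := by linarith
  exact le_of_mul_le_mul_right this hn'

/-- Number of functions with a collision. -/
lemma collide {A : Type} [Fintype A] {k : ℕ} (a b : A) (hab : b ≠ a) :
    (∑ F : A → Fin (k+1), if F b = F a then (1:ℝ) else 0) * (k+1)
      = ∑ _F : A → Fin (k+1), (1:ℝ) := by
  have h : ∀ c : Fin (k+1), (∑ F : A → Fin (k+1), if F b = F a then (1:ℝ) else 0)
      = ∑ F : A → Fin (k+1), if F b + c = F a then (1:ℝ) else 0 := by
    intro c
    let e : (A → Fin (k+1)) ≃ (A → Fin (k+1)) := Equiv.addRight (Pi.single b c)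
    rw [← Equiv.sum_comp e]
    refine Finset.sum_congr rfl fun F _ => ?_
    simp [e, Pi.single_eq_of_ne hab.symm]
  have h2 : ∑ c : Fin (k+1), (∑ F : A → Fin (k+1), if F b = F a then (1:ℝ) else 0)
      = ∑ _F : A → Fin (k+1), (1:ℝ) := by
    rw [Finset.sum_congr rfl (fun c _ => h c), Finset.sum_comm]
    refine Finset.sum_congr rfl fun F _ => ?_
    rw [Finset.sum_eq_single (F a - F b)]
    · simp
    · intro c _ hc
      rw [if_neg]
      intro h; apply hc; rw [← h]; simp
    · simp
  rw [← h2]; simp [mul_comm]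

lemma binning {Ω A : Type} [Fintype Ω] [Fintype A] (w : Ω → ℝ) (hw0 : ∀ o, 0 ≤ w o)
    (hw : ∑ o, w o = 1) (a : Ω → A) (N : Ω → Finset A) (hN : ∀ o, a o ∉ N o)
    (B : ℝ) (hB : ∀ o, ((N o).card : ℝ) ≤ B) (k : ℕ) :
    ∃ F : A → Fin (k+1), ∑ o, (if ∃ b ∈ N o, F b = F (a o) then w o else 0) ≤ B / (k+1) := by
  have hk : (0:ℝ) < k + 1 := by positivity
  have := Finset.exists_le_of_sum_le (s := (Finset.univ : Finset (A → Fin (k+1))))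
    (f := fun F => ∑ o, (if ∃ b ∈ N o, F b = F (a o) then w o else 0))
    (g := fun _ => B / (k+1)) Finset.univ_nonempty ?_
  · obtain ⟨F, _, hF⟩ := this; exact ⟨F, hF⟩
  set T : ℝ := ∑ _F : A → Fin (k+1), (1:ℝ) with hT
  have hT0 : 0 ≤ T := by positivity
  rw [Finset.sum_comm]
  calc _ ≤ ∑ o, w o * (B / (k+1) * T) := by
        refine Finset.sum_le_sum fun o _ => ?_
        calc _ ≤ ∑ F : A → Fin (k+1), w o * ∑ b ∈ N o, (if F b = F (a o) then (1:ℝ) else 0) := by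
              refine Finset.sum_le_sum fun F _ => ?_
              have h0 : ∀ b ∈ N o, (0:ℝ) ≤ (if F b = F (a o) then (1:ℝ) else 0) := by
                intro b _; split_ifs <;> norm_num
              split_ifs with h
              · obtain ⟨b, hb, hb2⟩ := h
                have := Finset.single_le_sum h0 hb
                rw [if_pos hb2] at this
                nlinarith [hw0 o]
              · exact mul_nonneg (hw0 o) (Finset.sum_nonneg h0)
          _ = w o * ∑ b ∈ N o, ∑ F : A → Fin (k+1), (if F b = F (a o) then (1:ℝ) else 0) := by
              rw [← Finset.mul_sum, Finset.sum_comm]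
          _ = w o * ((N o).card * (T / (k+1))) := by
              congr 1
              rw [← nsmul_eq_mul, ← Finset.sum_const]
              refine Finset.sum_congr rfl fun b hb => ?_
              rw [eq_div_iff hk.ne']
              exact collide _ _ (fun h => hN o (h ▸ hb))
          _ ≤ w o * (B * (T / (k+1))) := by
              have := hw0 o; have := hB o; gcongr
          _ = _ := by ring
    _ = B / (k+1) * T := by rw [← Finset.sum_mul, hw, one_mul]
    _ = _ := by rw [hT, Finset.mul_sum]; simp

/-- Joint law of `(ψ X, Y)`. -/
def jnt {𝒳 𝒴 𝒰 : Type} [Fintype 𝒳] (q : 𝒳 × 𝒴 → ℝ) (ψ : 𝒳 → 𝒰) (u : 𝒰) (y : 𝒴) : ℝ :=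
  ∑ x, if ψ x = u then q (x, y) else 0

/-- Conditional law of `ψ X` given `Y`. -/
def kap {𝒳 𝒴 𝒰 : Type} [Fintype 𝒳] (q : 𝒳 × 𝒴 → ℝ) (ψ : 𝒳 → 𝒰) (u : 𝒰) (y : 𝒴) : ℝ :=
  jnt q ψ u y / ∑ x, q (x, y)

section
variable {𝒳 𝒴 𝒰 : Type} [Fintype 𝒳] [Fintype 𝒴] [Fintype 𝒰]
variable {q : 𝒳 × 𝒴 → ℝ}

lemma jnt_nonneg (hq : IsPmf q) (ψ : 𝒳 → 𝒰) (u : 𝒰) (y : 𝒴) : 0 ≤ jnt q ψ u y :=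
  Finset.sum_nonneg fun x _ => by split_ifs; exacts [hq.1 _, le_rfl]

lemma marg_nonneg (hq : IsPmf q) (y : 𝒴) : 0 ≤ ∑ x, q (x, y) := Finset.sum_nonneg fun x _ => hq.1 _

lemma sum_jnt (ψ : 𝒳 → 𝒰) (y : 𝒴) : ∑ u, jnt q ψ u y = ∑ x, q (x, y) := by
  unfold jnt; rw [Finset.sum_comm]; simp

lemma le_jnt (hq : IsPmf q) (ψ : 𝒳 → 𝒰) (x : 𝒳) (y : 𝒴) : q (x, y) ≤ jnt q ψ (ψ x) y := by
  have := Finset.single_le_sum (s := Finset.univ)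
    (f := fun x' => if ψ x' = ψ x then q (x', y) else 0)
    (fun i _ => by split_ifs; exacts [hq.1 _, le_rfl]) (Finset.mem_univ x)
  simpa [jnt] using this

lemma jnt_le (hq : IsPmf q) (ψ : 𝒳 → 𝒰) (u : 𝒰) (y : 𝒴) : jnt q ψ u y ≤ ∑ x, q (x, y) :=
  Finset.sum_le_sum fun x _ => by split_ifs; exacts [le_rfl, hq.1 _]

lemma kap_nonneg (hq : IsPmf q) (ψ : 𝒳 → 𝒰) (u : 𝒰) (y : 𝒴) : 0 ≤ kap q ψ u y :=
  div_nonneg (jnt_nonneg hq ψ u y) (marg_nonneg hq y)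

lemma kap_le_one (hq : IsPmf q) (ψ : 𝒳 → 𝒰) (u : 𝒰) (y : 𝒴) : kap q ψ u y ≤ 1 :=
  div_le_one_of_le₀ (jnt_le hq ψ u y) (marg_nonneg hq y)

lemma kap_sum_le (hq : IsPmf q) (ψ : 𝒳 → 𝒰) (y : 𝒴) : ∑ u, kap q ψ u y ≤ 1 := by
  unfold kap
  rw [← Finset.sum_div, sum_jnt]
  exact div_self_le_one _

lemma kap_pos (hq : IsPmf q) (ψ : 𝒳 → 𝒰) {x : 𝒳} {y : 𝒴} (h : 0 < q (x, y)) : 0 < kap q ψ (ψ x) y :=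
  div_pos (h.trans_le (le_jnt hq ψ x y)) ((h.trans_le (le_jnt hq ψ x y)).trans_le (jnt_le hq ψ _ y))

lemma sum_fiber (ψ : 𝒳 → 𝒰) (G : 𝒰 → 𝒴 → ℝ) :
    ∑ t : 𝒳 × 𝒴, q t * G (ψ t.1) t.2 = ∑ t : 𝒰 × 𝒴, jnt q ψ t.1 t.2 * G t.1 t.2 := by
  rw [Fintype.sum_prod_type_right, Fintype.sum_prod_type_right]
  refine Finset.sum_congr rfl fun y _ => ?_
  simp only [jnt, Finset.sum_mul]
  rw [Finset.sum_comm]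
  refine Finset.sum_congr rfl fun x _ => ?_
  simp [ite_mul]

lemma condH_eq (hq : IsPmf q) (ψ : 𝒳 → 𝒰) :
    condH (fun t : 𝒰 × 𝒴 => ∑ x, if ψ x = t.1 then q (x, t.2) else 0)
      = ∑ t : 𝒳 × 𝒴, q t * (-Real.logb 2 (kap q ψ (ψ t.1) t.2)) := by
  rw [sum_fiber (q := q) ψ (fun u y => -Real.logb 2 (kap q ψ u y))]
  change H2 (fun t : 𝒰 × 𝒴 => jnt q ψ t.1 t.2) - H2 (fun y => ∑ u, jnt q ψ u y) = _
  have h2 : H2 (fun y => ∑ u, jnt q ψ u y)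
      = -∑ t : 𝒰 × 𝒴, jnt q ψ t.1 t.2 * Real.logb 2 (∑ x, q (x, t.2)) := by
    unfold H2
    rw [Fintype.sum_prod_type_right]
    simp only [← Finset.sum_mul, sum_jnt]
  rw [h2]
  unfold H2
  rw [sub_neg_eq_add, ← Finset.sum_neg_distrib, ← Finset.sum_add_distrib]
  refine Finset.sum_congr rfl fun t _ => ?_
  by_cases h : jnt q ψ t.1 t.2 = 0
  · simp [h]
  · have hp : 0 < jnt q ψ t.1 t.2 := lt_of_le_of_ne (jnt_nonneg hq ψ _ _) (Ne.symm h)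
    have hm := hp.trans_le (jnt_le hq ψ t.1 t.2)
    rw [kap, Real.logb_div h hm.ne']; ring

lemma condH_nonneg (hq : IsPmf q) (ψ : 𝒳 → 𝒰) :
    0 ≤ condH (fun t : 𝒰 × 𝒴 => ∑ x, if ψ x = t.1 then q (x, t.2) else 0) := by
  rw [condH_eq hq]
  refine Finset.sum_nonneg fun t _ => mul_nonneg (hq.1 _) ?_
  have := Real.logb_nonpos (b := 2) (by norm_num) (kap_nonneg hq ψ (ψ t.1) t.2)
    (kap_le_one hq ψ (ψ t.1) t.2)
  linarith

lemma tilt (hq : IsPmf q) (ψ : 𝒳 → 𝒰) (w : 𝒰 → ℝ) (hw : ∀ u, 0 ≤ w u) (hw1 : ∑ u, w u ≤ 1) (y : 𝒴) :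
    ∑ x, q (x, y) * (w (ψ x) / kap q ψ (ψ x) y) ≤ ∑ x, q (x, y) := by
  have h1 : ∑ x, q (x, y) * (w (ψ x) / kap q ψ (ψ x) y)
      = ∑ u, jnt q ψ u y * (w u / kap q ψ u y) := by
    simp only [jnt, Finset.sum_mul]
    rw [Finset.sum_comm]
    refine Finset.sum_congr rfl fun x _ => ?_
    simp [ite_mul]
  rw [h1]
  calc _ ≤ ∑ u, (∑ x, q (x, y)) * w u := by
        refine Finset.sum_le_sum fun u _ => ?_
        by_cases h : jnt q ψ u y = 0
        · rw [h, zero_mul]; exact mul_nonneg (marg_nonneg hq y) (hw u)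
        · apply le_of_eq
          have hp : 0 < jnt q ψ u y := lt_of_le_of_ne (jnt_nonneg hq ψ _ _) (Ne.symm h)
          have hm := hp.trans_le (jnt_le hq ψ u y)
          rw [kap]
          field_simp
    _ ≤ _ := by
        rw [← Finset.mul_sum]
        exact mul_le_of_le_one_right (marg_nonneg hq y) hw1

lemma iid_nonneg (hq : IsPmf q) (n : ℕ) (xy) : 0 ≤ iid q n xy := Finset.prod_nonneg fun _ _ => hq.1 _

lemma iid_sum (hq : IsPmf q) (n : ℕ) : ∑ xy, iid q n xy = 1 := by
  rw [sum_blocks]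
  simp only [iid]
  rw [prod_sum_fun (fun _ a => q a)]
  simp [hq.2]

/-- Additive functionals. -/
lemma iid_mean (hq : IsPmf q) (z : 𝒳 × 𝒴 → ℝ) (n : ℕ) :
    ∑ xy, iid q n xy * ∑ i, z (xy.1 i, xy.2 i) = n * ∑ t, q t * z t := by
  rw [sum_blocks]
  simp only [iid]
  set μ := ∑ t, q t * z t with hμ
  obtain ⟨h0, h1, -⟩ := moments q (fun a => z a - μ) hq.2 (by
    simp only [mul_sub, Finset.sum_sub_distrib, ← Finset.sum_mul, hq.2]; simp [hμ]) n
  simp only [Finset.sum_sub_distrib, mul_sub, ← Finset.sum_mul, h0] at h1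
  simp at h1
  linarith

/-- Converse bound from Gibbs' inequality. -/
lemma converse (hq : IsPmf q) (ψ : 𝒳 → 𝒰) {n m : ℕ} (hn : 0 < n)
    (f : (Fin n → 𝒳) × (Fin n → 𝒴) → Fin m)
    (g1 : Fin m × (Fin n → 𝒴) → Fin n → 𝒰) (η : ℝ) (hη : 0 < η) (hη1 : η < 1) :
    condH (fun t : 𝒰 × 𝒴 => ∑ x, if ψ x = t.1 then q (x, t.2) else 0) ≤
      Real.logb 2 m / n - Real.logb 2 (1 - η)
       - Delta1 q (fun x u => if u = ψ x then (0 : ℝ) else 1) f g1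
          * (Real.logb 2 (η / Fintype.card 𝒰) - Real.logb 2 (1 - η)) := by
  have hne : Nonempty (𝒳 × 𝒴) := by
    by_contra h
    rw [not_nonempty_iff] at h
    have := hq.2
    simp at this
  obtain ⟨x0, y0⟩ := hne
  have hm : 0 < m := (f (fun _ => x0, fun _ => y0)).pos
  have hm' : (0:ℝ) < m := by exact_mod_cast hm
  have hn' : (0:ℝ) < n := by exact_mod_cast hn
  have : Nonempty 𝒰 := ⟨ψ x0⟩
  have hcard : (0:ℝ) < Fintype.card 𝒰 := by exact_mod_cast Fintype.card_pos
  set W : 𝒰 → 𝒰 → ℝ := fun uh u => if uh = u then 1 - η else η / Fintype.card 𝒰 with hW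
  have hWpos : ∀ uh u, 0 < W uh u := by
    intro uh u; simp only [hW]; split_ifs
    · linarith
    · positivity
  have hWsum : ∀ uh, ∑ u, W uh u ≤ 1 := by
    intro uh
    calc _ ≤ ∑ u, ((if uh = u then 1 - η else 0) + η / Fintype.card 𝒰) := by
          refine Finset.sum_le_sum fun u _ => ?_
          simp only [hW]; split_ifs
          · have : 0 < η / Fintype.card 𝒰 := by positivity
            linarith
          · simp
      _ = 1 := by
          rw [Finset.sum_add_distrib]; simp; field_simp; ring
  -- the mixture test channel
  set ρ : (Fin n → 𝒳) × (Fin n → 𝒴) → ℝ := fun xy =>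
    (m:ℝ)⁻¹ * ∑ j, ∏ i, (W (g1 (j, xy.2) i) (ψ (xy.1 i)) / kap q ψ (ψ (xy.1 i)) (xy.2 i)) with hρ
  have hρsum : ∑ xy, iid q n xy * ρ xy ≤ 1 := by
    have hj : ∀ j, ∑ xy : (Fin n → 𝒳) × (Fin n → 𝒴), iid q n xy *
        ∏ i, (W (g1 (j, xy.2) i) (ψ (xy.1 i)) / kap q ψ (ψ (xy.1 i)) (xy.2 i)) ≤ 1 := by
      intro j
      rw [Fintype.sum_prod_type_right]
      calc _ ≤ ∑ y : Fin n → 𝒴, ∏ i, ∑ x, q (x, y i) := by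
            refine Finset.sum_le_sum fun y _ => ?_
            simp only [iid, ← Finset.prod_mul_distrib]
            rw [prod_sum_fun (fun i x => q (x, y i) *
              (W (g1 (j, y) i) (ψ x) / kap q ψ (ψ x) (y i)))]
            refine Finset.prod_le_prod ?_ ?_
            · intro i _
              refine Finset.sum_nonneg fun x _ => mul_nonneg (hq.1 _) ?_
              exact div_nonneg (hWpos _ _).le (kap_nonneg hq ψ _ _)
            · intro i _
              exact tilt hq ψ _ (fun u => (hWpos _ u).le) (hWsum _) _
        _ = 1 := by
            rw [prod_sum_fun (fun _ y => ∑ x, q (x, y)), ← Fintype.sum_prod_type_right, hq.2]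
            simp
    calc _ = (m:ℝ)⁻¹ * ∑ j, ∑ xy : (Fin n → 𝒳) × (Fin n → 𝒴), iid q n xy *
        ∏ i, (W (g1 (j, xy.2) i) (ψ (xy.1 i)) / kap q ψ (ψ (xy.1 i)) (xy.2 i)) := by
          rw [Finset.sum_comm, Finset.mul_sum]
          refine Finset.sum_congr rfl fun xy _ => ?_
          rw [hρ, ← Finset.mul_sum]; ring
      _ ≤ (m:ℝ)⁻¹ * ∑ _j : Fin m, (1:ℝ) := by
          gcongr with j; exact hj j
      _ = 1 := by simp; field_simp
  have hlog2 : 0 < Real.log 2 := Real.log_pos (by norm_num)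
  -- pointwise bound
  have hpt : ∀ xy, iid q n xy * (-Real.logb 2 m + ∑ i, (Real.logb 2 (W (g1 (f xy, xy.2) i) (ψ (xy.1 i)))
      - Real.logb 2 (kap q ψ (ψ (xy.1 i)) (xy.2 i)))) ≤
      (iid q n xy * ρ xy - iid q n xy) / Real.log 2 := by
    intro xy
    rcases (iid_nonneg hq n xy).eq_or_lt with h | h
    · rw [← h]; simp
    · have hqp : ∀ i, 0 < q (xy.1 i, xy.2 i) := by
        intro i
        refine lt_of_le_of_ne (hq.1 _) fun h0 => h.ne' ?_
        exact Finset.prod_eq_zero (Finset.mem_univ i) h0.symm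
      have hkp : ∀ i, 0 < kap q ψ (ψ (xy.1 i)) (xy.2 i) := fun i => kap_pos hq ψ (hqp i)
      have hterm : ∀ j, 0 < ∏ i, (W (g1 (j, xy.2) i) (ψ (xy.1 i)) / kap q ψ (ψ (xy.1 i)) (xy.2 i)) :=
        fun j => Finset.prod_pos fun i _ => div_pos (hWpos _ _) (hkp i)
      set P := ∏ i, (W (g1 (f xy, xy.2) i) (ψ (xy.1 i)) / kap q ψ (ψ (xy.1 i)) (xy.2 i)) with hP
      have hPρ : (m:ℝ)⁻¹ * P ≤ ρ xy := by
        simp only [hρ]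
        gcongr
        exact Finset.single_le_sum (f := fun j => ∏ i, (W (g1 (j, xy.2) i) (ψ (xy.1 i)) /
          kap q ψ (ψ (xy.1 i)) (xy.2 i))) (fun j _ => (hterm j).le) (Finset.mem_univ (f xy))
      have hP0 : 0 < P := hterm _
      have e1 : -Real.logb 2 m + ∑ i, (Real.logb 2 (W (g1 (f xy, xy.2) i) (ψ (xy.1 i)))
          - Real.logb 2 (kap q ψ (ψ (xy.1 i)) (xy.2 i))) = Real.logb 2 ((m:ℝ)⁻¹ * P) := by
        rw [Real.logb_mul (by positivity) hP0.ne', Real.logb_inv, hP, Real.logb_prod]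
        · congr 1
          exact Finset.sum_congr rfl fun i _ => (Real.logb_div (hWpos _ _).ne' (hkp i).ne').symm
        · intro i _; exact (div_pos (hWpos _ _) (hkp i)).ne'
      rw [e1]
      have e2 : Real.logb 2 ((m:ℝ)⁻¹ * P) ≤ (ρ xy - 1) / Real.log 2 := by
        rw [Real.logb]
        have := Real.log_le_sub_one_of_pos (x := (m:ℝ)⁻¹ * P) (by positivity)
        gcongr
        linarith
      calc _ ≤ iid q n xy * ((ρ xy - 1) / Real.log 2) := by gcongr
        _ = _ := by ring
  have hsum := Finset.sum_le_sum fun xy (_ : xy ∈ Finset.univ) => hpt xy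
  rw [← Finset.sum_div, Finset.sum_sub_distrib, iid_sum hq] at hsum
  have hneg : (∑ xy, iid q n xy * ρ xy - 1) / Real.log 2 ≤ 0 :=
    div_nonpos_of_nonpos_of_nonneg (by linarith) hlog2.le
  have hlogW : ∀ uh u, Real.logb 2 (W uh u) = Real.logb 2 (1 - η) +
      (if uh = u then (0:ℝ) else 1) * (Real.logb 2 (η / Fintype.card 𝒰) - Real.logb 2 (1 - η)) := by
    intro uh u; simp only [hW]; split_ifs <;> ring
  set D := Delta1 q (fun x u => if u = ψ x then (0 : ℝ) else 1) f g1 with hD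
  set c := (Real.logb 2 (η / Fintype.card 𝒰) - Real.logb 2 (1 - η)) with hc
  have hDn : ∑ xy : (Fin n → 𝒳) × (Fin n → 𝒴),
      iid q n xy * ∑ i, (if g1 (f xy, xy.2) i = ψ (xy.1 i) then (0:ℝ) else 1) = n * D := by
    rw [hD, Delta1, Finset.mul_sum]
    refine Finset.sum_congr rfl fun xy _ => ?_
    field_simp
  have hHn := iid_mean hq (fun t => -Real.logb 2 (kap q ψ (ψ t.1) t.2)) n
  rw [← condH_eq hq] at hHn
  set H := condH (fun t : 𝒰 × 𝒴 => ∑ x, if ψ x = t.1 then q (x, t.2) else 0) with hH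
  have hL : ∑ xy, iid q n xy * (-Real.logb 2 m + ∑ i, (Real.logb 2 (W (g1 (f xy, xy.2) i) (ψ (xy.1 i)))
      - Real.logb 2 (kap q ψ (ψ (xy.1 i)) (xy.2 i)))) =
      -Real.logb 2 m + n * Real.logb 2 (1 - η) + n * D * c + n * H := by
    rw [← hDn, ← hHn]
    have : (-Real.logb 2 m + n * Real.logb 2 (1 - η)) = 
        ∑ xy, iid q n xy * (-Real.logb 2 m + n * Real.logb 2 (1 - η)) := by
      rw [← Finset.sum_mul, iid_sum hq, one_mul]
    rw [this, Finset.sum_mul, ← Finset.sum_add_distrib, ← Finset.sum_add_distrib]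
    refine Finset.sum_congr rfl fun xy _ => ?_
    simp only [hlogW, Finset.sum_sub_distrib, Finset.sum_add_distrib, Finset.sum_neg_distrib,
      ← Finset.sum_mul]
    simp
    ring
  rw [hL] at hsum
  have : n * H ≤ n * (Real.logb 2 m / n - Real.logb 2 (1 - η) - D * c) := by
    have e : n * (Real.logb 2 m / n - Real.logb 2 (1 - η) - D * c)
      = Real.logb 2 m - n * Real.logb 2 (1 - η) - n * D * c := by field_simp
    rw [e]; linarith
  exact le_of_mul_le_mul_left this hn'

/-- Typical lists. -/
lemma list_card (hq : IsPmf q) (ψ : 𝒳 → 𝒰) (n : ℕ) (K : ℝ) (y : Fin n → 𝒴) :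
    ((Finset.univ.filter fun u : Fin n → 𝒰 => (2:ℝ) ^ (-(n * K)) ≤ ∏ i, kap q ψ (u i) (y i)).card : ℝ)
      ≤ (2:ℝ) ^ (n * K) := by
  have hs : ∑ u : Fin n → 𝒰, ∏ i, kap q ψ (u i) (y i) ≤ 1 := by
    rw [prod_sum_fun (fun i u => kap q ψ u (y i))]
    exact Finset.prod_le_one (fun i _ => Finset.sum_nonneg fun u _ => kap_nonneg hq ψ _ _)
      (fun i _ => kap_sum_le hq ψ _)
  have h1 : ((Finset.univ.filter fun u : Fin n → 𝒰 =>
      (2:ℝ) ^ (-(n * K)) ≤ ∏ i, kap q ψ (u i) (y i)).card : ℝ) * (2:ℝ) ^ (-(n * K)) ≤ 1 := by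
    refine le_trans ?_ hs
    rw [← nsmul_eq_mul, ← Finset.sum_const]
    refine (Finset.sum_le_sum fun u hu => (Finset.mem_filter.1 hu).2).trans ?_
    exact Finset.sum_le_sum_of_subset_of_nonneg (Finset.filter_subset _ _)
      fun u _ _ => Finset.prod_nonneg fun i _ => kap_nonneg hq ψ _ _
  have hp : (0:ℝ) < 2 ^ (n * K) := by positivity
  have h2 : (2:ℝ) ^ (-(n * K)) = (2 ^ (n * K))⁻¹ := Real.rpow_neg (by norm_num) _
  generalize (Finset.card _ : ℕ) = c at h1 ⊢
  rwa [h2, ← div_eq_mul_inv, div_le_one hp] at h1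

lemma atypical (hq : IsPmf q) (ψ : 𝒳 → 𝒰) : ∃ C : ℝ, ∀ δ > 0, ∀ K,
    condH (fun t : 𝒰 × 𝒴 => ∑ x, if ψ x = t.1 then q (x, t.2) else 0) + δ ≤ K →
    ∀ n : ℕ, 0 < n →
    ∑ xy, (if (2:ℝ) ^ (-(n * K)) ≤ ∏ i, kap q ψ (ψ (xy.1 i)) (xy.2 i) then 0 else iid q n xy)
      ≤ C / (n * δ^2) := by
  obtain ⟨C, hC⟩ := cheb q (fun t => -Real.logb 2 (kap q ψ (ψ t.1) t.2)) hq.1 hq.2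
  refine ⟨C, fun δ hδ K hK n hn => le_trans ?_ (hC δ hδ n hn)⟩
  rw [sum_blocks, ← condH_eq hq]
  refine Finset.sum_le_sum fun ω _ => ?_
  have hp : 0 ≤ ∏ i, q (ω i) := Finset.prod_nonneg fun i _ => hq.1 _
  dsimp only [iid]
  split_ifs with h1 h2 h2
  · exact hp
  · exact le_rfl
  · exact le_rfl
  · rcases hp.eq_or_lt with h | h
    · exact h.symm.le
    · exfalso
      apply h1
      have hqp : ∀ i, 0 < q (ω i) := by
        intro i
        refine lt_of_le_of_ne (hq.1 _) fun h0 => h.ne' ?_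
        exact Finset.prod_eq_zero (Finset.mem_univ i) h0.symm
      have hkp : ∀ i, 0 < kap q ψ (ψ (ω i).1) (ω i).2 := fun i => kap_pos hq ψ (hqp i)
      rw [← Real.le_logb_iff_rpow_le (by norm_num) (Finset.prod_pos fun i _ => hkp i),
        Real.logb_prod _ _ (fun i _ => (hkp i).ne')]
      rw [Finset.sum_neg_distrib] at h2
      have hn' : (0:ℝ) < n := by exact_mod_cast hn
      have := mul_le_mul_of_nonneg_left hK hn'.le
      linarith

end
lemma swap_pmf {𝒳 𝒴 : Type} [Fintype 𝒳] [Fintype 𝒴] {q : 𝒳 × 𝒴 → ℝ} (hq : IsPmf q) :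
    IsPmf (swap q) := by
  refine ⟨fun t => hq.1 _, ?_⟩
  rw [← hq.2]
  exact Equiv.sum_comp (Equiv.prodComm 𝒴 𝒳) q

lemma sum_swap {α β : Type} [Fintype α] [Fintype β] (F : α × β → ℝ) :
    ∑ t : β × α, F (t.2, t.1) = ∑ t, F t :=
  Equiv.sum_comp (Equiv.prodComm β α) F

lemma Delta2_eq {𝒳 𝒴 Yh : Type} [Fintype 𝒳] [Fintype 𝒴] (q : 𝒳 × 𝒴 → ℝ)
    (δ2 : 𝒴 → Yh → ℝ) {n m : ℕ} (f : (Fin n → 𝒳) × (Fin n → 𝒴) → Fin m)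
    (g2 : Fin m × (Fin n → 𝒳) → Fin n → Yh) :
    Delta2 q δ2 f g2 = Delta1 (swap q) δ2 (fun t => f (t.2, t.1)) g2 :=
  (sum_swap (fun xy : (Fin n → 𝒳) × (Fin n → 𝒴) =>
    iid q n xy * ((n : ℝ)⁻¹ * ∑ i, δ2 (xy.2 i) (g2 (f xy, xy.1) i)))).symm

lemma nonempty_of_pmf {α : Type} [Fintype α] {p : α → ℝ} (hp : IsPmf p) : Nonempty α := by
  by_contra h
  rw [not_nonempty_iff] at h
  have := hp.2
  simp at this

/-- Distortion is bounded by block error. -/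
lemma Delta1_le {𝒳 𝒴 𝒰 : Type} [Fintype 𝒳] [Fintype 𝒴] {q : 𝒳 × 𝒴 → ℝ} (hq : IsPmf q)
    (ψ : 𝒳 → 𝒰) {n m : ℕ}
    (f : (Fin n → 𝒳) × (Fin n → 𝒴) → Fin m) (g1 : Fin m × (Fin n → 𝒴) → Fin n → 𝒰)
    (E : (Fin n → 𝒳) × (Fin n → 𝒴) → ℝ) (hE0 : ∀ xy, 0 ≤ E xy)
    (hE : ∀ xy, g1 (f xy, xy.2) ≠ (fun i => ψ (xy.1 i)) → iid q n xy ≤ E xy) :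
    Delta1 q (fun x u => if u = ψ x then (0 : ℝ) else 1) f g1 ≤ ∑ xy, E xy := by
  unfold Delta1
  refine Finset.sum_le_sum fun xy _ => ?_
  by_cases h : g1 (f xy, xy.2) = (fun i => ψ (xy.1 i))
  · rw [h]; simpa using hE0 xy
  · refine le_trans ?_ (hE xy h)
    refine mul_le_of_le_one_right (iid_nonneg hq n xy) ?_
    have : ∑ i, (if g1 (f xy, xy.2) i = ψ (xy.1 i) then (0:ℝ) else 1) ≤ ∑ _i : Fin n, (1:ℝ) :=
      Finset.sum_le_sum fun i _ => by split_ifs <;> norm_num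
    simp only [Finset.sum_const, Finset.card_univ, Fintype.card_fin, nsmul_eq_mul, mul_one] at this
    rcases Nat.eq_zero_or_pos n with h0 | h0
    · subst h0; simp
    · have hn : (0:ℝ) < n := by exact_mod_cast h0
      rw [inv_mul_le_iff₀ hn]; linarith

lemma achiev {𝒳 𝒴 𝒰 𝒱 : Type} [Fintype 𝒳] [Fintype 𝒴] [Fintype 𝒰] [Fintype 𝒱]
    (q : 𝒳 × 𝒴 → ℝ) (hq : IsPmf q) (ψx : 𝒳 → 𝒰) (ψy : 𝒴 → 𝒱) (M : ℝ) (hM0 : 0 ≤ M)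
    (h1 : condH (fun t : 𝒰 × 𝒴 => ∑ x, if ψx x = t.1 then q (x, t.2) else 0) ≤ M)
    (h2 : condH (fun t : 𝒱 × 𝒳 => ∑ y, if ψy y = t.1 then q (t.2, y) else 0) ≤ M) :
    RDAchievable q (fun x u => if u = ψx x then (0 : ℝ) else 1)
        (fun y v => if v = ψy y then (0 : ℝ) else 1) 0 0 M := by
  intro ε hε
  have hs := swap_pmf hq
  obtain ⟨⟨x0, y0⟩⟩ := nonempty_of_pmf hq
  obtain ⟨C1, hC1⟩ := atypical hq ψx
  obtain ⟨C2, hC2⟩ := atypical hs ψy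
  set δ := ε / 2 with hδ
  have hδ0 : 0 < δ := by positivity
  have hlim : Filter.Tendsto (fun n : ℕ => C1 / (n * δ^2) + C2 / (n * δ^2) + 4 * ((2:ℝ) ^ (-δ)) ^ n)
      Filter.atTop (nhds (0 + 0 + 4 * 0)) := by
    have hd : Filter.Tendsto (fun n : ℕ => (n:ℝ) * δ^2) Filter.atTop Filter.atTop :=
      tendsto_natCast_atTop_atTop.atTop_mul_const (by positivity)
    refine ((hd.const_div_atTop C1).add (hd.const_div_atTop C2)).add (Filter.Tendsto.const_mul 4 ?_)
    exact tendsto_pow_atTop_nhds_zero_of_lt_one (by positivity)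
      (Real.rpow_lt_one_of_one_lt_of_neg (by norm_num) (by linarith))
  have hev := hlim.eventually (gt_mem_nhds (show (0 + 0 + 4 * 0 : ℝ) < ε by simpa using hε))
  obtain ⟨n, hnε, hn⟩ := (hev.and (Filter.eventually_gt_atTop 0)).exists
  have hn' : (0:ℝ) < n := by exact_mod_cast hn
  set K := M + δ with hK
  have hA1 := hC1 δ hδ0 K (by linarith) n hn
  have hA2 := hC2 δ hδ0 K (by
    have : condH (fun t : 𝒱 × 𝒳 => ∑ y, if ψy y = t.1 then swap q (y, t.2) else 0) ≤ M := h2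
    linarith) n hn
  set T : ℝ := (2:ℝ) ^ (n * (M + ε)) with hT
  have hT1 : 1 ≤ T := Real.one_le_rpow (by norm_num) (by positivity)
  have hfl : 1 ≤ ⌊T⌋₊ := Nat.le_floor (by simpa using hT1)
  obtain ⟨k, hk⟩ : ∃ k, ⌊T⌋₊ = k + 1 := ⟨⌊T⌋₊ - 1, by omega⟩
  have hkT : ((k:ℝ) + 1) ≤ T := by
    have := Nat.floor_le (show 0 ≤ T by linarith)
    rw [hk] at this; exact_mod_cast this
  have hTk : T / 2 ≤ (k:ℝ) + 1 := by
    have := Nat.lt_floor_add_one T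
    rw [hk] at this; push_cast at this
    have : (0:ℝ) ≤ k := by positivity
    linarith
  -- typical lists
  let L1 : (Fin n → 𝒴) → Finset (Fin n → 𝒰) := fun y =>
    Finset.univ.filter fun u => (2:ℝ) ^ (-(n * K)) ≤ ∏ i, kap q ψx (u i) (y i)
  let L2 : (Fin n → 𝒳) → Finset (Fin n → 𝒱) := fun x =>
    Finset.univ.filter fun v => (2:ℝ) ^ (-(n * K)) ≤ ∏ i, kap (swap q) ψy (v i) (x i)
  have hL1 : ∀ y, ((L1 y).card : ℝ) ≤ 2 ^ (n * K) := fun y => list_card hq ψx n K y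
  have hL2 : ∀ x, ((L2 x).card : ℝ) ≤ 2 ^ (n * K) := fun x => list_card hs ψy n K x
  let U : (Fin n → 𝒳) → Fin n → 𝒰 := fun x i => ψx (x i)
  let V : (Fin n → 𝒴) → Fin n → 𝒱 := fun y i => ψy (y i)
  let N : (Fin n → 𝒳) × (Fin n → 𝒴) → Finset ((Fin n → 𝒰) × (Fin n → 𝒱)) := fun xy =>
    (((L1 xy.2).erase (U xy.1)).image fun u => (u, V xy.2)) ∪
    (((L2 xy.1).erase (V xy.2)).image fun v => (U xy.1, v))
  obtain ⟨F, hF⟩ := binning (iid q n) (iid_nonneg hq n) (iid_sum hq n)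
    (fun xy => (U xy.1, V xy.2)) N (by
      intro xy h
      simp only [N, Finset.mem_union, Finset.mem_image, Finset.mem_erase, Prod.mk.injEq] at h
      rcases h with ⟨u, hu, h, -⟩ | ⟨v, hv, -, h⟩
      · exact hu.1 h
      · exact hv.1 h) (2 * 2 ^ (n * K)) (by
      intro xy
      have e1 := Finset.card_union_le (((L1 xy.2).erase (U xy.1)).image fun u => (u, V xy.2))
        (((L2 xy.1).erase (V xy.2)).image fun v => (U xy.1, v))
      have e2 : (((L1 xy.2).erase (U xy.1)).image fun u => (u, V xy.2)).card ≤ (L1 xy.2).card :=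
        Finset.card_image_le.trans (Finset.card_erase_le)
      have e3 : (((L2 xy.1).erase (V xy.2)).image fun v => (U xy.1, v)).card ≤ (L2 xy.1).card :=
        Finset.card_image_le.trans (Finset.card_erase_le)
      have e4 : (N xy).card ≤ (L1 xy.2).card + (L2 xy.1).card := e1.trans (by omega)
      have e5 : ((N xy).card : ℝ) ≤ (L1 xy.2).card + (L2 xy.1).card := by exact_mod_cast e4
      linarith [hL1 xy.2, hL2 xy.1]) k
  have hcoll : 2 * (2:ℝ) ^ (n * K) / (k + 1) ≤ 4 * ((2:ℝ) ^ (-δ)) ^ n := by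
    have hTK : T = 2 ^ (n * K) * (2:ℝ) ^ (n * δ) := by
      rw [← Real.rpow_add (by norm_num), hT, hK]; congr 1; rw [hδ]; ring
    have hpow : ((2:ℝ) ^ (-δ)) ^ n * (2:ℝ) ^ (n * δ) = 1 := by
      rw [← Real.rpow_natCast, ← Real.rpow_mul (by norm_num), ← Real.rpow_add (by norm_num)]
      have : -δ * (n:ℝ) + n * δ = 0 := by ring
      rw [this, Real.rpow_zero]
    rw [div_le_iff₀ (by positivity)]
    calc 2 * (2:ℝ) ^ (n * K)
        = 4 * ((2:ℝ) ^ (-δ)) ^ n * (T / 2) := by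
          rw [hTK]; linear_combination (-2 * (2:ℝ) ^ (n * K)) * hpow
      _ ≤ _ := by gcongr
  -- the code
  let f : (Fin n → 𝒳) × (Fin n → 𝒴) → Fin (k+1) := fun xy => F (U xy.1, V xy.2)
  let g1 : Fin (k+1) × (Fin n → 𝒴) → Fin n → 𝒰 := fun p =>
    if h : ∃ u ∈ L1 p.2, F (u, V p.2) = p.1 then h.choose else fun _ => ψx x0
  let g2 : Fin (k+1) × (Fin n → 𝒳) → Fin n → 𝒱 := fun p =>
    if h : ∃ v ∈ L2 p.2, F (U p.2, v) = p.1 then h.choose else fun _ => ψy y0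
  let E1 : (Fin n → 𝒳) × (Fin n → 𝒴) → ℝ := fun xy =>
    if (2:ℝ) ^ (-(n * K)) ≤ ∏ i, kap q ψx (ψx (xy.1 i)) (xy.2 i) then 0 else iid q n xy
  let E2 : (Fin n → 𝒳) × (Fin n → 𝒴) → ℝ := fun xy =>
    if (2:ℝ) ^ (-(n * K)) ≤ ∏ i, kap (swap q) ψy (ψy (xy.2 i)) (xy.1 i) then 0 else iid q n xy
  let E3 : (Fin n → 𝒳) × (Fin n → 𝒴) → ℝ := fun xy =>
    if ∃ b ∈ N xy, F b = F (U xy.1, V xy.2) then iid q n xy else 0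
  have hi := iid_nonneg hq n
  have hE1 : ∀ xy, 0 ≤ E1 xy := fun xy => by simp only [E1]; split_ifs; exacts [le_rfl, hi xy]
  have hE2 : ∀ xy, 0 ≤ E2 xy := fun xy => by simp only [E2]; split_ifs; exacts [le_rfl, hi xy]
  have hE3 : ∀ xy, 0 ≤ E3 xy := fun xy => by simp only [E3]; split_ifs; exacts [hi xy, le_rfl]
  have hS1 : ∑ xy, E1 xy ≤ C1 / (n * δ^2) := hA1
  have hS2 : ∑ xy, E2 xy ≤ C2 / (n * δ^2) := by rw [← sum_swap E2]; exact hA2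
  have hS3 : ∑ xy, E3 xy ≤ 4 * ((2:ℝ) ^ (-δ)) ^ n := hF.trans hcoll
  have hS : ∑ xy, (E1 xy + E2 xy + E3 xy) ≤ 0 + ε := by
    rw [Finset.sum_add_distrib, Finset.sum_add_distrib]; linarith
  refine ⟨n, k + 1, f, g1, g2, hn, ?_, ?_, ?_⟩
  · rw [div_le_iff₀ hn', Real.logb_le_iff_le_rpow (by norm_num) (by positivity)]
    push_cast
    rw [mul_comm]; exact hkT
  · refine (Delta1_le hq ψx f g1 (fun xy => E1 xy + E2 xy + E3 xy)
      (fun xy => by linarith [hE1 xy, hE2 xy, hE3 xy]) ?_).trans hS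
    intro xy hne
    by_cases hin : U xy.1 ∈ L1 xy.2
    · have hex : ∃ u ∈ L1 xy.2, F (u, V xy.2) = f xy := ⟨_, hin, rfl⟩
      have hg : g1 (f xy, xy.2) = hex.choose := dif_pos hex
      have hsp := hex.choose_spec
      have : E3 xy = iid q n xy := by
        apply if_pos
        refine ⟨(hex.choose, V xy.2), ?_, hsp.2⟩
        refine Finset.mem_union_left _ (Finset.mem_image_of_mem _ (Finset.mem_erase.2 ⟨?_, hsp.1⟩))
        rw [← hg]; exact hne
      linarith [hE1 xy, hE2 xy]
    · have : E1 xy = iid q n xy := by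
        apply if_neg
        intro h
        exact hin (Finset.mem_filter.2 ⟨Finset.mem_univ _, h⟩)
      linarith [hE3 xy, hE2 xy]
  · rw [Delta2_eq]
    rw [← sum_swap] at hS
    refine (Delta1_le hs ψy (fun t => f (t.2, t.1)) g2
      (fun t => E1 (t.2, t.1) + E2 (t.2, t.1) + E3 (t.2, t.1))
      (fun t => by linarith [hE1 (t.2, t.1), hE2 (t.2, t.1), hE3 (t.2, t.1)]) ?_).trans hS
    rintro ⟨y, x⟩ hne
    have hii : iid (swap q) n (y, x) = iid q n (x, y) := rfl
    rw [hii]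
    dsimp only at hne ⊢
    by_cases hin : V y ∈ L2 x
    · have hex : ∃ v ∈ L2 x, F (U x, v) = f (x, y) := ⟨_, hin, rfl⟩
      have hg : g2 (f (x, y), x) = hex.choose := dif_pos hex
      have hsp := hex.choose_spec
      have : E3 (x, y) = iid q n (x, y) := by
        apply if_pos
        refine ⟨(U x, hex.choose), ?_, hsp.2⟩
        refine Finset.mem_union_right _ (Finset.mem_image_of_mem _ (Finset.mem_erase.2 ⟨?_, hsp.1⟩))
        rw [← hg]; exact hne
      linarith [hE1 (x, y), hE2 (x, y)]
    · have : E2 (x, y) = iid q n (x, y) := by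
        apply if_neg
        intro h
        exact hin (Finset.mem_filter.2 ⟨Finset.mem_univ _, h⟩)
      linarith [hE3 (x, y), hE1 (x, y)]

/-- Limit of the converse bound. -/
lemma limit_bound {H r c : ℝ} (hc : 0 < c)
    (h : ∀ ε > 0, ∀ η > 0, η < 1 → ∃ D ≤ ε, H ≤ (r + ε) - Real.logb 2 (1 - η)
      - D * (Real.logb 2 (η / c) - Real.logb 2 (1 - η))) : H ≤ r := by
  have h2 : ∀ η > 0, η < 1 → η / c < 1 - η → H ≤ r - Real.logb 2 (1 - η) := by
    intro η h0 h1 h3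
    have hneg : Real.logb 2 (η / c) - Real.logb 2 (1 - η) ≤ 0 := by
      have := Real.logb_le_logb_of_le (b := 2) (by norm_num) (show 0 < η / c by positivity) h3.le
      linarith
    set A := Real.logb 2 (η / c) - Real.logb 2 (1 - η)
    refine le_of_forall_pos_le_add fun e he => ?_
    obtain ⟨D, hD, hH⟩ := h (e / (1 - A)) (div_pos he (by linarith)) η h0 h1
    have : e / (1 - A) - e / (1 - A) * A = e := by
      have : 1 - A ≠ 0 := by linarith
      field_simp
    nlinarith
  have hlim : Filter.Tendsto (fun η : ℝ => r - Real.logb 2 (1 - η)) (nhdsWithin 0 (Set.Ioi 0))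
      (nhds (r - Real.logb 2 (1 - 0))) := by
    have : ContinuousAt (fun η : ℝ => r - Real.logb 2 (1 - η)) 0 := by
      refine continuousAt_const.sub ?_
      simp only [Real.logb]
      refine ContinuousAt.div_const ?_ _
      exact ContinuousAt.log (by fun_prop) (by norm_num)
    exact this.tendsto.mono_left nhdsWithin_le_nhds
  simp only [sub_zero, Real.logb_one] at hlim
  refine ge_of_tendsto hlim ?_
  have hev : ∀ᶠ η : ℝ in nhds 0, η / c < 1 - η := by
    have hcont : ContinuousAt (fun η : ℝ => (1 - η) - η / c) 0 := by fun_prop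
    have := hcont.eventually (lt_mem_nhds (show (0:ℝ) < (1 - 0) - 0 / c by norm_num))
    filter_upwards [this] with η hη
    linarith
  filter_upwards [self_mem_nhdsWithin, nhdsWithin_le_nhds hev,
    nhdsWithin_le_nhds (gt_mem_nhds (show (0:ℝ) < 1 by norm_num))] with η h0 h3 h1
  exact h2 η h0 h1 h3

end TWRAux

open TWR in
/-- Corollary 2: for deterministic reconstruction targets
`U = ψx(X)`, `V = ψy(Y)` with the associated 0/1 distortion measures,
`R(0,0) = max{H(U|Y), H(V|X)}`. -/
theorem rd_two_deterministic
    {𝒳 𝒴 𝒰 𝒱 : Type} [Fintype 𝒳] [Fintype 𝒴] [Fintype 𝒰] [Fintype 𝒱]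
    (q : 𝒳 × 𝒴 → ℝ) (hq : IsPmf q) (ψx : 𝒳 → 𝒰) (ψy : 𝒴 → 𝒱) :
    RD q (fun x u => if u = ψx x then (0 : ℝ) else 1)
        (fun y v => if v = ψy y then (0 : ℝ) else 1) 0 0 =
      max (condH (fun t : 𝒰 × 𝒴 => ∑ x, if ψx x = t.1 then q (x, t.2) else 0))
          (condH (fun t : 𝒱 × 𝒳 => ∑ y, if ψy y = t.1 then q (t.2, y) else 0)) := by
  have h10 := TWRAux.condH_nonneg hq ψx
  obtain ⟨⟨x0, y0⟩⟩ := TWRAux.nonempty_of_pmf hq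
  have hcx : (0:ℝ) < Fintype.card 𝒰 := by
    have : Nonempty 𝒰 := ⟨ψx x0⟩
    exact_mod_cast Fintype.card_pos
  have hcy : (0:ℝ) < Fintype.card 𝒱 := by
    have : Nonempty 𝒱 := ⟨ψy y0⟩
    exact_mod_cast Fintype.card_pos
  have hmem := TWRAux.achiev q hq ψx ψy _ (le_max_of_le_left h10) (le_max_left _ _)
    (le_max_right _ _)
  have hmem' := And.intro (le_max_of_le_left (c := condH (fun t : 𝒱 × 𝒳 =>
    ∑ y, if ψy y = t.1 then q (t.2, y) else 0)) h10) hmem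
  refine le_antisymm (csInf_le ⟨0, fun r hr => hr.1⟩ hmem') (le_csInf ⟨_, hmem'⟩ ?_)
  rintro r ⟨-, hr⟩
  refine max_le (TWRAux.limit_bound hcx ?_) (TWRAux.limit_bound hcy ?_)
  · intro ε hε η hη hη1
    obtain ⟨n, m, f, g1, g2, hn, hrate, hd1, hd2⟩ := hr ε hε
    refine ⟨_, by simpa using hd1, (TWRAux.converse hq ψx hn f g1 η hη hη1).trans ?_⟩
    linarith
  · intro ε hε η hη hη1
    obtain ⟨n, m, f, g1, g2, hn, hrate, hd1, hd2⟩ := hr ε hε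
    rw [TWRAux.Delta2_eq] at hd2
    refine ⟨_, by simpa using hd2,
      (TWRAux.converse (TWRAux.swap_pmf hq) ψy hn (fun t => f (t.2, t.1)) g2 η hη hη1).trans ?_⟩
    linarith
end
end
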